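/- arXiv:2502.09751 — 5 statements merged into one kernel-verified Lean document; each statement's English description precedes it below -/
import Mathlib

section
/- Let R be a commutative Noetherian ring whose Krull dimension equals a natural number d, and let P and Q be finitely generated projective R-modules such that for every maximal ideal m of R the rank of P at m is strictly greater than d. If P ⊕ R ≅ Q ⊕ R as R-modules, then P ≅ Q. (Bass cancellation: the stabilization map P ↦ P ⊕ R is injective on isomorphism classes of projectives of rank exceeding the dimension.) -/
/-!
Let `(p, a) ∈ P ⊕ R` be the vector carried to `(0, 1)` by the isomorphism `P ⊕ R ≃ Q ⊕ R`; it is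
unimodular, that is, some linear form takes the value `1` on it. If some `p + a q` is unimodular
in `P`, then three transvections carry `(p, a)` to `(p + a q, a)`, to `(p + a q, 1)` and to
`(0, 1)`. Composing gives an isomorphism `P ⊕ R ≃ Q ⊕ R` preserving `(0, 1)`, whence `P ≃ Q`
(`nonempty_equiv_of_map_inr`).

The element `q` (`exists_add_smul_unimodular`) comes from the Eisenbud–Evans argument. Embed `P` as
a direct summand of some `R^N`, and consider vectors `m 0 = p, m 1, …, m n` generating `P`. For a
prime `Q` let `fibRank m Q` be the dimension of their span in `κ(Q)^N`; the rank hypothesis gives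
`fibRank m Q ≥ d + 1 ≥ coheight Q + 1`, where `coheight Q = dim R/Q`. The inequality
`fibRank m Q ≥ min (number of vectors) (coheight Q + 1)` survives when suitable multiples of the
last vector are added to the others and the last vector is discarded (`drop_step`): only the
finitely many primes where the bound is sharp (`finite_bad`) constrain the multiples, and each by a
nontrivial affine inequation. When one vector `p + a q` is left, it is nonzero in
every fibre, which means that it is unimodular.
-/

/-! ### Linear algebra over a field -/

theorem le_rank_iff_exists_minor {K : Type*} [Field K] {a b : ℕ} (A : Matrix (Fin a) (Fin b) K)
    (k : ℕ) : k ≤ A.rank ↔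
      ∃ (f : Fin k → Fin a) (g : Fin k → Fin b), (A.submatrix f g).det ≠ 0 := by
  -- a matrix of rank at least `k` has `k` linearly independent rows
  have rows : ∀ {a b : ℕ} (A : Matrix (Fin a) (Fin b) K), k ≤ A.rank →
      ∃ f : Fin k → Fin a, LinearIndependent K (A.submatrix f id).row := by
    intro a b A h
    rw [Matrix.rank_eq_finrank_span_row] at h
    obtain ⟨w, hw, -, hli⟩ := Submodule.exists_fun_fin_finrank_span_eq K (Set.range A.row)
    choose f hf using hw
    refine ⟨fun i => f (Fin.castLE h i), ?_⟩
    have hrow : (A.submatrix (fun i => f (Fin.castLE h i)) id).row = w ∘ Fin.castLE h :=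
      funext fun i => hf (Fin.castLE h i)
    rw [hrow]
    exact hli.comp (Fin.castLE h) (Fin.castLE_injective h)
  constructor
  · intro h
    obtain ⟨f, hf⟩ := rows A h
    have h1 : k ≤ (A.submatrix f id).transpose.rank := by
      rw [Matrix.rank_transpose, hf.rank_matrix, Fintype.card_fin]
    obtain ⟨g, hg⟩ := rows _ h1
    refine ⟨f, g, ?_⟩
    have := (Matrix.isUnit_iff_isUnit_det _).1 (Matrix.linearIndependent_rows_iff_isUnit.1 hg)
    rw [← Matrix.det_transpose]
    exact this.ne_zero
  · rintro ⟨f, g, h⟩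
    have := Matrix.rank_of_det_ne_zero h
    rw [Fintype.card_fin] at this
    exact this ▸ Matrix.rank_submatrix_le A f g

/-- Discarding the last of several dependent vectors without losing rank. Given a relation
`∑ cᵢ vᵢ = 0`, the combination `∑ cᵢ (vᵢ + xᵢ v_last)` over the other indices equals
`(∑ cᵢ xᵢ - c_last) v_last`; so unless `x` lies on the hyperplane `∑ cᵢ xᵢ = c_last`, the modified
vectors still span `v_last`. -/
theorem last_mem_span {K V : Type*} [Field K] [AddCommGroup V] [Module K V] {n : ℕ}
    (v : Fin (n + 1) → V) (c : Fin (n + 1) → K) (hc : ∑ i, c i • v i = 0) (x : Fin n → K)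
    (hx : ∑ i, c (Fin.castSucc i) * x i ≠ c (Fin.last n)) :
    v (Fin.last n) ∈
      Submodule.span K (Set.range fun i : Fin n => v i.castSucc + x i • v (Fin.last n)) := by
  set S := Submodule.span K (Set.range fun i : Fin n => v i.castSucc + x i • v (Fin.last n))
  have h1 : ∑ i : Fin n, c i.castSucc • (v i.castSucc + x i • v (Fin.last n)) ∈ S :=
    Submodule.sum_mem _ fun i _ => Submodule.smul_mem _ _ (Submodule.subset_span ⟨i, rfl⟩)
  have h2 : ∑ i : Fin n, c i.castSucc • (v i.castSucc + x i • v (Fin.last n)) =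
      (∑ i, c (Fin.castSucc i) * x i - c (Fin.last n)) • v (Fin.last n) := by
    rw [Fin.sum_univ_castSucc] at hc
    simp only [smul_add, Finset.sum_add_distrib, smul_smul, sub_smul, Finset.sum_smul]
    rw [eq_neg_of_add_eq_zero_left hc]
    abel
  rw [h2] at h1
  exact (Submodule.smul_mem_iff _ (sub_ne_zero.2 hx)).1 h1

theorem span_le_sup_last {K V : Type*} [Field K] [AddCommGroup V] [Module K V] {n : ℕ}
    (v : Fin (n + 1) → V) (x : Fin n → K) :
    Submodule.span K (Set.range v) ≤
      Submodule.span K (Set.range fun i : Fin n => v i.castSucc + x i • v (Fin.last n)) ⊔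
        Submodule.span K {v (Fin.last n)} := by
  have hl : v (Fin.last n) ∈ Submodule.span K {v (Fin.last n)} :=
    Submodule.subset_span rfl
  rw [Submodule.span_le]
  rintro _ ⟨i, rfl⟩
  refine Fin.lastCases ?_ (fun i => ?_) i
  · exact Submodule.mem_sup_right hl
  · have : v i.castSucc = (v i.castSucc + x i • v (Fin.last n)) + -(x i • v (Fin.last n)) := by
      abel
    rw [this]
    exact Submodule.add_mem_sup (Submodule.subset_span ⟨i, rfl⟩)
      (Submodule.neg_mem _ (Submodule.smul_mem _ _ hl))

/-! ### Prime avoidance -/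

/-- Avoidance for finitely many primes. Each condition `Good Q` depends on `x` only modulo `Q`
(`hsat`), and a point violating it can be repaired by moving along some direction `y` by any scalar
outside `Q` (`hmove`). All conditions can then be met at once: treat a minimal prime last,
and move by a scalar lying in all the other primes. -/
theorem exists_good {R : Type*} [CommRing R] {n : ℕ} (Good : PrimeSpectrum R → (Fin n → R) → Prop)
    (B : Finset (PrimeSpectrum R))
    (hsat : ∀ Q ∈ B, ∀ x y, Good Q x → (∀ i, y i ∈ Q.asIdeal) → Good Q (x + y))
    (hmove : ∀ Q ∈ B, ∀ x, ¬ Good Q x → ∃ y, ∀ s, s ∉ Q.asIdeal → Good Q (x + s • y)) :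
    ∃ x, ∀ Q ∈ B, Good Q x := by
  classical
  induction B using Finset.strongInduction with
  | H B ih =>
    rcases B.eq_empty_or_nonempty with rfl | hne
    · exact ⟨0, by simp⟩
    obtain ⟨Q, hQB, hmin⟩ := B.exists_minimal hne
    obtain ⟨x, hx⟩ := ih (B.erase Q) (Finset.erase_ssubset hQB)
      (fun Q' h => hsat Q' (Finset.mem_of_mem_erase h))
      (fun Q' h => hmove Q' (Finset.mem_of_mem_erase h))
    by_cases hg : Good Q x
    · refine ⟨x, fun Q' h' => ?_⟩
      by_cases h : Q' = Q
      · exact h ▸ hg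
      · exact hx Q' (Finset.mem_erase.2 ⟨h, h'⟩)
    obtain ⟨y, hy⟩ := hmove Q hQB x hg
    -- by minimality of `Q`, some `s` lies in all the other primes but not in `Q`
    have h1 : ∀ Q' : PrimeSpectrum R, ∃ s, s ∉ Q.asIdeal ∧ (Q' ∈ B.erase Q → s ∈ Q'.asIdeal) := by
      intro Q'
      by_cases h : Q' ∈ B.erase Q
      · rw [Finset.mem_erase] at h
        have : ¬ Q'.asIdeal ≤ Q.asIdeal := fun hle =>
          h.1 (le_antisymm hle (hmin h.2 hle))
        obtain ⟨s, hs, hs'⟩ := Set.not_subset.1 this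
        exact ⟨s, hs', fun _ => hs⟩
      · exact ⟨1, Q.isPrime.one_notMem, fun h' => absurd h' h⟩
    choose s hs hs' using h1
    refine ⟨x + (∏ Q' ∈ B.erase Q, s Q') • y, fun Q' h' => ?_⟩
    by_cases h : Q' = Q
    · subst h
      apply hy
      rw [Q'.isPrime.prod_mem_iff]
      rintro ⟨Q'', -, h⟩
      exact hs _ h
    · have hmem := Finset.mem_erase.2 ⟨h, h'⟩
      refine hsat Q' h' _ _ (hx Q' hmem) fun i => ?_
      exact Ideal.mul_mem_right _ _ (Ideal.mem_of_dvd _ (Finset.dvd_prod_of_mem s hmem) (hs' Q' hmem))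

/-! ### Fibre ranks and determinantal loci -/

/-- The dimension of the span of the images of `m 0, …, m (n - 1)` in `κ(Q)^N`. -/
noncomputable def fibRank {R : Type*} [CommRing R] {n N : ℕ} (m : Fin n → Fin N → R)
    (Q : PrimeSpectrum R) : ℕ :=
  ((Matrix.of m).map (algebraMap R Q.asIdeal.ResidueField)).rank

theorem fibRank_eq {R : Type*} [CommRing R] {n N : ℕ} (m : Fin n → Fin N → R)
    (Q : PrimeSpectrum R) :
    fibRank m Q = Module.finrank Q.asIdeal.ResidueField (Submodule.span Q.asIdeal.ResidueField
      (Set.range fun i j => algebraMap R Q.asIdeal.ResidueField (m i j))) := by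
  rw [fibRank, Matrix.rank_eq_finrank_span_row]
  rfl

/-- The ideal of `k × k` minors of the matrix with rows `m i`. Rows and columns are chosen by
arbitrary functions; a repetition contributes only the minor `0`. -/
def minorIdeal {R : Type*} [CommRing R] {n N : ℕ} (m : Fin n → Fin N → R) (k : ℕ) : Ideal R :=
  Ideal.span (Set.range fun p : (Fin k → Fin n) × (Fin k → Fin N) =>
    ((Matrix.of m).submatrix p.1 p.2).det)

/-- The locus where the fibre rank is less than `k` is closed, cut out by the `k × k` minors. -/
theorem minorIdeal_le_iff {R : Type*} [CommRing R] {n N : ℕ} (m : Fin n → Fin N → R) (k : ℕ)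
    (Q : PrimeSpectrum R) : minorIdeal m k ≤ Q.asIdeal ↔ fibRank m Q < k := by
  rw [← not_le, fibRank, le_rank_iff_exists_minor, minorIdeal, Ideal.span_le]
  push Not
  constructor
  · intro h f g
    have := h ⟨(f, g), rfl⟩
    rw [SetLike.mem_coe, ← Ideal.algebraMap_residueField_eq_zero, RingHom.map_det] at this
    exact this
  · rintro h _ ⟨⟨f, g⟩, rfl⟩
    rw [SetLike.mem_coe, ← Ideal.algebraMap_residueField_eq_zero, RingHom.map_det]
    exact h f g

/-- There are only finitely many primes at which the bound `coheight Q + 1 ≤ fibRank m Q` is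
sharp (and not merely replaced by `n ≤ fibRank m Q`): such a `Q` with fibre rank `k` is minimal in
the locus of fibre rank at most `k`, since a strictly smaller prime has larger coheight and hence
larger fibre rank. -/
theorem finite_bad {R : Type*} [CommRing R] [IsNoetherianRing R] {n N : ℕ}
    (m : Fin n → Fin N → R)
    (hm : ∀ Q, n ≤ fibRank m Q ∨ Order.coheight Q + 1 ≤ (fibRank m Q : ℕ∞)) :
    {Q : PrimeSpectrum R | fibRank m Q < n ∧ Order.coheight Q + 1 = (fibRank m Q : ℕ∞)}.Finite := by
  have : {Q : PrimeSpectrum R | fibRank m Q < n ∧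
      Order.coheight Q + 1 = (fibRank m Q : ℕ∞)} ⊆
      ⋃ k ∈ Finset.range n, PrimeSpectrum.asIdeal ⁻¹' (minorIdeal m (k + 1)).minimalPrimes := by
    rintro Q ⟨h1, h2⟩
    simp only [Finset.mem_range, Set.mem_iUnion]
    refine ⟨fibRank m Q, h1, ⟨⟨Q.isPrime, (minorIdeal_le_iff m _ Q).2 (Nat.lt_succ_self _)⟩, ?_⟩⟩
    rintro I ⟨hI, hle⟩ hIQ
    by_contra hcon
    let Q' : PrimeSpectrum R := ⟨I, hI⟩
    have hlt : Q' < Q := lt_of_le_not_ge hIQ hcon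
    have h3 : fibRank m Q' < fibRank m Q + 1 := (minorIdeal_le_iff m _ Q').1 hle
    have h4 : Order.coheight Q + 1 ≤ Order.coheight Q' := Order.coheight_add_one_le hlt
    rcases hm Q' with h5 | h5
    · omega
    · have h6 : ((fibRank m Q + 1 : ℕ) : ℕ∞) ≤ fibRank m Q' := by
        push_cast
        rw [← h2]
        exact le_trans (by gcongr) h5
      have := ENat.natCast_le_natCast.1 h6
      omega
  refine Set.Finite.subset ?_ this
  refine Set.Finite.biUnion (Finset.finite_toSet _) fun k _ => ?_
  exact Set.Finite.preimage (fun _ _ _ _ h => PrimeSpectrum.ext h)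
    (Ideal.finite_minimalPrimes_of_isNoetherianRing R _)

/-! ### Discarding vectors -/

/-- The Eisenbud–Evans step: multiples of the last vector are added to the others, and the last
vector is discarded, while keeping fibre rank at least `min (number of vectors) (coheight + 1)`.
The multiple added to `m 0` is a multiple of `a`. Discarding loses at most one dimension, so only
the primes of `finite_bad` matter, and there `last_mem_span` imposes one nontrivial affine
inequation. The hypothesis `ha` makes it nontrivial also when `a ∈ Q` and the relation involves
only `m 0` and the last vector. -/
theorem drop_step {R : Type*} [CommRing R] [IsNoetherianRing R] {n N : ℕ} (a : R)
    (m : Fin (n + 2) → Fin N → R)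
    (hm : ∀ Q, n + 2 ≤ fibRank m Q ∨ Order.coheight Q + 1 ≤ (fibRank m Q : ℕ∞))
    (ha : ∀ Q : PrimeSpectrum R, a ∈ Q.asIdeal → ∃ j, m 0 j ∉ Q.asIdeal) :
    ∃ x : Fin (n + 1) → R, ∀ Q,
      n + 1 ≤ fibRank (fun i => m i.castSucc +
        ((if i = 0 then a else 1) * x i) • m (Fin.last (n + 1))) Q ∨
      Order.coheight Q + 1 ≤ (fibRank (fun i => m i.castSucc +
        ((if i = 0 then a else 1) * x i) • m (Fin.last (n + 1))) Q : ℕ∞) := by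
  classical
  set e : Fin (n + 1) → R := fun i => if i = 0 then a else 1 with he
  let v : ∀ Q : PrimeSpectrum R, Fin (n + 2) → Fin N → Q.asIdeal.ResidueField :=
    fun Q i j => algebraMap R Q.asIdeal.ResidueField (m i j)
  -- where the fibre rank is deficient, fix a nontrivial linear relation `c Q`
  have hrel : ∀ Q, ∃ c : Fin (n + 2) → Q.asIdeal.ResidueField, fibRank m Q < n + 2 →
      ∑ i, c i • v Q i = 0 ∧ ∃ i, c i ≠ 0 := by
    intro Q
    by_cases h : fibRank m Q < n + 2
    · have : ¬ LinearIndependent Q.asIdeal.ResidueField (v Q) := by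
        intro hli
        rw [linearIndependent_iff_card_eq_finrank_span, Fintype.card_fin] at hli
        rw [fibRank_eq] at h
        exact absurd hli.symm h.ne
      obtain ⟨c, hc⟩ := Fintype.not_linearIndependent_iff.1 this
      exact ⟨c, fun _ => hc⟩
    · exact ⟨0, fun h' => absurd h' h⟩
  choose c hc using hrel
  let Good : PrimeSpectrum R → (Fin (n + 1) → R) → Prop := fun Q x =>
    ∑ i : Fin (n + 1), c Q i.castSucc * algebraMap R Q.asIdeal.ResidueField (e i * x i) ≠
      c Q (Fin.last (n + 1))
  obtain ⟨x, hx⟩ := exists_good Good (finite_bad m hm).toFinset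
    (by
      intro Q _ x y hx hy
      have : ∀ i, algebraMap R Q.asIdeal.ResidueField (y i) = 0 := fun i =>
        Ideal.algebraMap_residueField_eq_zero.2 (hy i)
      simpa [Good, this] using hx)
    (by
      intro Q hQ x hx
      rw [Set.Finite.mem_toFinset] at hQ
      obtain ⟨hrel, i₁, hi₁⟩ := hc Q hQ.1
      have hx' : ∑ i : Fin (n + 1), c Q i.castSucc *
          algebraMap R Q.asIdeal.ResidueField (e i * x i) = c Q (Fin.last (n + 1)) := not_not.1 hx
      by_cases h : ∃ i : Fin (n + 1), c Q i.castSucc *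
          algebraMap R Q.asIdeal.ResidueField (e i) ≠ 0
      · obtain ⟨i, hi⟩ := h
        refine ⟨Pi.single i 1, fun s hs => ?_⟩
        have hs' : algebraMap R Q.asIdeal.ResidueField s ≠ 0 := fun h =>
          hs (Ideal.algebraMap_residueField_eq_zero.1 h)
        have key : ∑ k : Fin (n + 1), c Q k.castSucc * algebraMap R Q.asIdeal.ResidueField
            (e k * (x + s • (Pi.single i 1 : Fin (n + 1) → R)) k) =
            c Q (Fin.last (n + 1)) + c Q i.castSucc *
              algebraMap R Q.asIdeal.ResidueField (e i) *
              algebraMap R Q.asIdeal.ResidueField s := by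
          rw [← hx']
          simp only [Pi.add_apply, Pi.smul_apply, smul_eq_mul, mul_add, map_add,
            Finset.sum_add_distrib, add_right_inj]
          rw [Finset.sum_eq_single i]
          · simp [mul_assoc]
          · intro k _ hk
            simp [Pi.single_eq_of_ne hk]
          · simp
        change _ ≠ _
        rw [key]
        exact fun h => mul_ne_zero hi hs' (by simpa only [add_eq_left] using h)
      · -- the affine form is constant, and vanishes at `x`: then the relation reads `c₀ m₀ = 0`
        -- with `c₀ ≠ 0` and `a ∈ Q`, against `ha`
        exfalso
        push Not at h
        have hlast : c Q (Fin.last (n + 1)) = 0 := by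
          rw [← hx']
          refine Finset.sum_eq_zero fun i _ => ?_
          rw [map_mul, ← mul_assoc, h i, zero_mul]
        have hne : ∀ i : Fin (n + 1), i ≠ 0 → c Q i.castSucc = 0 := by
          intro i hi
          simpa [e, hi] using h i
        have hsucc : ∀ i : Fin (n + 2), i ≠ 0 → c Q i = 0 := by
          intro i
          refine Fin.lastCases (fun _ => hlast) (fun i hi => hne i ?_) i
          rintro rfl
          exact hi rfl
        have hc0 : c Q 0 ≠ 0 := by
          intro h0
          by_cases hi : i₁ = 0
          · exact hi₁ (hi ▸ h0)
          · exact hi₁ (hsucc i₁ hi)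
        have haQ : a ∈ Q.asIdeal := by
          have := h 0
          simp only [e, if_true, Fin.castSucc_zero, mul_eq_zero, hc0, false_or] at this
          exact Ideal.algebraMap_residueField_eq_zero.1 this
        obtain ⟨j, hj⟩ := ha Q haQ
        rw [Finset.sum_eq_single 0 (fun i _ hi => by rw [hsucc i hi, zero_smul]) (by simp)] at hrel
        have := congrFun hrel j
        simp only [Pi.smul_apply, smul_eq_mul, Pi.zero_apply, mul_eq_zero, hc0, false_or] at this
        exact hj (Ideal.algebraMap_residueField_eq_zero.1 this))
  refine ⟨x, fun Q => ?_⟩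
  set m' : Fin (n + 1) → Fin N → R := fun i => m i.castSucc + (e i * x i) • m (Fin.last (n + 1))
    with hm'
  let K := Q.asIdeal.ResidueField
  let w : Fin (n + 1) → Fin N → K := fun i =>
    v Q i.castSucc + algebraMap R K (e i * x i) • v Q (Fin.last (n + 1))
  have hr : fibRank m Q = Module.finrank K (Submodule.span K (Set.range (v Q))) := fibRank_eq m Q
  have hr' : fibRank m' Q = Module.finrank K (Submodule.span K (Set.range w)) := by
    have hw : (fun i j => algebraMap R Q.asIdeal.ResidueField (m' i j)) = w := by
      ext i j
      simp [m', w, v, K]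
    rw [fibRank_eq, hw]
  have hsup := span_le_sup_last (v Q) (fun i => algebraMap R K (e i * x i))
  change _ ≤ Submodule.span K (Set.range w) ⊔ _ at hsup
  have hdrop : fibRank m Q ≤ fibRank m' Q + 1 := by
    rw [hr, hr']
    refine (Submodule.finrank_mono hsup).trans
      ((Submodule.finrank_add_le_finrank_add_finrank _ _).trans ?_)
    gcongr
    simpa using finrank_span_le_card (R := K) ({v Q (Fin.last (n + 1))} : Set (Fin N → K))
  rcases hm Q with h | h
  · left; omega
  by_cases hlt : fibRank m Q < n + 2
  swap
  · left; omega
  right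
  rcases h.eq_or_lt with heq | hlt'
  · have hgood : Good Q x := hx Q ((Set.Finite.mem_toFinset _).2 ⟨hlt, heq⟩)
    have hmem : v Q (Fin.last (n + 1)) ∈ Submodule.span K (Set.range w) :=
      last_mem_span (v Q) (c Q) (hc Q hlt).1 (fun i => algebraMap R K (e i * x i)) hgood
    rw [sup_eq_left.2 (Submodule.span_le.2 (Set.singleton_subset_iff.2 hmem))] at hsup
    have : fibRank m Q ≤ fibRank m' Q := by
      rw [hr, hr']
      exact Submodule.finrank_mono hsup
    rw [heq]
    exact_mod_cast this
  · have h1 : Order.coheight Q + 1 + 1 ≤ ((fibRank m' Q : ℕ∞) + 1) :=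
      (Order.add_one_le_of_lt hlt').trans (by exact_mod_cast hdrop)
    exact (ENat.add_le_add_iff_right (by simp)).1 h1

/-- Repeated use of `drop_step` until a single vector, nonzero in every fibre, is left. -/
theorem exists_unimodular {R : Type*} [CommRing R] [IsNoetherianRing R] {N : ℕ} (a : R) :
    ∀ {n : ℕ} (m : Fin (n + 1) → Fin N → R)
    (_ : ∀ Q, n + 1 ≤ fibRank m Q ∨ Order.coheight Q + 1 ≤ (fibRank m Q : ℕ∞))
    (_ : ∀ Q : PrimeSpectrum R, a ∈ Q.asIdeal → ∃ j, m 0 j ∉ Q.asIdeal),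
    ∃ q ∈ Submodule.span R (Set.range m), ∀ Q : PrimeSpectrum R,
      ∃ j, (m 0 + a • q) j ∉ Q.asIdeal := by
  intro n
  induction n with
  | zero =>
    intro m hm _
    refine ⟨0, Submodule.zero_mem _, fun Q => ?_⟩
    by_contra! hcon
    have h0 : fibRank m Q = 0 := by
      have : (Matrix.of m).map (algebraMap R Q.asIdeal.ResidueField) = 0 := by
        ext i j
        obtain rfl : i = 0 := Subsingleton.elim (α := Fin 1) _ _
        simpa using hcon j
      rw [fibRank, this, Matrix.rank_zero]
    rcases hm Q with h | h <;> simp [h0] at h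
  | succ n ih =>
    intro m hm ha
    obtain ⟨x, hx⟩ := drop_step a m hm ha
    set m' : Fin (n + 1) → Fin N → R := fun i => m i.castSucc +
        ((if i = 0 then a else 1) * x i) • m (Fin.last (n + 1)) with hm'
    have h0 : m' 0 = m 0 + a • (x 0 • m (Fin.last (n + 1))) := by
      simp [m', mul_smul]
    have hspan : Submodule.span R (Set.range m') ≤ Submodule.span R (Set.range m) := by
      rw [Submodule.span_le]
      rintro _ ⟨i, rfl⟩
      exact Submodule.add_mem _ (Submodule.subset_span ⟨_, rfl⟩)
        (Submodule.smul_mem _ _ (Submodule.subset_span ⟨_, rfl⟩))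
    obtain ⟨q, hq, hq'⟩ := ih m' hx (by
      intro Q haQ
      obtain ⟨j, hj⟩ := ha Q haQ
      refine ⟨j, fun h => hj ?_⟩
      rw [h0] at h
      exact (Ideal.add_mem_iff_left _ (Ideal.mul_mem_right _ _ haQ)).1 h)
    refine ⟨x 0 • m (Fin.last (n + 1)) + q, Submodule.add_mem _
      (Submodule.smul_mem _ _ (Submodule.subset_span ⟨_, rfl⟩)) (hspan hq), fun Q => ?_⟩
    obtain ⟨j, hj⟩ := hq' Q
    refine ⟨j, ?_⟩
    rwa [h0, add_assoc, ← smul_add] at hj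


/-! ### Unimodular elements of projective modules -/

/-- When `P` is a retract of `R^N`, the fibre of `P` embeds in `κ(Q)^N`, so generators of `P` have
fibre rank at least the rank of `P`. -/
theorem le_fibRank_of_span_eq_top {R P : Type*} [CommRing R] [AddCommGroup P] [Module R P]
    {n N : ℕ} (ι : P →ₗ[R] (Fin N → R)) (π : (Fin N → R) →ₗ[R] P) (hπι : π ∘ₗ ι = LinearMap.id)
    (g : Fin n → P) (hg : Submodule.span R (Set.range g) = ⊤) (Q : PrimeSpectrum R) :
    Module.finrank Q.asIdeal.ResidueField (Q.asIdeal.Fiber P) ≤ fibRank (fun i => ι (g i)) Q := by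
  let K := Q.asIdeal.ResidueField
  let J : TensorProduct R K P →ₗ[K] (Fin N → K) :=
    (TensorProduct.piScalarRight R K K (Fin N)).toLinearMap ∘ₗ ι.baseChange K
  have hinj : Function.Injective J := by
    refine (TensorProduct.piScalarRight R K K (Fin N)).injective.comp ?_
    refine Function.LeftInverse.injective (g := π.baseChange K) fun t => ?_
    rw [← LinearMap.comp_apply, ← LinearMap.baseChange_comp, hπι, LinearMap.baseChange_id,
      LinearMap.id_apply]
  have htop : (⊤ : Submodule K (TensorProduct R K P)) =
      Submodule.span K (TensorProduct.mk R K P 1 '' Set.range g) := by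
    rw [← Submodule.baseChange_top, ← hg, Submodule.baseChange_span]
  have hrange : LinearMap.range J = Submodule.span K
      (Set.range fun i j => algebraMap R Q.asIdeal.ResidueField (ι (g i) j)) := by
    rw [← Submodule.map_top, htop, Submodule.map_span, ← Set.range_comp, ← Set.range_comp]
    congr 2
    ext i j
    simp [J, K, Algebra.algebraMap_eq_smul_one]
  rw [fibRank_eq]
  change Module.finrank K (TensorProduct R K P) ≤ _
  rw [← LinearMap.finrank_range_of_inj hinj, hrange]

theorem linearMap_apply_mem {R : Type*} [CommRing R] {N : ℕ} (f : (Fin N → R) →ₗ[R] R)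
    (I : Ideal R) (v : Fin N → R) (hv : ∀ j, v j ∈ I) : f v ∈ I := by
  rw [LinearMap.pi_apply_eq_sum_univ f v]
  exact Ideal.sum_mem _ fun j _ => Ideal.mul_mem_right _ _ (hv j)

/-- The key to cancellation: if `(p, a)` is unimodular in `P ⊕ R` and `P` has large rank, then
some `p + a q` is unimodular in `P`. -/
theorem exists_add_smul_unimodular {R P : Type*} [CommRing R] [IsNoetherianRing R]
    [AddCommGroup P] [Module R P] [Module.Finite R P] [Module.Projective R P]
    (hrank : ∀ Q : PrimeSpectrum R, Order.coheight Q + 1 ≤ (Module.rankAtStalk P Q : ℕ∞))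
    (p : P) (a : R) (ψ : P →ₗ[R] R) (c : R) (h : ψ p + a * c = 1) :
    ∃ (q : P) (φ : P →ₗ[R] R), φ (p + a • q) = 1 := by
  obtain ⟨N, π, ι, -, -, hπι⟩ := Module.Finite.exists_comp_eq_id_of_projective R P
  obtain ⟨n, g, hg⟩ := Module.Finite.exists_fin (R := R) (M := P)
  let g' : Fin (n + 1) → P := Fin.cons p g
  have hg' : Submodule.span R (Set.range g') = ⊤ := by
    rw [eq_top_iff, ← hg]
    refine Submodule.span_mono ?_
    rintro _ ⟨i, rfl⟩
    exact ⟨i.succ, by simp [g']⟩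
  let m : Fin (n + 1) → Fin N → R := fun i => ι (g' i)
  have hπ : ∀ x, π (ι x) = x := fun x => LinearMap.congr_fun hπι x
  obtain ⟨q, hq, hq'⟩ := exists_unimodular a m
    (fun Q => Or.inr ((hrank Q).trans (by
      rw [Module.rankAtStalk_eq]
      exact_mod_cast le_fibRank_of_span_eq_top ι π hπι g' hg' Q)))
    (by
      intro Q haQ
      by_contra! hcon
      have h1 : ψ p ∈ Q.asIdeal := by
        have := linearMap_apply_mem (ψ ∘ₗ π) Q.asIdeal (ι p) hcon
        simpa [hπ] using this
      exact Q.isPrime.one_notMem (h ▸ Ideal.add_mem _ h1 (Ideal.mul_mem_right _ _ haQ)))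
  obtain ⟨q, rfl⟩ : q ∈ LinearMap.range ι := by
    refine (Submodule.span_le.2 ?_) hq
    rintro _ ⟨i, rfl⟩
    exact ⟨g' i, rfl⟩
  have hm0 : m 0 + a • ι q = ι (p + a • q) := by simp [m, g']
  rw [hm0] at hq'
  have htop : Ideal.span (Set.range (ι (p + a • q))) = ⊤ := by
    by_contra hne
    obtain ⟨M, hM, hle⟩ := Ideal.exists_le_maximal _ hne
    obtain ⟨j, hj⟩ := hq' ⟨M, hM.isPrime⟩
    exact hj (hle (Ideal.subset_span ⟨j, rfl⟩))
  obtain ⟨b, hb⟩ := Ideal.mem_span_range_iff_exists_fun.1 ((Ideal.eq_top_iff_one _).1 htop)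
  refine ⟨q, (∑ j, b j • LinearMap.proj j) ∘ₗ ι, ?_⟩
  simpa using hb

/-! ### Cancellation -/

/-- The transvection `(x, r) ↦ (x + r q, r)` of `P ⊕ R`. -/
def shearUp {R P : Type*} [CommRing R] [AddCommGroup P] [Module R P] (q : P) :
    (P × R) ≃ₗ[R] (P × R) where
  toFun z := (z.1 + z.2 • q, z.2)
  invFun z := (z.1 - z.2 • q, z.2)
  map_add' y z := by ext <;> simp [add_smul]; abel
  map_smul' r z := by ext <;> simp [mul_smul]
  left_inv z := by simp
  right_inv z := by simp

/-- The transvection `(x, r) ↦ (x, r + φ x)` of `P ⊕ R`. -/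
def shearDown {R P : Type*} [CommRing R] [AddCommGroup P] [Module R P] (φ : P →ₗ[R] R) :
    (P × R) ≃ₗ[R] (P × R) where
  toFun z := (z.1, z.2 + φ z.1)
  invFun z := (z.1, z.2 - φ z.1)
  map_add' y z := by ext <;> simp; abel
  map_smul' r z := by ext <;> simp [mul_add]
  left_inv z := by simp
  right_inv z := by simp

theorem fst_symm_fst_apply {R P Q : Type*} [CommRing R] [AddCommGroup P] [Module R P]
    [AddCommGroup Q] [Module R Q] (T : (P × R) ≃ₗ[R] (Q × R)) (hT : T (0, 1) = (0, 1)) (x : P) :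
    (T.symm ((T (x, 0)).1, 0)).1 = x := by
  have h1 : ((T (x, 0)).1, (0 : R)) = T (x, 0) - (T (x, 0)).2 • T (0, 1) := by
    rw [hT]; ext <;> simp
  rw [h1, ← map_smul, ← map_sub, LinearEquiv.symm_apply_apply]
  simp

/-- Both summands are recovered as quotients by the last basis vector, so an isomorphism
preserving that vector induces `P ≃ Q`. -/
theorem nonempty_equiv_of_map_inr {R P Q : Type*} [CommRing R] [AddCommGroup P] [Module R P]
    [AddCommGroup Q] [Module R Q] (T : (P × R) ≃ₗ[R] (Q × R)) (hT : T (0, 1) = (0, 1)) :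
    Nonempty (P ≃ₗ[R] Q) := by
  have hT' : T.symm (0, 1) = (0, 1) := by rw [← hT, LinearEquiv.symm_apply_apply]
  refine ⟨LinearEquiv.ofLinearMap
    (LinearMap.fst R Q R ∘ₗ T.toLinearMap ∘ₗ LinearMap.inl R P R)
    (LinearMap.fst R P R ∘ₗ T.symm.toLinearMap ∘ₗ LinearMap.inl R Q R) ?_ ?_⟩
  · ext y
    exact fst_symm_fst_apply T.symm hT' y
  · ext x
    exact fst_symm_fst_apply T hT x

/-- Bass cancellation: over a commutative Noetherian ring `R` of Krull dimension `d`,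
if `P` and `Q` are finitely generated projective modules, the rank of `P` at every
maximal ideal exceeds `d`, and `P ⊕ R ≅ Q ⊕ R`, then `P ≅ Q`. -/
theorem bass_cancellation
    (R : Type*) [CommRing R] [IsNoetherianRing R] (d : ℕ)
    (hdim : ringKrullDim R = d)
    (P Q : Type*) [AddCommGroup P] [Module R P] [AddCommGroup Q] [Module R Q]
    [Module.Finite R P] [Module.Projective R P]
    [Module.Finite R Q] [Module.Projective R Q]
    (hrank : ∀ (m : Ideal R) (hm : m.IsMaximal),
      letI := hm.isPrime
      (d : Cardinal) <
        Module.rank (Localization.AtPrime m) (LocalizedModule m.primeCompl P))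
    (hstab : Nonempty ((P × R) ≃ₗ[R] (Q × R))) :
    Nonempty (P ≃ₗ[R] Q) := by
  obtain ⟨σ⟩ := hstab
  have hrank' : ∀ q : PrimeSpectrum R,
      Order.coheight q + 1 ≤ (Module.rankAtStalk P q : ℕ∞) := by
    intro q
    obtain ⟨m, hm, hle⟩ := Ideal.exists_le_maximal q.asIdeal q.isPrime.ne_top
    have := hm.isPrime
    rw [Module.rankAtStalk_eq_of_le_of_finite_of_flat P (q := ⟨m, hm.isPrime⟩) hle]
    have h1 : d < Module.rankAtStalk P ⟨m, hm.isPrime⟩ := by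
      have := hrank m hm
      rw [← Module.finrank_eq_rank] at this
      exact_mod_cast this
    have h2 : Order.coheight q ≤ d := by
      have := Order.coheight_le_krullDim q
      change _ ≤ ringKrullDim R at this
      rw [hdim] at this
      exact_mod_cast this
    calc Order.coheight q + 1 ≤ (d : ℕ∞) + 1 := by gcongr
      _ ≤ _ := by exact_mod_cast h1
  obtain ⟨p, a, hpa⟩ : ∃ p a, σ (p, a) = (0, 1) :=
    ⟨(σ.symm (0, 1)).1, (σ.symm (0, 1)).2, by simp⟩
  have hψ : (LinearMap.snd R Q R ∘ₗ σ.toLinearMap ∘ₗ LinearMap.inl R P R) p +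
      a * (σ (0, 1)).2 = 1 := by
    have h1 : (p, a) = (p, (0 : R)) + a • ((0 : P), (1 : R)) := by ext <;> simp
    rw [h1, map_add, map_smul] at hpa
    simpa using congrArg Prod.snd hpa
  obtain ⟨q, φ, hφ⟩ := exists_add_smul_unimodular hrank' p a _ _ hψ
  -- `E` carries `(p, a)` first to `(p + a q, a)`, then to `(p + a q, 1)`, finally to `(0, 1)`
  let E : (P × R) ≃ₗ[R] (P × R) :=
    shearUp q ≪≫ₗ shearDown ((1 - a) • φ) ≪≫ₗ shearUp (-(p + a • q))
  have hE : E (p, a) = (0, 1) := by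
    have h1 : shearUp q (p, a) = (p + a • q, a) := rfl
    have h2 : shearDown ((1 - a) • φ) (p + a • q, a) = (p + a • q, 1) := by
      change (p + a • q, a + (1 - a) * φ (p + a • q)) = _
      rw [hφ, mul_one, add_sub_cancel]
    have h3 : shearUp (-(p + a • q)) (p + a • q, (1 : R)) = (0, 1) := by
      change (p + a • q + (1 : R) • -(p + a • q), (1 : R)) = _
      rw [one_smul, add_neg_cancel]
    change shearUp _ (shearDown _ (shearUp q (p, a))) = _
    rw [h1, h2, h3]
  refine nonempty_equiv_of_map_inr (E.symm ≪≫ₗ σ) ?_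
  rw [LinearEquiv.trans_apply, ← hE, LinearEquiv.symm_apply_apply, hpa]
end

section
/- (Serre's Conjecture, proved by Quillen and Suslin.) Let k be a field and n a natural number. Every finitely generated projective module over the polynomial ring k[x₁, …, xₙ] is a free module. -/
/-!
The proof is Quillen's, phrased with idempotent matrices. A finitely generated projective module is
the image of an idempotent matrix `E`, and it is free as soon as `E` *splits*: `E = v u` with
`u v = 1`. That every idempotent matrix over `k[x₁, …, xₙ]` splits is proved by induction on `n`, for
all fields `k` simultaneously.

For the inductive step write the ring as `A[t]` with `A = k[x₁, …, xₙ]`. By the induction hypothesis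
for the field `k(t)`, the matrix `E` splits over `k(t)[x₁, …, xₙ]`. Clearing denominators gives a
monic `f ∈ k[t]` and matrices over `A[t]` with `v u = f E` and `u v = f`. Two results finish the step.

* Horrocks' theorem (`horrocks`): over a local ring `A`, such a relation with `f` monic in `A[t]`
  forces the image of `E` to be free. A suitable element `p` of the image spans a free direct summand
  and has monic first coordinate under `u`, so that the complement satisfies a relation of the same
  kind in one rank less.
* Quillen patching (`quillen_patching`): if `E` splits over `A_m[t]` for every maximal ideal `m` of
  `A`, then `E(t)` is equivalent to the constant matrix `E(0)`. The elements `s ∈ A` for which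
  `E(x + s y)` and `E(x)` are equivalent form an ideal, and each local splitting puts into it an
  element outside `m`.

Finally `E(0)` is an idempotent matrix over `A`, which splits by the induction hypothesis for `k`.
-/

open Polynomial

namespace QuillenSuslin

/-! ### Horrocks' theorem over a local ring -/

/-- Over a local ring `A`, an ideal of `A[X]` containing a monic polynomial and an element that
reduces to `1` over the residue field is the unit ideal: a maximal ideal `M` containing it has
`A[X] ⧸ M` integral over `A`, hence contracts to the maximal ideal of `A`. -/
lemma ideal_eq_top_of_monic {A : Type*} [CommRing A] [IsLocalRing A] (I : Ideal A[X])
    {h g : A[X]} (hI : h ∈ I) (hm : h.Monic) (gI : g ∈ I)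
    (hg : g.map (IsLocalRing.residue A) = 1) : I = ⊤ := by
  by_contra hne
  obtain ⟨M, hM, hIM⟩ := Ideal.exists_le_maximal I hne
  have hfin : Module.Finite A (A[X] ⧸ Ideal.span {h}) := hm.finite_quotient
  have hle : Ideal.span {h} ≤ M := by
    rw [Ideal.span_singleton_le_iff_mem]; exact hIM hI
  have : Module.Finite A (A[X] ⧸ M) :=
    Module.Finite.of_surjective (Ideal.Quotient.factorₐ A hle).toLinearMap
      (Ideal.Quotient.factor_surjective hle)
  have hmax : (Ideal.comap (algebraMap A (A[X] ⧸ M)) ⊥).IsMaximal := by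
    have := (Ideal.bot_quotient_isMaximal_iff M).2 hM
    exact Ideal.isMaximal_comap_of_isIntegral_of_isMaximal (R := A) (⊥ : Ideal (A[X] ⧸ M))
  have heq := IsLocalRing.eq_maximalIdeal hmax
  have hCM : (IsLocalRing.maximalIdeal A).map (C : A →+* A[X]) ≤ M := by
    rw [Ideal.map_le_iff_le_comap, ← heq]
    intro a ha
    rw [Ideal.mem_comap]
    exact Ideal.Quotient.eq_zero_iff_mem.mp (show Ideal.Quotient.mk M (C a) = 0 from ha)
  have h1 : g - 1 ∈ M := by
    apply hCM
    rw [← IsLocalRing.ker_residue, ← Polynomial.ker_mapRingHom, RingHom.mem_ker]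
    simp [hg]
  exact hM.ne_top ((Ideal.eq_top_iff_one M).2 (by simpa using M.sub_mem (hIM gI) h1))

/-- Over a local ring `A`, an ideal `I` of `A[X]` containing a monic polynomial contains a monic
polynomial whose reduction generates the reduction of `I` over the residue field. If `d` is a
generator of that reduction, Nakayama's lemma shows that the polynomials of degree less than
`d.natDegree` span `A[X] ⧸ I`; expressing `X ^ d.natDegree` through them gives the generator. -/
lemma exists_monic_lift {A : Type*} [CommRing A] [IsLocalRing A] (I : Ideal A[X])
    {f : A[X]} (hI : f ∈ I) (hm : f.Monic) :
    ∃ g ∈ I, g.Monic ∧ I.map (mapRingHom (IsLocalRing.residue A)) =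
      Ideal.span {g.map (IsLocalRing.residue A)} := by
  set φ := mapRingHom (IsLocalRing.residue A) with hφ
  have hφs : Function.Surjective φ := Polynomial.map_surjective _ IsLocalRing.residue_surjective
  obtain ⟨d, hd⟩ := (IsPrincipalIdealRing.principal (I.map φ)).principal
  rw [Ideal.submodule_span_eq] at hd
  have hfd : f.map (IsLocalRing.residue A) ∈ Ideal.span {d} := by
    rw [← hd]; exact Ideal.mem_map_of_mem φ hI
  have hd0 : d ≠ 0 := by
    rintro rfl
    have := Ideal.mem_span_singleton.1 hfd
    exact (hm.map (IsLocalRing.residue A)).ne_zero (zero_dvd_iff.1 this)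
  have hfin : Module.Finite A (A[X] ⧸ Ideal.span {f}) := hm.finite_quotient
  have hle : Ideal.span {f} ≤ I := by
    rw [Ideal.span_singleton_le_iff_mem]; exact hI
  have hfinI : Module.Finite A (A[X] ⧸ I) :=
    Module.Finite.of_surjective (Ideal.Quotient.factorₐ A hle).toLinearMap
      (Ideal.Quotient.factor_surjective hle)
  let S : Submodule A (A[X] ⧸ I) :=
    (degreeLT A d.natDegree).map (Ideal.Quotient.mkₐ A I).toLinearMap
  have hS : (⊤ : Submodule A (A[X] ⧸ I)) ≤ S := by
    apply Submodule.le_of_le_smul_of_le_jacobson_bot (I := IsLocalRing.maximalIdeal A)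
      hfinI.fg_top (IsLocalRing.maximalIdeal_le_jacobson _)
    rintro x -
    obtain ⟨a, rfl⟩ := Ideal.Quotient.mk_surjective x
    -- divide the reduction of `a` by `d`
    have hdiv := EuclideanDomain.div_add_mod (φ a) d
    have hmem : d * (φ a / d) ∈ I.map φ := by
      rw [hd]; exact Ideal.mul_mem_right _ _ (Ideal.mem_span_singleton_self d)
    obtain ⟨i, hi, hi'⟩ := (Ideal.mem_map_iff_of_surjective φ hφs).1 hmem
    have hlift : (φ a % d) ∈ Polynomial.lifts (IsLocalRing.residue A) := by
      obtain ⟨s, hs⟩ := hφs (φ a % d)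
      exact (Polynomial.mem_lifts _).2 ⟨s, hs⟩
    obtain ⟨s, hs, hsdeg⟩ := Polynomial.exists_degree_eq_of_mem_lifts hlift
    have hsS : s ∈ degreeLT A d.natDegree := by
      rw [mem_degreeLT, hsdeg, ← degree_eq_natDegree hd0]
      exact EuclideanDomain.mod_lt _ hd0
    have hker : a - i - s ∈ RingHom.ker φ := by
      rw [RingHom.mem_ker, map_sub, map_sub, hi', show φ s = φ a % d from hs]
      linear_combination -hdiv
    have e : Ideal.Quotient.mk I a =
        Ideal.Quotient.mk I s + Ideal.Quotient.mk I (a - i - s) := by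
      rw [map_sub, map_sub, Ideal.Quotient.eq_zero_iff_mem.2 hi]; ring
    rw [e]
    refine Submodule.add_mem_sup ⟨s, hsS, rfl⟩ ?_
    rw [hφ, Polynomial.ker_mapRingHom, IsLocalRing.ker_residue] at hker
    refine Submodule.span_induction (p := fun b _ => Ideal.Quotient.mk I b ∈
      IsLocalRing.maximalIdeal A • (⊤ : Submodule A (A[X] ⧸ I))) ?_ ?_ ?_ ?_ hker
    · rintro _ ⟨c, hc, rfl⟩
      have : Ideal.Quotient.mk I (C c) = c • (1 : A[X] ⧸ I) := by
        rw [← Algebra.algebraMap_eq_smul_one]; rfl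
      rw [this]
      exact Submodule.smul_mem_smul hc trivial
    · simp
    · intro x y _ _ hx hy
      rw [map_add]; exact add_mem hx hy
    · intro b x _ hx
      rw [smul_eq_mul, map_mul]
      refine Submodule.smul_induction_on hx ?_ ?_
      · intro c hc y _
        rw [mul_smul_comm]
        exact Submodule.smul_mem_smul hc trivial
      · intro x y hx hy
        rw [mul_add]; exact add_mem hx hy
  obtain ⟨s, hs, hs'⟩ := hS (show Ideal.Quotient.mk I (X ^ d.natDegree) ∈ _ from trivial)
  have hgI : X ^ d.natDegree - s ∈ I := by
    rw [← Ideal.Quotient.eq]; exact hs'.symm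
  have hsd : s.degree < d.natDegree := mem_degreeLT.1 hs
  have hgm : (X ^ d.natDegree - s).Monic :=
    (monic_X_pow d.natDegree).sub_of_left (by simpa using hsd)
  refine ⟨_, hgI, hgm, ?_⟩
  rw [hd]
  have hdvd : d ∣ φ (X ^ d.natDegree - s) := by
    rw [← Ideal.mem_span_singleton, ← hd]; exact Ideal.mem_map_of_mem φ hgI
  rw [Ideal.span_singleton_eq_span_singleton]
  have hgm' := hgm.map (IsLocalRing.residue A)
  refine associated_of_dvd_of_natDegree_le hdvd hgm'.ne_zero ?_
  have : (X ^ d.natDegree - s).natDegree = d.natDegree := by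
    have := degree_sub_eq_left_of_degree_lt (p := (X : A[X]) ^ d.natDegree) (q := s)
      (by simpa using hsd)
    rw [natDegree_eq_of_degree_eq this]; simp
  exact (natDegree_map_le).trans this.le

/-- If a functional `α` on a projective `A[X]`-module takes a monic value, then it takes a monic
value `α q` generating, over the residue field, all the reductions of values of `α`. Dividing the
reduction of `α` by that of `α q` and lifting the quotient by projectivity gives `φ` with
`φ q ≡ 1` and `φ ≡ 0` on the kernel of `α`, modulo the maximal ideal of `A`. -/
lemma exists_functional {A : Type*} [CommRing A] [IsLocalRing A] {P : Type*} [AddCommGroup P]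
    [Module A[X] P] [Module.Projective A[X] P] (α : P →ₗ[A[X]] A[X]) {f : A[X]}
    (hf : f.Monic) {w₀ : P} (hw₀ : α w₀ = f) :
    ∃ (q : P) (φ : P →ₗ[A[X]] A[X]), (α q).Monic ∧
      (φ q).map (IsLocalRing.residue A) = 1 ∧
      ∀ w, α w = 0 → (φ w).map (IsLocalRing.residue A) = 0 := by
  obtain ⟨g, ⟨q, rfl⟩, hgm, hspan⟩ :=
    exists_monic_lift (LinearMap.range α) (f := f) ⟨w₀, hw₀⟩ hf
  set ρ := mapRingHom (IsLocalRing.residue A)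
  let _ : Algebra A[X] (IsLocalRing.ResidueField A)[X] := ρ.toAlgebra
  let β : P →ₗ[A[X]] (IsLocalRing.ResidueField A)[X] := (Algebra.linearMap _ _).comp α
  let γ : A[X] →ₗ[A[X]] (IsLocalRing.ResidueField A)[X] :=
    (LinearMap.mulLeft A[X] (ρ (α q))).comp (Algebra.linearMap _ _)
  have hβγ : ∀ w, β w ∈ LinearMap.range γ := by
    intro w
    have h1 : ρ (α w) ∈ Ideal.span {(α q).map (IsLocalRing.residue A)} := by
      rw [← hspan]; exact Ideal.mem_map_of_mem ρ ⟨w, rfl⟩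
    obtain ⟨c, hc⟩ := Ideal.mem_span_singleton.1 h1
    obtain ⟨c', rfl⟩ := Polynomial.map_surjective _ IsLocalRing.residue_surjective c
    exact ⟨c', hc.symm⟩
  obtain ⟨φ, hφ⟩ := Module.projective_lifting_property γ.rangeRestrict
    (β.codRestrict (LinearMap.range γ) hβγ) γ.surjective_rangeRestrict
  have key : ∀ w, ρ (α q) * ρ (φ w) = ρ (α w) := fun w =>
    congrArg Subtype.val (LinearMap.congr_fun hφ w)
  have hne : ρ (α q) ≠ 0 := (hgm.map (IsLocalRing.residue A)).ne_zero
  refine ⟨q, φ, hgm, mul_left_cancel₀ hne ((key q).trans (mul_one _).symm), fun w hw => ?_⟩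
  have := key w
  rw [hw, map_zero] at this
  exact (mul_eq_zero.1 this).resolve_left hne

/-- A projective module sandwiched between two copies of `A[X] ^ (r + 1)` up to a monic `f` has an
element `p` that spans a direct summand (`φ p = 1`) and whose first coordinate is monic. -/
lemma exists_unimodular {A : Type*} [CommRing A] [IsLocalRing A] {P : Type*} [AddCommGroup P]
    [Module A[X] P] [Module.Projective A[X] P] {r : ℕ} {f : A[X]} (hf : f.Monic)
    (u : P →ₗ[A[X]] (Fin (r + 1) → A[X])) (v : (Fin (r + 1) → A[X]) →ₗ[A[X]] P)
    (huv : ∀ x, u (v x) = f • x) :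
    ∃ (p : P) (φ : P →ₗ[A[X]] A[X]), (u p 0).Monic ∧ φ p = 1 := by
  -- The values of all functionals at `p` form an ideal containing the monic `u p 0`, so `φ p = 1`
  -- is needed only modulo the maximal ideal of `A`.
  suffices h : ∃ (p : P) (φ : P →ₗ[A[X]] A[X]), (u p 0).Monic ∧
      (φ p).map (IsLocalRing.residue A) = 1 by
    obtain ⟨p, φ, hm, hφ⟩ := h
    have htop := ideal_eq_top_of_monic
      (LinearMap.range (LinearMap.applyₗ (R := A[X]) (M₂ := A[X]) p))
      (h := u p 0) (g := φ p) ⟨(LinearMap.proj 0).comp u, rfl⟩ hm ⟨φ, rfl⟩ hφ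
    obtain ⟨ψ, hψ⟩ := (Ideal.eq_top_iff_one _).1 htop
    exact ⟨p, ψ, hm, hψ⟩
  cases r with
  | zero =>
    obtain ⟨q, φ, h1, h2, -⟩ := exists_functional ((LinearMap.proj 0).comp u) hf
      (w₀ := v (Pi.single 0 1)) (by simp [huv])
    exact ⟨q, φ, h1, h2⟩
  | succ r =>
    -- The functional `φ` built from the second coordinate vanishes modulo the maximal ideal on
    -- `v e₀`, so a large multiple `X ^ K • v e₀` added to `q` makes the first coordinate monic
    -- without changing the reduction of `φ q`.
    obtain ⟨q, φ, h1, h2, h3⟩ := exists_functional ((LinearMap.proj 1).comp u) hf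
      (w₀ := v (Pi.single 1 1)) (by simp [huv])
    have h4 := h3 (v (Pi.single 0 1)) (by simp [huv])
    refine ⟨(X : A[X]) ^ ((u q 0).natDegree + 1) • v (Pi.single 0 1) + q, φ, ?_, ?_⟩
    · have : u ((X : A[X]) ^ ((u q 0).natDegree + 1) • v (Pi.single 0 1) + q) 0 =
          X ^ ((u q 0).natDegree + 1) * f + u q 0 := by simp [huv]
      rw [this]
      refine ((monic_X_pow _).mul hf).add_of_left ?_
      rw [hf.degree_mul, degree_X_pow]
      refine (degree_le_natDegree (p := u q 0)).trans_lt ?_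
      calc ((u q 0).natDegree : WithBot ℕ) < ((u q 0).natDegree + 1 : ℕ) := by
            exact_mod_cast Nat.lt_succ_self _
        _ ≤ _ := by
            rw [degree_eq_natDegree hf.ne_zero]
            exact_mod_cast Nat.le_add_right _ _
    · simp [h2, h4]

/-- A form of Horrocks' theorem: over a local ring `A`, a projective `A[X]`-module that becomes free
of rank `r` after inverting a monic polynomial is free. The hypothesis is given through maps `u`,
`v` between `P` and `A[X] ^ r` that are inverse to each other up to the monic factor `f`.

By induction on `r`: an element `p` as in `exists_unimodular` splits off a free summand, and the
complement `ker φ` satisfies the hypothesis with `r - 1` and the monic polynomial `u p 0 * f`. -/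
theorem horrocks {A : Type*} [CommRing A] [IsLocalRing A] (r : ℕ) (P : Type*) [AddCommGroup P]
    [Module A[X] P] [Module.Projective A[X] P] {f : A[X]} (hf : f.Monic)
    (u : P →ₗ[A[X]] (Fin r → A[X])) (v : (Fin r → A[X]) →ₗ[A[X]] P)
    (huv : ∀ x, u (v x) = f • x) (hvu : ∀ w, v (u w) = f • w) : Module.Free A[X] P := by
  induction r generalizing P f with
  | zero =>
    have hreg : ∀ w : P, w = 0 := by
      intro w
      have h0 : f • w = 0 := by rw [← hvu, Subsingleton.elim (u w) 0, map_zero]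
      have hr : IsSMulRegular P f := Module.Flat.isSMulRegular_of_isRegular hf.isRegular
      exact hr (by simpa using h0)
    have : Subsingleton P := ⟨fun a b => by rw [hreg a, hreg b]⟩
    exact Module.Free.of_subsingleton _ _
  | succ r ih =>
    obtain ⟨p, φ, hm, hφ⟩ := exists_unimodular hf u v huv
    set h := u p 0 with hh
    let π : P →ₗ[A[X]] LinearMap.ker φ :=
      (LinearMap.id - φ.smulRight p).codRestrict _ (by intro w; simp [hφ])
    have hπ : ∀ w, (π w : P) = w - φ w • p := fun w => rfl
    have hπs : ∀ w : LinearMap.ker φ, π w = w := by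
      intro w; apply Subtype.ext; rw [hπ, LinearMap.mem_ker.1 w.2]; simp
    have hπp : π p = 0 := by apply Subtype.ext; simp [hπ, hφ]
    have hproj : Module.Projective A[X] (LinearMap.ker φ) :=
      Module.Projective.of_split (LinearMap.ker φ).subtype π (LinearMap.ext hπs)
    -- The 2×2 minors of `(u p, u w)` that involve coordinate `0`: they vanish at `w = p`, and
    -- together they are `u p 0` times the coordinates of `u w` modulo `u p`.
    let u' : P →ₗ[A[X]] (Fin r → A[X]) :=
      LinearMap.pi fun j => h • (LinearMap.proj j.succ).comp u -
        u p j.succ • (LinearMap.proj 0).comp u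
    have hu' : ∀ w j, u' w j = h * u w j.succ - u p j.succ * u w 0 := fun w j => rfl
    have hu'p : u' p = 0 := by ext1 j; rw [hu', ← hh]; simp [mul_comm]
    let ι : (Fin r → A[X]) →ₗ[A[X]] (Fin (r + 1) → A[X]) :=
      LinearMap.pi (Fin.cons 0 fun j => LinearMap.proj j)
    have hι : ∀ x, ι x = Fin.cons 0 x := by
      intro x; ext1 j; refine Fin.cases ?_ (fun j => ?_) j <;> simp [ι]
    have hπu : ∀ w, u' (π w) = u' w := by
      intro w; rw [hπ, map_sub, map_smul, hu'p]; simp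
    have hfree := ih (LinearMap.ker φ) (f := h * f) (hm.mul hf)
      (u'.comp (LinearMap.ker φ).subtype) ((π.comp v).comp ι) (by
        intro x
        show u' (π (v (ι x))) = _
        rw [hπu]; ext1 j
        rw [hu', huv, hι]; simp [mul_assoc]) (by
        intro w
        show π (v (ι (u' w))) = _
        have e : ι (u' w) = h • u w - u (w : P) 0 • u p := by
          rw [hι]; ext1 j
          refine Fin.cases ?_ (fun j => ?_) j
          · simp [← hh, mul_comm]
          · simp [hu', mul_comm]
        rw [e, map_sub, map_smul, map_smul, hvu, hvu, map_sub, map_smul, map_smul, map_smul,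
          map_smul, hπp, hπs, smul_smul]
        simp)
    exact Module.Free.of_equiv (M := A[X] × LinearMap.ker φ)
      { LinearMap.coprod (LinearMap.toSpanSingleton A[X] P p) (LinearMap.ker φ).subtype with
        invFun := fun w => (φ w, π w)
        left_inv := fun ⟨a, w⟩ => by
          have hw := LinearMap.mem_ker.1 w.2
          simp [hφ, hw, hπs, hπp]
        right_inv := fun w => by simp [hπ] }

/-! ### Quillen patching -/

section
variable {A : Type*} [CommRing A] (M : Submonoid A) (S : Type*) [CommRing S] [Algebra A S]
  [IsLocalization M S]

/-- A finite family of polynomials in two variables over a localization of `A` has a common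
denominator in `M`. -/
lemma clear_denoms {κ : Type*} [Finite κ] (g : κ → S[X][X]) :
    ∃ s ∈ M, ∃ G : κ → A[X][X], ∀ i,
      mapRingHom (mapRingHom (algebraMap A S)) (G i) = C (C (algebraMap A S s)) * g i := by
  let _ : Algebra A[X] S[X] := Polynomial.algebra _ _
  let _ : Algebra A[X][X] S[X][X] := Polynomial.algebra _ _
  have := Polynomial.isLocalization M S
  have := Polynomial.isLocalization (M.map C) S[X]
  obtain ⟨⟨b, _, ⟨s, hs, rfl⟩, rfl⟩, hb⟩ :=
    IsLocalization.exist_integer_multiples_of_finite ((M.map C).map C) g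
  choose G hG using hb
  refine ⟨s, hs, G, fun i => ?_⟩
  have h := hG i
  rw [Algebra.smul_def] at h
  refine h.trans ?_
  congr 1
  exact (Polynomial.map_C _).trans (congrArg C (Polynomial.map_C _))

lemma exists_annihilator {κ : Type*} [Finite κ] (D : κ → A[X][X])
    (hD : ∀ i, mapRingHom (mapRingHom (algebraMap A S)) (D i) = 0) :
    ∃ s ∈ M, ∀ i, C (C s) * D i = 0 := by
  let _ : Algebra A[X] S[X] := Polynomial.algebra _ _
  let _ : Algebra A[X][X] S[X][X] := Polynomial.algebra _ _
  have := Polynomial.isLocalization M S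
  have := Polynomial.isLocalization (M.map C) S[X]
  have h : ∀ i, ∃ s ∈ M, C (C s) * D i = 0 := by
    intro i
    obtain ⟨⟨_, _, ⟨s, hs, rfl⟩, rfl⟩, hb⟩ :=
      (IsLocalization.map_eq_zero_iff ((M.map C).map C) S[X][X] (D i)).1 (hD i)
    exact ⟨s, hs, hb⟩
  choose s hs hs0 using h
  have := Fintype.ofFinite κ
  refine ⟨∏ i, s i, M.prod_mem fun i _ => hs i, fun i => ?_⟩
  obtain ⟨c, hc⟩ := Finset.dvd_prod_of_mem s (Finset.mem_univ i)
  rw [hc, C_mul, C_mul, mul_right_comm, hs0, zero_mul]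

/-- The substitution `y ↦ a y` on `A[x][y]`; the outer variable is `y`. -/
noncomputable def substY {A : Type*} [CommRing A] (a : A) : A[X][X] →+* A[X][X] :=
  compRingHom (C (C a) * X)

/-- If `D(x, 0) = 0` and `a D = 0` then `D(x, a y) = 0`, as every coefficient of `D(x, a y)` is a
multiple of `a` times a coefficient of `D`. -/
lemma substY_eq_zero (a : A) {D : A[X][X]} (h0 : D.coeff 0 = 0) (h : C (C a) * D = 0) :
    substY a D = 0 := by
  ext1 n
  rw [substY, coe_compRingHom_apply, comp_C_mul_X_coeff, coeff_zero]
  cases n with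
  | zero => simp [h0]
  | succ n =>
    have := congrArg (fun p => p.coeff (n + 1)) h
    simp only [coeff_C_mul, coeff_zero] at this
    rw [pow_succ, mul_comm, mul_assoc, this, mul_zero]

lemma map_substY (a : A) (p : A[X][X]) :
    mapRingHom (mapRingHom (algebraMap A S)) (substY a p) =
      substY (algebraMap A S a) (mapRingHom (mapRingHom (algebraMap A S)) p) := by
  simp [substY, Polynomial.map_comp]

lemma substY_coeff_zero (a : A) (p : A[X][X]) : (substY a p).coeff 0 = p.coeff 0 := by
  simp [substY]

/-- Polynomials `g i` in `x, y` over a localization of `A` whose values at `y = 0` come from `A`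
come themselves from `A` after a substitution `y ↦ s y` with `s ∈ M`, and the lifts may be taken
with prescribed value at `y = 0`. -/
lemma exists_lift {κ : Type*} [Finite κ] (g : κ → S[X][X]) (g₀ : κ → A[X])
    (hg : ∀ i, (g i).coeff 0 = mapRingHom (algebraMap A S) (g₀ i)) :
    ∃ s ∈ M, ∃ G : κ → A[X][X], ∀ i, (G i).coeff 0 = g₀ i ∧
      mapRingHom (mapRingHom (algebraMap A S)) (G i) = substY (algebraMap A S s) (g i) := by
  obtain ⟨s, hs, H, hH⟩ := clear_denoms M S fun i => divX (g i)
  refine ⟨s, hs, fun i => substY s (H i) * X + C (g₀ i), fun i => ⟨by simp, ?_⟩⟩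
  conv_rhs => rw [← divX_mul_X_add (g i), hg]
  rw [map_add, map_mul, map_substY, hH]
  simp [substY]
  ring

end

/-- The homomorphism `A[x] → A[x][y]` sending `p(x)` to `p(x + y)`. -/
noncomputable def shiftXY (A : Type*) [CommRing A] : A[X] →+* A[X][X] :=
  eval₂RingHom (C.comp C) (C X + X)

lemma shiftXY_coeff_zero {A : Type*} [CommRing A] (p : A[X]) : (shiftXY A p).coeff 0 = p := by
  have : (constantCoeff : A[X][X] →+* A[X]).comp (shiftXY A) = RingHom.id _ := by
    ext <;> simp [shiftXY]
  exact RingHom.congr_fun this p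

/-- Murray–von Neumann equivalence of matrices: `E = T T'` and `F = T' T`. For idempotent `E` and
`F` it says that their images are isomorphic modules. -/
def MvN {ι R : Type*} [Fintype ι] [CommRing R] (E F : Matrix ι ι R) : Prop :=
  ∃ T T' : Matrix ι ι R, T * T' = E ∧ T' * T = F

lemma MvN.trans {ι R : Type*} [Fintype ι] [CommRing R] {E F G : Matrix ι ι R}
    (hE : E * E = E) (hG : G * G = G) (h : MvN E F) (h' : MvN F G) : MvN E G := by
  obtain ⟨T, T', rfl, rfl⟩ := h
  obtain ⟨V, V', h1, rfl⟩ := h'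
  refine ⟨T * V, V' * T', ?_, ?_⟩
  · rw [← hE]; simp only [Matrix.mul_assoc]; rw [← Matrix.mul_assoc V, h1]
    simp only [Matrix.mul_assoc]
  · rw [← hG]; simp only [Matrix.mul_assoc]; rw [← Matrix.mul_assoc T', ← h1]
    simp only [Matrix.mul_assoc]

/-- The matrix `E` factors as `E = v u` with `u v` an identity matrix, i.e. `E` is idempotent and its
image is a free module of finite rank. -/
def IdemSplits {ι R : Type*} [Fintype ι] [CommRing R] (E : Matrix ι ι R) : Prop :=
  ∃ (r : ℕ) (v : Matrix ι (Fin r) R) (u : Matrix (Fin r) ι R), v * u = E ∧ u * v = 1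

universe w

section
variable {ι : Type*} [Fintype ι] {A : Type w} [CommRing A]

/-- The ideal of all `s ∈ A` such that `E(x + s y)` and `E(x)` are equivalent idempotent matrices for
all elements `x, y` of all `A`-algebras `B` in the universe of `A`. It is closed under addition because
`E(x + (a + b) y) ~ E(x + b y) ~ E(x)`. -/
def quillenIdeal (E : Matrix ι ι A[X]) (hE : E * E = E) : Ideal A where
  carrier := {s | ∀ (B : Type w) [CommRing B] [Algebra A B] (x y : B),
    MvN (E.map (aeval (x + s • y))) (E.map (aeval x))}
  zero_mem' := by
    intro B _ _ x y
    have h : E.map (aeval x) * E.map (aeval x) = E.map (aeval x) := by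
      rw [← Matrix.map_mul, hE]
    exact ⟨E.map (aeval x), E.map (aeval x), by simpa using h, h⟩
  add_mem' := by
    intro a b ha hb B _ _ x y
    have h : ∀ z : B, E.map (aeval z) * E.map (aeval z) = E.map (aeval z) := fun z => by
      rw [← Matrix.map_mul, hE]
    have := ha B (x + b • y) y
    rw [show x + b • y + a • y = x + (a + b) • y by rw [add_smul]; ring] at this
    exact this.trans (h _) (h _) (hb B x y)
  smul_mem' := by
    intro c a ha B _ _ x y
    have := ha B x (c • y)
    rwa [smul_smul, mul_comm a c] at this

/-- If `E` splits as `v u` over a localization `S` of `A` at `M`, then `M` meets `quillenIdeal E`.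
Over `S`, the matrices `τ = v(x + y) u(x)` and `τ' = v(x) u(x + y)` give an equivalence between
`E(x + y)` and `E(x)`, and both restrict to `E(x)` at `y = 0`. A substitution `y ↦ s y` lifts them
to matrices `T`, `T'` over `A`; the defects `D`, `D'` of the required identities vanish at `y = 0`
and over `S`, so a further substitution `y ↦ t y` kills them. -/
lemma exists_mem_quillenIdeal (E : Matrix ι ι A[X]) (hE : E * E = E) (M : Submonoid A)
    (S : Type*) [CommRing S] [Algebra A S] [IsLocalization M S]
    (h : IdemSplits (E.map (mapRingHom (algebraMap A S)))) :
    ∃ s ∈ M, s ∈ quillenIdeal E hE := by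
  obtain ⟨r, v, u, hvu, huv⟩ := h
  set j := mapRingHom (algebraMap A S) with hj
  have hJs : ∀ p, mapRingHom j (shiftXY A p) = shiftXY S (j p) := by
    have : (mapRingHom j).comp (shiftXY A) = (shiftXY S).comp j := by
      ext <;> simp [shiftXY, hj]
    exact fun p => RingHom.congr_fun this p
  let τ : Matrix ι ι S[X][X] := v.map (shiftXY S) * u.map C
  let τ' : Matrix ι ι S[X][X] := v.map C * u.map (shiftXY S)
  have huv1 : ∀ f : S[X] →+* S[X][X], u.map f * v.map f = 1 := fun f => by
    rw [← Matrix.map_mul, huv, Matrix.map_one _ f.map_zero f.map_one]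
  have hvu1 : ∀ f : S[X] →+* S[X][X], v.map f * u.map f = (E.map j).map f := fun f => by
    rw [← Matrix.map_mul, hvu]
  have hττ' : τ * τ' = (E.map j).map (shiftXY S) := by
    simp only [τ, τ']
    rw [Matrix.mul_assoc, ← Matrix.mul_assoc (u.map C), huv1, Matrix.one_mul, hvu1]
  have hτ'τ : τ' * τ = (E.map j).map C := by
    simp only [τ, τ']
    rw [Matrix.mul_assoc, ← Matrix.mul_assoc (u.map (shiftXY S)), huv1, Matrix.one_mul, hvu1]
  have hc1 : (v.map (shiftXY S)).map (constantCoeff (R := S[X])) = v := by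
    ext1 i k; exact shiftXY_coeff_zero _
  have hc2 : (u.map (shiftXY S)).map (constantCoeff (R := S[X])) = u := by
    ext1 i k; exact shiftXY_coeff_zero _
  have hc3 : (v.map C).map (constantCoeff (R := S[X])) = v := by
    ext1 i k; simp
  have hc4 : (u.map C).map (constantCoeff (R := S[X])) = u := by
    ext1 i k; simp
  have hτ0 : ∀ i k, (τ i k).coeff 0 = j (E i k) := by
    intro i k
    have : τ.map (constantCoeff (R := S[X])) = E.map j := by
      rw [Matrix.map_mul, hc1, hc4, hvu]
    exact congrFun (congrFun this i) k
  have hτ'0 : ∀ i k, (τ' i k).coeff 0 = j (E i k) := by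
    intro i k
    have : τ'.map (constantCoeff (R := S[X])) = E.map j := by
      rw [Matrix.map_mul, hc3, hc2, hvu]
    exact congrFun (congrFun this i) k
  obtain ⟨s, hs, G, hG⟩ := exists_lift M S
    (Sum.elim (fun a : ι × ι => τ a.1 a.2) (fun a : ι × ι => τ' a.1 a.2))
    (Sum.elim (fun a : ι × ι => E a.1 a.2) (fun a : ι × ι => E a.1 a.2))
    (by rintro (a | a); exacts [hτ0 _ _, hτ'0 _ _])
  let T : Matrix ι ι A[X][X] := Matrix.of fun i k => G (Sum.inl (i, k))
  let T' : Matrix ι ι A[X][X] := Matrix.of fun i k => G (Sum.inr (i, k))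
  have hT : T.map (mapRingHom j) = τ.map (substY (algebraMap A S s)) := by
    ext1 i k; exact (hG (Sum.inl (i, k))).2
  have hT' : T'.map (mapRingHom j) = τ'.map (substY (algebraMap A S s)) := by
    ext1 i k; exact (hG (Sum.inr (i, k))).2
  have hT0 : T.map (constantCoeff (R := A[X])) = E := by
    ext1 i k; exact (hG (Sum.inl (i, k))).1
  have hT'0 : T'.map (constantCoeff (R := A[X])) = E := by
    ext1 i k; exact (hG (Sum.inr (i, k))).1
  let D : Matrix ι ι A[X][X] := T * T' - (E.map (shiftXY A)).map (substY s)
  let D' : Matrix ι ι A[X][X] := T' * T - E.map C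
  have hD : D.map (mapRingHom j) = 0 := by
    rw [Matrix.map_sub _ (map_sub _), Matrix.map_mul, hT, hT', ← Matrix.map_mul, hττ', sub_eq_zero]
    ext1 i k
    simp only [Matrix.map_apply]
    rw [hj, map_substY, ← hj, hJs]
  have hD' : D'.map (mapRingHom j) = 0 := by
    rw [Matrix.map_sub _ (map_sub _), Matrix.map_mul, hT, hT', ← Matrix.map_mul, hτ'τ, sub_eq_zero]
    ext1 i k
    simp [substY]
  have hD0 : D.map (constantCoeff (R := A[X])) = 0 := by
    rw [Matrix.map_sub _ (map_sub _), Matrix.map_mul, hT0, hT'0, hE, sub_eq_zero]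
    ext1 i k
    exact ((substY_coeff_zero s _).trans (shiftXY_coeff_zero _)).symm
  have hD'0 : D'.map (constantCoeff (R := A[X])) = 0 := by
    rw [Matrix.map_sub _ (map_sub _), Matrix.map_mul, hT0, hT'0, hE, sub_eq_zero]
    ext1 i k
    simp
  obtain ⟨t, ht, hann⟩ := exists_annihilator M S
    (Sum.elim (fun a : ι × ι => D a.1 a.2) (fun a : ι × ι => D' a.1 a.2))
    (by
      rintro (a | a)
      exacts [congrFun (congrFun hD a.1) a.2, congrFun (congrFun hD' a.1) a.2])
  have hDt : D.map (substY t) = 0 := by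
    ext1 i k
    exact substY_eq_zero t (congrFun (congrFun hD0 i) k) (hann (Sum.inl (i, k)))
  have hD't : D'.map (substY t) = 0 := by
    ext1 i k
    exact substY_eq_zero t (congrFun (congrFun hD'0 i) k) (hann (Sum.inr (i, k)))
  rw [Matrix.map_sub _ (map_sub _), Matrix.map_mul, sub_eq_zero] at hDt hD't
  refine ⟨s * t, M.mul_mem hs ht, fun B _ _ x y => ?_⟩
  let ω : A[X][X] →+* B := eval₂RingHom (aeval x : A[X] →ₐ[A] B).toRingHom y
  have hω1 : ∀ p, ω (substY t (substY s (shiftXY A p))) = aeval (x + (s * t) • y) p := by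
    have : (ω.comp (substY t)).comp ((substY s).comp (shiftXY A)) =
        (aeval (x + (s * t) • y) : A[X] →ₐ[A] B).toRingHom := by
      ext <;> simp [ω, substY, shiftXY, Algebra.smul_def, mul_assoc]
    exact fun p => RingHom.congr_fun this p
  have hω2 : ∀ p, ω (substY t (C p)) = aeval x p := by
    intro p; simp [ω, substY]
  refine ⟨(T.map (substY t)).map ω, (T'.map (substY t)).map ω, ?_, ?_⟩
  · rw [← Matrix.map_mul, hDt]
    ext1 i k; exact hω1 _
  · rw [← Matrix.map_mul, hD't]
    ext1 i k; exact hω2 _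

/-- Quillen patching: if the idempotent matrix `E` over `A[X]` splits over `A_m[X]` for every maximal
ideal `m` of `A`, then `E` is equivalent to its value at `X = 0`. Indeed `quillenIdeal E` lies in
no maximal ideal, so it contains `1`, and one takes `x = 0`, `y = X`. -/
theorem quillen_patching (E : Matrix ι ι A[X]) (hE : E * E = E)
    (h : ∀ (m : Ideal A) [m.IsMaximal],
      IdemSplits (E.map (mapRingHom (algebraMap A (Localization.AtPrime m))))) :
    MvN E ((E.map (evalRingHom 0)).map C) := by
  have htop : quillenIdeal E hE = ⊤ := by
    by_contra hne
    obtain ⟨m, hm, hle⟩ := Ideal.exists_le_maximal _ hne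
    obtain ⟨s, hs, hs'⟩ := exists_mem_quillenIdeal E hE m.primeCompl (Localization.AtPrime m) (h m)
    exact hs (hle hs')
  have h1 : (1 : A) ∈ quillenIdeal E hE := htop ▸ trivial
  have := h1 A[X] 0 X
  convert this using 1
  · ext1 i k; simp
  · ext1 i k
    simp only [Matrix.map_apply]
    rw [← Polynomial.coeff_zero_eq_aeval_zero']
    simp [coeff_zero_eq_eval_zero]
end

/-! ### Idempotent matrices and projective modules -/

lemma IdemSplits.map {ι R S : Type*} [Fintype ι] [CommRing R] [CommRing S] {E : Matrix ι ι R}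
    (h : IdemSplits E) (f : R →+* S) : IdemSplits (E.map f) := by
  obtain ⟨r, v, u, rfl, huv⟩ := h
  refine ⟨r, v.map f, u.map f, by rw [Matrix.map_mul], ?_⟩
  rw [← Matrix.map_mul, huv, Matrix.map_one _ f.map_zero f.map_one]

lemma IdemSplits.of_mvN {ι R : Type*} [Fintype ι] [CommRing R] {E F : Matrix ι ι R}
    (hE : E * E = E) (hEF : MvN E F) (h : IdemSplits F) : IdemSplits E := by
  obtain ⟨T, T', rfl, rfl⟩ := hEF
  obtain ⟨r, v, u, hvu, huv⟩ := h
  refine ⟨r, T * v, u * T', ?_, ?_⟩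
  · calc T * v * (u * T') = T * (v * u) * T' := by simp only [Matrix.mul_assoc]
      _ = T * T' * (T * T') := by rw [hvu]; simp only [Matrix.mul_assoc]
      _ = T * T' := hE
  · calc u * T' * (T * v) = u * (T' * T) * v := by simp only [Matrix.mul_assoc]
      _ = (u * v) * (u * v) := by rw [← hvu]; simp only [Matrix.mul_assoc]
      _ = 1 := by rw [huv, Matrix.one_mul]

section
variable {ι R : Type*} [Fintype ι] [CommRing R]

lemma projective_range {E : Matrix ι ι R} (hE : E * E = E) :
    Module.Projective R (LinearMap.range E.mulVecLin) := by
  refine Module.Projective.of_split (LinearMap.range E.mulVecLin).subtype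
    E.mulVecLin.rangeRestrict ?_
  ext1 ⟨_, x, rfl⟩
  apply Subtype.ext
  simp [hE]

lemma idemSplits_of_free [DecidableEq ι] {E : Matrix ι ι R} (hE : E * E = E)
    (h : Module.Free R (LinearMap.range E.mulVecLin)) : IdemSplits E := by
  rcases subsingleton_or_nontrivial R with hR | hR
  · exact ⟨0, 0, 0, Subsingleton.elim _ _, Subsingleton.elim _ _⟩
  let b := Module.finBasis R (LinearMap.range E.mulVecLin)
  let e := b.equivFun
  let v := (LinearMap.range E.mulVecLin).subtype ∘ₗ e.symm.toLinearMap
  let u := e.toLinearMap ∘ₗ E.mulVecLin.rangeRestrict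
  refine ⟨_, LinearMap.toMatrix' v, LinearMap.toMatrix' u, ?_, ?_⟩
  · rw [← LinearMap.toMatrix'_comp]
    apply Matrix.toLin'.injective
    rw [Matrix.toLin'_toMatrix']
    refine LinearMap.ext fun x => ?_
    simp [u, v]
  · rw [← LinearMap.toMatrix'_comp, ← LinearMap.toMatrix'_id]
    congr 1
    refine LinearMap.ext fun x => ?_
    have : ∀ y : LinearMap.range E.mulVecLin, E.mulVecLin.rangeRestrict y = y := by
      rintro ⟨_, x, rfl⟩
      apply Subtype.ext
      simp [hE]
    simp only [u, v, LinearMap.comp_apply]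
    simp [this]

/-- A finitely generated projective module is the image of an idempotent matrix, so it is free once
all idempotent matrices split. -/
lemma free_of_idemSplits (h : ∀ (N : ℕ) (E : Matrix (Fin N) (Fin N) R), E * E = E → IdemSplits E)
    (P : Type*) [AddCommGroup P] [Module R P] [Module.Finite R P] [Module.Projective R P] :
    Module.Free R P := by
  obtain ⟨N, π, s, -, hs, hπs⟩ := Module.Finite.exists_comp_eq_id_of_projective R P
  have hπs' : ∀ w, π (s w) = w := LinearMap.congr_fun hπs
  obtain ⟨r, v, u, hvu, huv⟩ := h N (LinearMap.toMatrix' (s ∘ₗ π)) (by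
    rw [← LinearMap.toMatrix'_comp]
    congr 1
    exact LinearMap.ext fun x => by simp [hπs'])
  have hvu' : ∀ x, v.mulVec (u.mulVec x) = s (π x) := by
    intro x; rw [Matrix.mulVec_mulVec, hvu, LinearMap.toMatrix'_mulVec]; rfl
  have huv' : ∀ x, u.mulVec (v.mulVec x) = x := by
    intro x; rw [Matrix.mulVec_mulVec, huv, Matrix.one_mulVec]
  exact Module.Free.of_equiv (M := Fin r → R)
    { π ∘ₗ v.mulVecLin with
      invFun := fun w => u.mulVec (s w)
      left_inv := fun x => by
        show u.mulVec (s (π (v.mulVec x))) = x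
        rw [← hvu', huv', huv']
      right_inv := fun w => by
        show π (v.mulVec (u.mulVec (s w))) = w
        rw [hvu', hπs', hπs'] }
end

/-- Horrocks' theorem for an idempotent matrix over `A[X]`, with `A` local: a splitting up to a monic
factor `f` forces a splitting. -/
lemma horrocks_matrix {ι A : Type*} [Fintype ι] [DecidableEq ι] [CommRing A] [IsLocalRing A]
    {r : ℕ} {E : Matrix ι ι A[X]} (hE : E * E = E) {f : A[X]} (hf : f.Monic)
    (v : Matrix ι (Fin r) A[X]) (u : Matrix (Fin r) ι A[X]) (hvu : v * u = f • E)
    (huv : u * v = f • (1 : Matrix (Fin r) (Fin r) A[X])) : IdemSplits E := by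
  have hEv : E * v = v := by
    have h1 : f • (E * v) = f • v := by
      rw [← Matrix.smul_mul, ← hvu, Matrix.mul_assoc, huv, Matrix.mul_smul, Matrix.mul_one]
    ext1 i k
    exact hf.isRegular.left (congrFun (congrFun h1 i) k)
  have := projective_range hE
  apply idemSplits_of_free hE
  refine horrocks r _ hf (u.mulVecLin ∘ₗ (LinearMap.range E.mulVecLin).subtype)
    (v.mulVecLin.codRestrict _ fun x => ⟨v.mulVec x, by simp [hEv]⟩) ?_ ?_
  · intro x
    show u.mulVec (v.mulVec x) = f • x
    rw [Matrix.mulVec_mulVec, huv, Matrix.smul_mulVec, Matrix.one_mulVec]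
  · rintro ⟨_, x, rfl⟩
    apply Subtype.ext
    show v.mulVec (u.mulVec (E.mulVec x)) = f • E.mulVec x
    rw [Matrix.mulVec_mulVec, Matrix.mulVec_mulVec, hvu, Matrix.smul_mul, hE,
      Matrix.smul_mulVec]

/-! ### Induction on the number of variables -/

/-- A finite family of polynomials with coefficients in `k(t)` has a common denominator that is a
monic polynomial in `k[t]`. -/
lemma exists_monic_clear {σ k : Type*} [Field k] {κ : Type*} [Finite κ]
    (g : κ → MvPolynomial σ (FractionRing k[X])) :
    ∃ b : k[X], b.Monic ∧ ∃ G : κ → MvPolynomial σ k[X], ∀ i,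
      MvPolynomial.map (algebraMap k[X] (FractionRing k[X])) (G i) =
        MvPolynomial.C (algebraMap _ _ b) * g i := by
  let _ : Algebra (MvPolynomial σ k[X]) (MvPolynomial σ (FractionRing k[X])) :=
    MvPolynomial.algebraMvPolynomial
  have := MvPolynomial.isLocalization (σ := σ) (nonZeroDivisors k[X]) (FractionRing k[X])
  obtain ⟨⟨_, b, hb, rfl⟩, hG⟩ := IsLocalization.exist_integer_multiples_of_finite
    ((nonZeroDivisors k[X]).map (MvPolynomial.C (σ := σ))) g
  choose G hG using hG
  have hb0 : b ≠ 0 := nonZeroDivisors.ne_zero hb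
  refine ⟨b * C b.leadingCoeff⁻¹, monic_mul_leadingCoeff_inv hb0,
    fun i => MvPolynomial.C (C b.leadingCoeff⁻¹) * G i, fun i => ?_⟩
  have h := hG i
  rw [Algebra.smul_def] at h
  have h2 : MvPolynomial.map (algebraMap k[X] (FractionRing k[X])) (G i) =
      MvPolynomial.C (algebraMap _ _ b) * g i := by
    refine h.trans ?_
    congr 1
    exact MvPolynomial.map_C _ _
  rw [map_mul, h2, MvPolynomial.map_C, map_mul, map_mul]
  ring

/-- Induction on the number of variables, for all fields in the universe at once, because the
inductive step applies the hypothesis both to `k` and to `k(t)`. -/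
theorem idemSplits_mvPolynomial (n : ℕ) : ∀ (k : Type w) [Field k] (N : ℕ)
    (E : Matrix (Fin N) (Fin N) (MvPolynomial (Fin n) k)), E * E = E → IdemSplits E := by
  induction n with
  | zero =>
    intro k _ N E hE
    let e : MvPolynomial (Fin 0) k ≃+* k := MvPolynomial.isEmptyRingEquiv k (Fin 0)
    have h : IdemSplits (E.map e.toRingHom) := by
      refine idemSplits_of_free ?_ inferInstance
      rw [← Matrix.map_mul, hE]
    have := h.map e.symm.toRingHom
    rw [Matrix.map_map] at this
    convert this
    ext1 i j; simp
  | succ n ih =>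
    intro k _ N E hE
    let e : MvPolynomial (Fin (n + 1)) k ≃+* (MvPolynomial (Fin n) k)[X] :=
      (MvPolynomial.finSuccEquiv k n).toRingEquiv
    suffices h : ∀ F : Matrix (Fin N) (Fin N) (MvPolynomial (Fin n) k)[X],
        F * F = F → IdemSplits F by
      have := (h (E.map e.toRingHom) (by rw [← Matrix.map_mul, hE])).map e.symm.toRingHom
      rw [Matrix.map_map] at this
      convert this
      ext1 i j; simp
    intro F hF
    let θ : (MvPolynomial (Fin n) k)[X] ≃+* MvPolynomial (Fin n) k[X] :=
      ((MvPolynomial.optionEquivLeft k (Fin n)).symm.trans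
        (MvPolynomial.optionEquivRight k (Fin n))).toRingEquiv
    have hθ : ∀ b : k[X], θ (b.map MvPolynomial.C) = MvPolynomial.C b := by
      have : θ.toRingHom.comp (mapRingHom MvPolynomial.C) = MvPolynomial.C := by
        ext1
        · ext1 a; simp [θ]
        · simp [θ]
      exact fun b => RingHom.congr_fun this b
    -- `A[t] = k[t][x₁, …, xₙ]` embeds in `k(t)[x₁, …, xₙ]`, where the induction hypothesis applies.
    let Φ : (MvPolynomial (Fin n) k)[X] →+* MvPolynomial (Fin n) (FractionRing k[X]) :=
      (MvPolynomial.map (algebraMap k[X] (FractionRing k[X]))).comp θ.toRingHom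
    have hΦ : Function.Injective Φ :=
      (MvPolynomial.map_injective _ (IsFractionRing.injective _ _)).comp θ.injective
    have hΦb : ∀ b : k[X], Φ (b.map MvPolynomial.C) = MvPolynomial.C (algebraMap _ _ b) := by
      intro b; simp [Φ, hθ]
    obtain ⟨r, v, u, hvu, huv⟩ := ih (FractionRing k[X]) N (F.map Φ)
      (by rw [← Matrix.map_mul, hF])
    obtain ⟨b, hb, G, hG⟩ := exists_monic_clear
      (Sum.elim (fun a : Fin N × Fin r => v a.1 a.2) (fun a : Fin r × Fin N => u a.1 a.2))
    let v' : Matrix (Fin N) (Fin r) (MvPolynomial (Fin n) k)[X] :=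
      Matrix.of fun i j => θ.symm (G (Sum.inl (i, j)))
    let u' : Matrix (Fin r) (Fin N) (MvPolynomial (Fin n) k)[X] :=
      Matrix.of fun i j => θ.symm (G (Sum.inr (i, j)))
    have hv' : v'.map Φ = Φ (b.map MvPolynomial.C) • v := by
      ext1 i j
      rw [hΦb]
      simpa [v', Φ] using hG (Sum.inl (i, j))
    have hu' : u'.map Φ = Φ (b.map MvPolynomial.C) • u := by
      ext1 i j
      rw [hΦb]
      simpa [u', Φ] using hG (Sum.inr (i, j))
    set f : (MvPolynomial (Fin n) k)[X] := b.map MvPolynomial.C * b.map MvPolynomial.C with hf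
    have hfm : f.Monic := (hb.map _).mul (hb.map _)
    have hvu' : v' * u' = f • F := by
      apply Matrix.map_injective hΦ
      beta_reduce
      rw [Matrix.map_mul, hv', hu', Matrix.smul_mul, Matrix.mul_smul, hvu, smul_smul]
      ext1 i j; simp [hf]
    have huv' : u' * v' = f • 1 := by
      apply Matrix.map_injective hΦ
      beta_reduce
      rw [Matrix.map_mul, hv', hu', Matrix.smul_mul, Matrix.mul_smul, huv, smul_smul]
      ext1 i j
      by_cases h : i = j <;> simp [hf, h]
    have hpatch := quillen_patching F hF fun m _ => by
      let j := mapRingHom (algebraMap (MvPolynomial (Fin n) k) (Localization.AtPrime m))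
      refine horrocks_matrix (f := j f) (by rw [← Matrix.map_mul, hF]) (hfm.map _)
        (v'.map j) (u'.map j) ?_ ?_
      · rw [← Matrix.map_mul, hvu']; ext1; simp [j]
      · rw [← Matrix.map_mul, huv']; ext1; simp [j, Matrix.one_apply, apply_ite (Polynomial.map _)]
    exact IdemSplits.of_mvN hF hpatch
      ((ih k N (F.map (evalRingHom 0)) (by rw [← Matrix.map_mul, hF])).map C)

end QuillenSuslin

/-- Serre's Conjecture (Quillen–Suslin theorem): every finitely generated projective
module over a polynomial ring `k[x₁, …, xₙ]` over a field `k` is free. -/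
theorem quillen_suslin
    (k : Type*) [Field k] (n : ℕ)
    (P : Type*) [AddCommGroup P] [Module (MvPolynomial (Fin n) k) P]
    [Module.Finite (MvPolynomial (Fin n) k) P]
    [Module.Projective (MvPolynomial (Fin n) k) P] :
    Module.Free (MvPolynomial (Fin n) k) P := by
  exact QuillenSuslin.free_of_idemSplits (QuillenSuslin.idemSplits_mvPolynomial n k) P
end

section
/- Let k be a field, d a natural number, R = k[x₁, …, x_d] the polynomial ring in d variables, and P a finitely generated projective R-module whose rank at the zero prime ideal (i.e., the dimension of P ⊗_R Frac(R) as a vector space over the field of fractions Frac(R)) is at least d + 2. Then P is a free R-module. (The partial result toward Serre's Conjecture obtained from homotopy invariance and the stability theorems.) -/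
/-!
Write `R = k[x₁, …, x_d]`. The proof shows that `P` is stably free and then cancels the free
complement.

*Stable freeness.* Every finite `R`-module has a finite free resolution (`AllFFR.mvPolynomial`),
and a projective module with such a resolution is stably free (`FFR.isStablyFree`). The resolution
comes by induction on `d`: for a Noetherian ring `A`, a finite `A[X]`-module `M` is filtered by the
finite `A`-submodules `Mₙ` spanned by `Xⁱ` times generators, `i < n`. For large `n`, multiplication
by `X` is injective on the graded pieces, which makes
`0 → A[X] ⊗ Mₙ → A[X] ⊗ Mₙ₊₁ → M → 0`, with first map `X ⊗ m - 1 ⊗ X m`, exact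
(`exists_char_resolution`). Finite free resolutions of `Mₙ` and `Mₙ₊₁` over `A` then give one
of `M` (`FFR.coker`).

*Cancellation.* As `R` is Noetherian of dimension `d`, its stable rank is at most `d + 1`
(`stable_range`), so every unimodular row of length at least `d + 2` is equivalent to a coordinate
projection and has free kernel (`cancel_one`). Removing the free summands one at a time from
`P × Rᵃ ≃ Rʳ⁺ᵃ`, where `r` is the rank of `P`, gives `P ≃ Rʳ`; here `r > d` is enough.
-/

open TensorProduct
open Polynomial

universe u

/-! ### Stable range and cancellation -/

/-- The height argument behind the stable range bound: adding suitable multiples of `b` to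
`a 0, …, a (n - 1)` makes every prime that contains all of them but not `b` have height at
least `n`. Each step uses prime avoidance among the finitely many minimal primes over the
elements already chosen. -/
theorem exists_heights {R : Type*} [CommRing R] [IsNoetherianRing R] (b : R) (a : ℕ → R) (n : ℕ) :
    ∃ c : ℕ → R, ∀ p : Ideal R, p.IsPrime → (∀ i < n, a i + c i * b ∈ p) → b ∉ p →
      (n : ℕ∞) ≤ p.height := by
  classical
  induction n with
  | zero => exact ⟨0, by simp⟩
  | succ n ih =>
    obtain ⟨c, hc⟩ := ih
    set J : Ideal R := Ideal.span {r | ∃ i < n, r = a i + c i * b}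
    have hfin : J.minimalPrimes.Finite := Ideal.finite_minimalPrimes_of_isNoetherianRing R J
    -- The correction `e` must lie in the minimal primes that avoid `a n` and outside those that
    -- contain it; then `a n + e * b` lies in none of those not containing `b`.
    let S := hfin.toFinset
    let S₁ := S.filter (fun q => a n ∉ q)
    let S₂ := S.filter (fun q => a n ∈ q)
    have hmemS : ∀ q, q ∈ S ↔ q ∈ J.minimalPrimes := fun q => hfin.mem_toFinset
    have hprime : ∀ q ∈ S, q.IsPrime := fun q hq => ((hmemS q).1 hq).1.1
    obtain ⟨e, he₁, he₂⟩ : ∃ e : R, (∀ q ∈ S₁, e ∈ q) ∧ ∀ q ∈ S₂, e ∉ q := by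
      by_contra! hcon
      have hsub : ((S₁.inf id : Ideal R) : Set R) ⊆ ⋃ q ∈ (S₂ : Set (Ideal R)), (q : Set R) := by
        intro e he
        obtain ⟨q, hq, heq⟩ := hcon e (fun q hq => (Finset.inf_le hq : S₁.inf id ≤ q) he)
        simp only [Set.mem_iUnion]
        exact ⟨q, by simpa using hq, heq⟩
      rw [Ideal.subset_union_prime (f := fun q => q) ⊤ ⊤
        (fun q hq _ _ => hprime q (Finset.mem_filter.1 hq).1)] at hsub
      obtain ⟨q, hq, hle⟩ := hsub
      have hqS := (Finset.mem_filter.1 hq).1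
      obtain ⟨q', hq', hle'⟩ := ((hprime q hqS).inf_le').1 hle
      have hq'S := (Finset.mem_filter.1 hq').1
      have h1 : q ≤ q' := ((hmemS q).1 hqS).2 ((hmemS q').1 hq'S).1 hle'
      exact (Finset.mem_filter.1 hq').2 (h1 (Finset.mem_filter.1 hq).2)
    refine ⟨Function.update c n e, fun p hp hmem hb => ?_⟩
    have hold : ∀ i < n, a i + c i * b ∈ p := fun i hi => by
      have := hmem i (by omega)
      rwa [Function.update_of_ne (by omega)] at this
    have hnew : a n + e * b ∈ p := by simpa using hmem n (by omega)
    have hJp : J ≤ p := Ideal.span_le.2 (by rintro _ ⟨i, hi, rfl⟩; exact hold i hi)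
    obtain ⟨q, hq, hqp⟩ := Ideal.exists_minimalPrimes_le hJp
    have hqpr : q.IsPrime := hq.1.1
    have hbq : b ∉ q := fun h => hb (hqp h)
    have hht := hc q hqpr (fun i hi => hq.1.2 (Ideal.subset_span ⟨i, hi, rfl⟩)) hbq
    have hne : q < p := by
      refine lt_of_le_of_ne hqp ?_
      rintro rfl
      by_cases han : a n ∈ q
      · have h2 : e * b ∈ q := by simpa using q.sub_mem hnew han
        exact (hqpr.mem_or_mem h2).elim
          (he₂ q (Finset.mem_filter.2 ⟨(hmemS q).2 hq, han⟩)) hbq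
      · have h2 : e ∈ q := he₁ q (Finset.mem_filter.2 ⟨(hmemS q).2 hq, han⟩)
        exact han (by simpa using q.sub_mem hnew (q.mul_mem_right b h2))
    have hlt : q.height + 1 ≤ p.height :=
      Ideal.height_add_one_le_of_lt_of_isPrime hne
    push_cast
    exact (add_le_add_left hht 1).trans hlt

/-- Bass: a Noetherian ring of Krull dimension `< n` has stable rank at most `n`. -/
theorem stable_range {R : Type*} [CommRing R] [IsNoetherianRing R] {n : ℕ}
    (hdim : ringKrullDim R < n) (a : Fin n → R) (b : R)
    (h : Ideal.span (Set.range a ∪ {b}) = ⊤) :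
    ∃ c : Fin n → R, Ideal.span (Set.range fun i => a i + c i * b) = ⊤ := by
  obtain ⟨c, hc⟩ := exists_heights b (fun i => if h : i < n then a ⟨i, h⟩ else 0) n
  refine ⟨fun i => c i, ?_⟩
  by_contra hne
  obtain ⟨p, hp, hle⟩ := Ideal.exists_le_maximal _ hne
  have hmem : ∀ i : Fin n, a i + c i * b ∈ p := fun i => hle (Ideal.subset_span ⟨i, rfl⟩)
  by_cases hb : b ∈ p
  · refine hp.ne_top (top_le_iff.1 (h ▸ Ideal.span_le.2 ?_))
    rintro _ (⟨i, rfl⟩ | rfl)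
    · simpa using p.sub_mem (hmem i) (p.mul_mem_left (c i) hb)
    · exact hb
  · have h1 := hc p hp.isPrime (fun i hi => by simpa [hi] using hmem ⟨i, hi⟩) hb
    have h2 : (p.height : WithBot ℕ∞) ≤ ringKrullDim R :=
      Ideal.height_le_ringKrullDim_of_ne_top hp.ne_top
    have h3 : ((n : ℕ∞) : WithBot ℕ∞) ≤ p.height := by exact_mod_cast h1
    exact absurd (h3.trans h2) (not_le.2 hdim)

/-- Cancellation of one free summand. The projection `Q × R → R` is a unimodular row `f` of length
`n + 1` with kernel `Q`; by the stable range bound it becomes equivalent to the last coordinate,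
whose kernel is free of rank `n`. -/
theorem cancel_one {R : Type*} [CommRing R] [IsNoetherianRing R] {n : ℕ}
    (hdim : ringKrullDim R < n) {Q : Type*} [AddCommGroup Q] [Module R Q]
    (φ : (Q × R) ≃ₗ[R] ((Fin n → R) × R)) : Nonempty (Q ≃ₗ[R] (Fin n → R)) := by
  classical
  let f : ((Fin n → R) × R) →ₗ[R] R := LinearMap.snd R Q R ∘ₗ φ.symm.toLinearMap
  let g : (Fin n → R) →ₗ[R] R := f ∘ₗ LinearMap.inl R _ _
  let b : R := f (0, 1)
  have hf : ∀ x t, f (x, t) = g x + t * b := fun x t => by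
    have : ((x, t) : (Fin n → R) × R) = (x, 0) + t • (0, 1) := by simp
    rw [this, map_add, map_smul]; rfl
  have hlin : ∀ (h : (Fin n → R) →ₗ[R] R) x, h x = ∑ i, x i * h (Pi.single i 1) := fun h x => by
    conv_lhs => rw [pi_eq_sum_univ' x]
    simp [map_sum]
  obtain ⟨⟨x₀, t₀⟩, hx₀⟩ : ∃ z, f z = 1 := ⟨φ (0, 1), by simp [f]⟩
  rw [hf] at hx₀
  obtain ⟨c, hc⟩ := stable_range hdim (fun i => g (Pi.single i 1)) b (by
    have key : g x₀ + t₀ * b ∈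
        Ideal.span (Set.range (fun i => g (Pi.single i 1)) ∪ {b}) := by
      rw [hlin g]
      exact add_mem
        (sum_mem fun i _ => Ideal.mul_mem_left _ _ (Ideal.subset_span (Or.inl ⟨i, rfl⟩)))
        (Ideal.mul_mem_left _ _ (Ideal.subset_span (Or.inr rfl)))
    rw [hx₀] at key
    exact (Ideal.eq_top_iff_one _).2 key)
  let γ : (Fin n → R) →ₗ[R] R := Fintype.linearCombination R c
  have hγ : ∀ i, γ (Pi.single i 1) = c i := fun i => by
    simp [γ]
  let g' : (Fin n → R) →ₗ[R] R := g + b • γ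
  obtain ⟨y, hy⟩ : ∃ y, g' y = 1 := by
    have h1 : (1 : R) ∈ LinearMap.range g' := by
      have : Ideal.span (Set.range fun i => g (Pi.single i 1) + c i * b) ≤ LinearMap.range g' := by
        refine Ideal.span_le.2 ?_
        rintro _ ⟨i, rfl⟩
        exact ⟨Pi.single i 1, by simp [g', hγ, mul_comm]⟩
      exact this (hc ▸ Submodule.mem_top)
    exact h1
  -- `θ` will be an isomorphism onto the kernel of `f`: after the shear by `γ` and the shear along
  -- `y`, the row `f` reads `(x, t) ↦ g' x + t`, whose kernel is the graph of `-g'`.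
  let σ : (Fin n → R) →ₗ[R] (Fin n → R) := LinearMap.id - ((1 - b) • g').smulRight y
  let θ : (Fin n → R) →ₗ[R] (Fin n → R) × R := σ.prod (γ ∘ₗ σ - g')
  have hσ : ∀ x, σ x = x - ((1 - b) * g' x) • y := fun x => by simp [σ]
  have hg' : ∀ x, g' x = g x + b * γ x := fun x => by simp [g']
  have hfθ : ∀ x, f (θ x) = 0 := fun x => by
    have h2 : g' (σ x) = b * g' x := by rw [hσ, map_sub, map_smul, hy, smul_eq_mul]; ring
    rw [hg' (σ x)] at h2
    simp only [θ, LinearMap.prod_apply, Function.prod_apply]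
    rw [hf]
    simp only [LinearMap.sub_apply, LinearMap.comp_apply]
    linear_combination h2
  let ψ : (Fin n → R) →ₗ[R] Q := LinearMap.fst R Q R ∘ₗ φ.symm.toLinearMap ∘ₗ θ
  have hψ : ∀ x, φ.symm (θ x) = (ψ x, 0) := fun x => Prod.ext rfl (hfθ x)
  refine ⟨(LinearEquiv.ofBijective ψ ⟨?_, ?_⟩).symm⟩
  · rw [injective_iff_map_eq_zero]
    intro x hx
    have h1 := hψ x
    rw [hx] at h1
    have h2 : θ x = 0 := φ.symm.map_eq_zero_iff.1 (h1.trans rfl)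
    have h3 : σ x = 0 := congrArg Prod.fst h2
    have h4 : γ (σ x) - g' x = 0 := congrArg Prod.snd h2
    rw [h3, map_zero, zero_sub, neg_eq_zero] at h4
    rw [hσ, h4] at h3
    simpa using h3
  · intro q
    obtain ⟨⟨x, t⟩, hxt⟩ : ∃ z, φ (q, 0) = z := ⟨_, rfl⟩
    have h1 : g x + t * b = 0 := by rw [← hf, ← hxt]; simp [f]
    -- Undoing the two shears on `(x, t)` gives the preimage under `θ`.
    let s := γ x - t
    have hs : g' x = b * s := by rw [hg']; linear_combination h1
    refine ⟨x + ((1 - b) * s) • y, ?_⟩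
    have h2 : g' (x + ((1 - b) * s) • y) = s := by
      rw [map_add, map_smul, hy, hs, smul_eq_mul]; ring
    have h3 : σ (x + ((1 - b) * s) • y) = x := by rw [hσ, h2]; simp
    have h4 : θ (x + ((1 - b) * s) • y) = (x, t) := by
      refine Prod.ext h3 ?_
      change γ (σ (x + ((1 - b) * s) • y)) - g' (x + ((1 - b) * s) • y) = t
      rw [h3, h2]; simp [s]
    have h5 := hψ (x + ((1 - b) * s) • y)
    rw [h4, ← hxt] at h5
    simpa using (congrArg Prod.fst h5).symm

theorem cancel_many {R : Type*} [CommRing R] [IsNoetherianRing R] {r : ℕ}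
    (hdim : ringKrullDim R < r) {P : Type*} [AddCommGroup P] [Module R P] (a : ℕ)
    (φ : (P × (Fin a → R)) ≃ₗ[R] (Fin (r + a) → R)) : Nonempty (P ≃ₗ[R] (Fin r → R)) := by
  induction a with
  | zero => exact ⟨(LinearEquiv.prodUnique (R := R) (M := P) (M₂ := Fin 0 → R)).symm.trans φ⟩
  | succ a ih =>
    let split : ∀ m, ((Fin m → R) × R) ≃ₗ[R] (Fin (m + 1) → R) := fun m =>
      (LinearEquiv.prodComm R _ _).trans (Fin.consLinearEquiv R (fun _ => R))
    obtain ⟨e⟩ := cancel_one (n := r + a) (hdim.trans_le (by exact_mod_cast Nat.le_add_right r a))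
      ((LinearEquiv.prodAssoc R P (Fin a → R) R).trans
        (((LinearEquiv.refl R P).prodCongr (split a)).trans (φ.trans (split (r + a)).symm)))
    exact ih e

/-! ### Finite free resolutions -/

theorem nonempty_prod_equiv_of_exact {R A B C : Type*} [CommRing R] [AddCommGroup A] [Module R A]
    [AddCommGroup B] [Module R B] [AddCommGroup C] [Module R C] [Module.Projective R C]
    (i : A →ₗ[R] B) (p : B →ₗ[R] C) (hi : Function.Injective i)
    (hip : Function.Exact i p) (hp : Function.Surjective p) : Nonempty ((A × C) ≃ₗ[R] B) := by
  obtain ⟨s, hs⟩ := Module.projective_lifting_property p LinearMap.id hp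
  have hps : ∀ c, p (s c) = c := fun c => LinearMap.congr_fun hs c
  have hpi : ∀ a, p (i a) = 0 := fun a => hip.apply_apply_eq_zero a
  refine ⟨LinearEquiv.ofBijective (i.coprod s) ⟨?_, ?_⟩⟩
  · rw [injective_iff_map_eq_zero]
    rintro ⟨a, c⟩ h
    simp only [LinearMap.coprod_apply] at h
    have hc : c = 0 := by simpa [hps, hpi] using congrArg p h
    subst hc
    have : i a = i 0 := by simpa using h
    rw [hi this]; rfl
  · intro b
    obtain ⟨a, ha⟩ := (hip (b - s (p b))).1 (by simp [hps])
    exact ⟨(a, p b), by simp [ha]⟩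

/-- `FFR R n M`: the module `M` has a resolution of length at most `n` by finite free `R`-modules.
All modules involved live in the universe of `R`. -/
def FFR (R : Type u) [CommRing R] :
    ℕ → (M : Type u) → [AddCommGroup M] → [Module R M] → Prop
  | 0, M, _, _ => Module.Free R M ∧ Module.Finite R M
  | n + 1, M, _, _ => ∃ (F K : Type u) (_ : AddCommGroup F) (_ : Module R F)
      (_ : AddCommGroup K) (_ : Module R K) (i : K →ₗ[R] F) (f : F →ₗ[R] M),
      Module.Free R F ∧ Module.Finite R F ∧ Function.Injective i ∧ Function.Exact i f ∧
        Function.Surjective f ∧ FFR R n K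

namespace FFR

variable {R : Type u} [CommRing R]

theorem equiv {n : ℕ} {M N : Type u} [AddCommGroup M] [Module R M] [AddCommGroup N] [Module R N]
    (e : M ≃ₗ[R] N) (h : FFR R n M) : FFR R n N := by
  cases n with
  | zero =>
    obtain ⟨_, _⟩ := h
    exact ⟨Module.Free.of_equiv e, Module.Finite.equiv e⟩
  | succ n =>
    obtain ⟨F, K, _, _, _, _, i, f, hF, hF', hi, hif, hf, hK⟩ := h
    refine ⟨F, K, _, _, _, _, i, e.toLinearMap ∘ₗ f, hF, hF', hi, ?_, e.surjective.comp hf, hK⟩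
    intro y
    simpa using hif y

theorem of_subsingleton (n : ℕ) (M : Type u) [AddCommGroup M] [Module R M] [Subsingleton M] :
    FFR R n M := by
  induction n generalizing M with
  | zero => exact ⟨inferInstance, inferInstance⟩
  | succ n ih =>
    refine ⟨PUnit, PUnit, _, _, _, _, 0, 0, inferInstance, inferInstance,
      Function.injective_of_subsingleton _, ?_, Function.surjective_to_subsingleton _, ih _⟩
    intro y
    exact ⟨fun _ => ⟨0, Subsingleton.elim _ _⟩, fun _ => Subsingleton.elim _ _⟩

theorem succ {n : ℕ} {M : Type u} [AddCommGroup M] [Module R M] (h : FFR R n M) :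
    FFR R (n + 1) M := by
  induction n generalizing M with
  | zero =>
    refine ⟨M, PUnit, _, _, _, _, 0, LinearMap.id, h.1, h.2,
      Function.injective_of_subsingleton _, ?_, Function.surjective_id, of_subsingleton _ _⟩
    intro y
    exact ⟨fun hy => ⟨0, hy.symm⟩, by rintro ⟨_, rfl⟩; rfl⟩
  | succ n ih =>
    obtain ⟨F, K, _, _, _, _, i, f, hF, hF', hi, hif, hf, hK⟩ := h
    exact ⟨F, K, _, _, _, _, i, f, hF, hF', hi, hif, hf, ih hK⟩

theorem mono {m n : ℕ} (hmn : m ≤ n) {M : Type u} [AddCommGroup M] [Module R M]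
    (h : FFR R m M) : FFR R n M := by
  induction n, hmn using Nat.le_induction with
  | base => exact h
  | succ n _ ih => exact ih.succ

/-- Horseshoe lemma: finite free resolutions pass to extensions. -/
theorem ext {n : ℕ} {A B C : Type u} [AddCommGroup A] [Module R A] [AddCommGroup B] [Module R B]
    [AddCommGroup C] [Module R C] (i : A →ₗ[R] B) (p : B →ₗ[R] C) (hi : Function.Injective i)
    (hip : Function.Exact i p) (hp : Function.Surjective p) (hA : FFR R n A) (hC : FFR R n C) :
    FFR R n B := by
  induction n generalizing A B C with
  | zero =>
    obtain ⟨_, _⟩ := hA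
    obtain ⟨_, _⟩ := hC
    obtain ⟨e⟩ := nonempty_prod_equiv_of_exact i p hi hip hp
    exact ⟨Module.Free.of_equiv e, Module.Finite.equiv e⟩
  | succ n ih =>
    obtain ⟨F, K, _, _, _, _, j, f, hF, hF', hj, hjf, hf, hK⟩ := hA
    obtain ⟨G, L, _, _, _, _, l, g, hG, hG', hl, hlg, hg, hL⟩ := hC
    obtain ⟨s, hs⟩ := Module.projective_lifting_property p g hp
    have hps : ∀ c, p (s c) = g c := fun c => LinearMap.congr_fun hs c
    have hpi : ∀ a, p (i a) = 0 := fun a => hip.apply_apply_eq_zero a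
    let q : (F × G) →ₗ[R] B := (i ∘ₗ f).coprod s
    have hq : ∀ x y, q (x, y) = i (f x) + s y := fun x y => by simp [q]
    have hqsurj : Function.Surjective q := fun b => by
      obtain ⟨y, hy⟩ := hg (p b)
      obtain ⟨a, ha⟩ := (hip (b - s y)).1 (by simp [hps, hy])
      obtain ⟨x, rfl⟩ := hf a
      exact ⟨(x, y), by simp [hq, ha]⟩
    have hgker : ∀ z : LinearMap.ker q, g z.1.2 = 0 := fun z => by
      have h : q (z.1.1, z.1.2) = 0 := z.2
      rw [hq] at h
      simpa [hps, hpi] using congrArg p h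
    let π₀ : LinearMap.ker q →ₗ[R] LinearMap.ker g :=
      LinearMap.codRestrict _ (LinearMap.snd R F G ∘ₗ (LinearMap.ker q).subtype) hgker
    let eL : L ≃ₗ[R] LinearMap.ker g :=
      LinearEquiv.ofBijective (LinearMap.codRestrict _ l (fun x => hlg.apply_apply_eq_zero x))
        ⟨fun x y h => hl (congrArg Subtype.val h), fun y => by
          obtain ⟨x, hx⟩ := (hlg y.1).1 y.2
          exact ⟨x, Subtype.ext hx⟩⟩
    let ι : K →ₗ[R] LinearMap.ker q :=
      LinearMap.codRestrict _ (LinearMap.inl R F G ∘ₗ j) (fun x => by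
        change q (j x, 0) = 0
        rw [hq, hjf.apply_apply_eq_zero]; simp)
    refine ⟨F × G, LinearMap.ker q, _, _, _, _, (LinearMap.ker q).subtype, q, inferInstance,
      inferInstance, Subtype.val_injective, LinearMap.exact_subtype_ker_map q, hqsurj,
      ih ι π₀ ?_ ?_ ?_ hK (hL.equiv eL)⟩
    · intro x y h
      exact hj (congrArg (fun z : LinearMap.ker q => z.1.1) h)
    · intro z
      constructor
      · intro hz
        have hz2 : z.1.2 = 0 := congrArg Subtype.val hz
        have h : q (z.1.1, z.1.2) = 0 := z.2
        rw [hq, hz2, map_zero, add_zero] at h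
        obtain ⟨x, hx⟩ := (hjf z.1.1).1 (hi (by rw [h, map_zero]))
        exact ⟨x, Subtype.ext (Prod.ext hx hz2.symm)⟩
      · rintro ⟨x, rfl⟩
        rfl
    · rintro ⟨y, hy⟩
      obtain ⟨a, ha⟩ := (hip (s y)).1 (by rw [hps]; exact hy)
      obtain ⟨x, rfl⟩ := hf a
      exact ⟨⟨(-x, y), by
        rw [LinearMap.mem_ker, hq, map_neg, map_neg, ha]; simp⟩, rfl⟩

/-- Finite free resolutions pass to cokernels of injections. If `F → B` is a free cover with kernel
`K`, then the kernel of `F → B → C` is an extension of `A` by `K`. -/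
theorem coker {n : ℕ} {A B C : Type u} [AddCommGroup A] [Module R A] [AddCommGroup B] [Module R B]
    [AddCommGroup C] [Module R C] (i : A →ₗ[R] B) (p : B →ₗ[R] C) (hi : Function.Injective i)
    (hip : Function.Exact i p) (hp : Function.Surjective p) (hA : FFR R n A) (hB : FFR R n B) :
    FFR R (n + 1) C := by
  obtain ⟨F, K, _, _, _, _, j, f, hF, hF', hj, hjf, hf, hK⟩ := hB.succ
  have hpi : ∀ a, p (i a) = 0 := fun a => hip.apply_apply_eq_zero a
  let q : F →ₗ[R] C := p ∘ₗ f
  let ι : K →ₗ[R] LinearMap.ker q := LinearMap.codRestrict _ j (fun x => by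
    simp [q, hjf.apply_apply_eq_zero])
  let eA : A ≃ₗ[R] LinearMap.ker p :=
    LinearEquiv.ofBijective (LinearMap.codRestrict _ i (fun x => hpi x))
      ⟨fun x y h => hi (congrArg Subtype.val h), fun y => by
        obtain ⟨x, hx⟩ := (hip y.1).1 y.2
        exact ⟨x, Subtype.ext hx⟩⟩
  let π : LinearMap.ker q →ₗ[R] LinearMap.ker p :=
    LinearMap.codRestrict _ (f ∘ₗ (LinearMap.ker q).subtype) (fun z => z.2)
  refine ⟨F, LinearMap.ker q, _, _, _, _, (LinearMap.ker q).subtype, q, hF, hF',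
    Subtype.val_injective, LinearMap.exact_subtype_ker_map q, hp.comp hf,
    ext ι π (fun x y h => hj (congrArg Subtype.val h)) ?_ ?_ hK (hA.equiv eA)⟩
  · intro z
    constructor
    · intro hz
      obtain ⟨x, hx⟩ := (hjf z.1).1 (congrArg Subtype.val hz)
      exact ⟨x, Subtype.ext hx⟩
    · rintro ⟨x, rfl⟩
      exact Subtype.ext (hjf.apply_apply_eq_zero x)
  · rintro ⟨y, hy⟩
    obtain ⟨x, rfl⟩ := hf y
    exact ⟨⟨x, hy⟩, rfl⟩

theorem baseChange (S : Type u) [CommRing S] [Algebra R S] [Module.Flat R S] {n : ℕ} {M : Type u}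
    [AddCommGroup M] [Module R M] (h : FFR R n M) : FFR S n (S ⊗[R] M) := by
  induction n generalizing M with
  | zero =>
    obtain ⟨_, _⟩ := h
    exact ⟨inferInstance, inferInstance⟩
  | succ n ih =>
    obtain ⟨F, K, _, _, _, _, i, f, hF, hF', hi, hif, hf, hK⟩ := h
    exact ⟨S ⊗[R] F, S ⊗[R] K, _, _, _, _, i.baseChange S, f.baseChange S, inferInstance,
      inferInstance, Module.Flat.lTensor_preserves_injective_linearMap i hi,
      lTensor_exact S hif hf, LinearMap.lTensor_surjective S hf, ih hK⟩

/-- A projective module with a finite free resolution is stably free: `F ≃ K × P`, and the syzygy `K`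
is projective with a shorter resolution. -/
theorem isStablyFree {n : ℕ} {P : Type u} [AddCommGroup P] [Module R P] [Module.Projective R P]
    (h : FFR R n P) : Module.IsStablyFree R P := by
  induction n generalizing P with
  | zero =>
    obtain ⟨_, _⟩ := h
    infer_instance
  | succ n ih =>
    obtain ⟨F, K, _, _, _, _, i, f, hF, hF', hi, hif, hf, hK⟩ := h
    obtain ⟨e⟩ := nonempty_prod_equiv_of_exact i f hi hif hf
    have : Module.Projective R (K × P) := Module.Projective.of_equiv e.symm
    have : Module.Projective R K := Module.Projective.of_split (LinearMap.inl R K P)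
      (LinearMap.fst R K P) (LinearMap.ext fun _ => rfl)
    have : Module.Finite R K := Module.Finite.of_surjective
      (LinearMap.fst R K P ∘ₗ e.symm.toLinearMap) (Prod.fst_surjective.comp e.symm.surjective)
    have := ih hK
    obtain ⟨N, _, _, _, _, _⟩ := Module.IsStablyFree.exist_free_prod R K
    have : Module.Free R (P × (K × N)) := Module.Free.of_equiv
      ((((LinearEquiv.prodComm R P K).trans e).prodCongr (LinearEquiv.refl R N)).symm.trans
        (LinearEquiv.prodAssoc R P K N))
    exact Module.IsStablyFree.of_free_prod R P (K × N)

end FFR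

/-! ### The degree filtration of a module with an endomorphism -/

section Filtration
variable {R : Type*} [CommRing R] {M N : Type*} [AddCommGroup M] [Module R M]
  [AddCommGroup N] [Module R N]

/-- The submodule `∑_{i < n} xⁱ g(N)` of `M`. -/
def krylov (x : Module.End R M) (g : N →ₗ[R] M) : ℕ → Submodule R M
  | 0 => ⊥
  | n + 1 => krylov x g n ⊔ LinearMap.range ((x ^ n) ∘ₗ g)

theorem krylov_mono (x : Module.End R M) (g : N →ₗ[R] M) : Monotone (krylov x g) :=
  monotone_nat_of_le_succ fun _ => le_sup_left

theorem krylov_fg [Module.Finite R N] (x : Module.End R M) (g : N →ₗ[R] M) (n : ℕ) :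
    (krylov x g n).FG := by
  induction n with
  | zero => exact Submodule.fg_bot
  | succ n ih =>
    refine ih.sup ?_
    rw [LinearMap.range_eq_map]
    exact Module.Finite.fg_top.map _

theorem map_mem_krylov (x : Module.End R M) (g : N →ₗ[R] M) {n : ℕ} {m : M}
    (hm : m ∈ krylov x g n) : x m ∈ krylov x g (n + 1) := by
  induction n generalizing m with
  | zero =>
    obtain rfl : m = 0 := hm
    simp
  | succ n ih =>
    obtain ⟨m', hm', _, ⟨v, rfl⟩, rfl⟩ := Submodule.mem_sup.1 hm
    rw [map_add]
    refine add_mem (krylov_mono x g (Nat.le_succ _) (ih hm')) (Submodule.mem_sup_right ⟨v, ?_⟩)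
    simp [pow_succ']

theorem pow_mem_krylov (x : Module.End R M) (g : N →ₗ[R] M) {n : ℕ} {m : M}
    (hm : m ∈ krylov x g n) (j : ℕ) : (x ^ j) m ∈ krylov x g (n + j) := by
  induction j with
  | zero => simpa
  | succ j ih =>
    rw [pow_succ']
    exact map_mem_krylov x g ih

/-- Beyond some stage the powers of `x` act injectively on the graded pieces of the filtration
`krylov x g`. The submodules `{v | xⁿ g(v) ∈ krylov x g n}` of the Noetherian module `N` increase
with `n`, and `n` is chosen where they stabilise. -/
theorem exists_krylov_stable [IsNoetherian R N] (x : Module.End R M) (g : N →ₗ[R] M) :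
    ∃ n, ∀ (d : ℕ) (m : M), m ∈ krylov x g (n + 1) →
      (x ^ d) m ∈ krylov x g (n + d) → m ∈ krylov x g n := by
  let L : ℕ →o Submodule R N :=
    ⟨fun n => (krylov x g n).comap ((x ^ n) ∘ₗ g), monotone_nat_of_le_succ fun n v hv => by
      simpa [pow_succ'] using map_mem_krylov x g hv⟩
  obtain ⟨n, hn⟩ := monotone_stabilizes_iff_noetherian.2 ‹IsNoetherian R N› L
  refine ⟨n, ?_⟩
  have key : ∀ (j : ℕ) (m : M), n ≤ j → m ∈ krylov x g (j + 1) → x m ∈ krylov x g (j + 1) →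
      m ∈ krylov x g j := by
    intro j m hj hm hxm
    obtain ⟨m', hm', _, ⟨v, rfl⟩, rfl⟩ := Submodule.mem_sup.1 hm
    rw [map_add] at hxm
    have h1 : v ∈ L (j + 1) := by
      have := sub_mem hxm (map_mem_krylov x g hm')
      simpa [L, pow_succ'] using this
    rw [← hn (j + 1) (by omega), hn j hj] at h1
    exact add_mem hm' h1
  intro d
  induction d with
  | zero => intro m _ h; simpa using h
  | succ d ih =>
    intro m hm h
    refine ih m hm (key (n + d) _ (by omega) ?_ ?_)
    · have := pow_mem_krylov x g hm d
      rwa [show n + 1 + d = n + d + 1 by omega] at this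
    · rwa [pow_succ'] at h

end Filtration

/-! ### The characteristic sequence over a polynomial ring -/

section CharSeq
variable {R : Type u} [CommRing R] {M : Type u} [AddCommGroup M] [Module R M]

/-- The coefficient of `X ^ j` in an element of `R[X] ⊗[R] B`. -/
noncomputable def tcoeff (R : Type*) [CommRing R] (B : Type*) [AddCommGroup B] [Module R B]
    (j : ℕ) : R[X] ⊗[R] B →ₗ[R] B :=
  (TensorProduct.lid R B).toLinearMap ∘ₗ (lcoeff R j).rTensor B

theorem tcoeff_tmul {B : Type*} [AddCommGroup B] [Module R B] (j : ℕ) (p : R[X]) (b : B) :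
    tcoeff R B j (p ⊗ₜ b) = p.coeff j • b := by simp [tcoeff]

theorem exists_tmul_sum {B : Type*} [AddCommGroup B] [Module R B] (t : R[X] ⊗[R] B) :
    ∃ (d : ℕ) (b : ℕ → B), t = ∑ i ∈ Finset.range d, (X ^ i : R[X]) ⊗ₜ[R] b i := by
  suffices h : ∃ d, ∀ e, d ≤ e →
      t = ∑ i ∈ Finset.range e, (X ^ i : R[X]) ⊗ₜ[R] tcoeff R B i t by
    obtain ⟨d, h⟩ := h
    exact ⟨d, _, h d le_rfl⟩
  induction t with
  | zero => exact ⟨0, by simp⟩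
  | add s t hs ht =>
    obtain ⟨d, hd⟩ := hs
    obtain ⟨d', hd'⟩ := ht
    refine ⟨max d d', fun e he => ?_⟩
    simp only [map_add, TensorProduct.tmul_add, Finset.sum_add_distrib]
    rw [← hd e (by omega), ← hd' e (by omega)]
  | tmul p b =>
    refine ⟨p.natDegree + 1, fun e he => ?_⟩
    conv_lhs => rw [p.as_sum_range' e (by omega), TensorProduct.sum_tmul]
    refine Finset.sum_congr rfl fun i _ => ?_
    rw [tcoeff_tmul, TensorProduct.tmul_smul, TensorProduct.smul_tmul',
      ← C_mul_X_pow_eq_monomial, smul_eq_C_mul]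

theorem tcoeff_sum {B : Type*} [AddCommGroup B] [Module R B] (d j : ℕ) (b : ℕ → B) :
    tcoeff R B j (∑ i ∈ Finset.range d, (X ^ i : R[X]) ⊗ₜ[R] b i) = if j < d then b j else 0 := by
  simp [tcoeff_tmul, coeff_X_pow]

theorem tcoeff_X_smul_succ {B : Type*} [AddCommGroup B] [Module R B] (j : ℕ) (t : R[X] ⊗[R] B) :
    tcoeff R B (j + 1) ((X : R[X]) • t) = tcoeff R B j t := by
  induction t with
  | zero => simp
  | add s t hs ht => simp [hs, ht]
  | tmul p b => simp [TensorProduct.smul_tmul', tcoeff_tmul, coeff_X_mul]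

theorem tcoeff_baseChange {A B : Type*} [AddCommGroup A] [Module R A] [AddCommGroup B] [Module R B]
    (f : A →ₗ[R] B) (j : ℕ) (t : R[X] ⊗[R] A) :
    tcoeff R B j (f.baseChange R[X] t) = f (tcoeff R A j t) := by
  induction t with
  | zero => simp
  | add s t hs ht => simp [hs, ht]
  | tmul p b => simp [tcoeff_tmul]

/-- Over a Noetherian `R`, every finite `R[X]`-module `M` has a resolution
`0 → R[X] ⊗ A → R[X] ⊗ B → M → 0` with `A` and `B` finite over `R`: take for `A ≤ B` two
consecutive stages of the filtration of `M` by degree, and `X ⊗ a - 1 ⊗ X a` for the first map. -/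
theorem exists_char_resolution [IsNoetherianRing R] [Module R[X] M] [IsScalarTower R R[X] M]
    [Module.Finite R[X] M] :
    ∃ (A B : Submodule R M) (α : R[X] ⊗[R] A →ₗ[R[X]] R[X] ⊗[R] B) (β : R[X] ⊗[R] B →ₗ[R[X]] M),
      A.FG ∧ B.FG ∧ Function.Injective α ∧ Function.Exact α β ∧ Function.Surjective β := by
  obtain ⟨r, s, hs⟩ := Module.Finite.exists_fin (R := R[X]) (M := M)
  let g : (Fin r → R) →ₗ[R] M := Fintype.linearCombination R s
  let x : Module.End R M := (LinearMap.lsmul R[X] M X).restrictScalars R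
  have hx : ∀ m, x m = (X : R[X]) • m := fun m => rfl
  have hxpow : ∀ (j : ℕ) (m : M), (x ^ j) m = (X ^ j : R[X]) • m := by
    intro j
    induction j with
    | zero => simp
    | succ j ih => intro m; simp [pow_succ', hx, ih, mul_smul]
  obtain ⟨n, hn⟩ := exists_krylov_stable x g
  let A := krylov x g n
  let B := krylov x g (n + 1)
  let ι : A →ₗ[R] B := Submodule.inclusion (krylov_mono x g (Nat.le_succ n))
  let ξ : A →ₗ[R] B := x.restrict (fun m hm => map_mem_krylov x g hm)
  let α : R[X] ⊗[R] A →ₗ[R[X]] R[X] ⊗[R] B := (X : R[X]) • ι.baseChange R[X] - ξ.baseChange R[X]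
  let β : R[X] ⊗[R] B →ₗ[R[X]] M := LinearMap.liftBaseChange R[X] B.subtype
  have hβ : ∀ (p : R[X]) (b : B), β (p ⊗ₜ b) = p • (b : M) := fun p b => by simp [β]
  have hα : ∀ (p : R[X]) (a : A), α (p ⊗ₜ a) = (X * p) ⊗ₜ ι a - p ⊗ₜ ξ a := fun p a => by
    simp [α, TensorProduct.smul_tmul']
  refine ⟨A, B, α, β, krylov_fg x g n, krylov_fg x g (n + 1), ?_, ?_, ?_⟩
  · rw [injective_iff_map_eq_zero]
    intro t ht
    have hc : ∀ j, ι (tcoeff R A j t) = ξ (tcoeff R A (j + 1) t) := fun j => by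
      have := congrArg (tcoeff R B (j + 1)) ht
      simp only [α, LinearMap.sub_apply, LinearMap.smul_apply, map_sub, map_zero,
        tcoeff_X_smul_succ, tcoeff_baseChange] at this
      exact sub_eq_zero.1 this
    obtain ⟨d, a, rfl⟩ := exists_tmul_sum t
    have hz : ∀ k j, d ≤ j + k →
        tcoeff R A j (∑ i ∈ Finset.range d, (X ^ i : R[X]) ⊗ₜ[R] a i) = 0 := by
      intro k
      induction k with
      | zero => intro j hj; rw [tcoeff_sum, if_neg (by omega)]
      | succ k ih =>
        intro j hj
        have h1 := hc j
        rw [ih (j + 1) (by omega), map_zero] at h1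
        exact Submodule.inclusion_injective (krylov_mono x g (Nat.le_succ n))
          (h1.trans (map_zero ι).symm)
    refine Finset.sum_eq_zero fun i hi => ?_
    have := hz d i (by omega)
    rw [tcoeff_sum, if_pos (Finset.mem_range.1 hi)] at this
    simp [this]
  · have hβα : ∀ t, β (α t) = 0 := fun t => by
      induction t with
      | zero => simp
      | add s t hs ht => simp [hs, ht]
      | tmul p a =>
        rw [hα, map_sub, hβ, hβ, mul_comm, mul_smul]
        exact sub_self _
    have key : ∀ (d : ℕ) (b : ℕ → B),
        β (∑ i ∈ Finset.range (d + 1), (X ^ i : R[X]) ⊗ₜ[R] b i) = 0 →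
        ∑ i ∈ Finset.range (d + 1), (X ^ i : R[X]) ⊗ₜ[R] b i ∈ LinearMap.range α := by
      intro d
      induction d with
      | zero =>
        intro b hb
        have : b 0 = 0 := by simpa [hβ] using hb
        simp [this]
      | succ d ih =>
        intro b hb
        -- The top coefficient lies in `A`, so subtracting an element of the range of `α` lowers
        -- the degree.
        have hmem : (x ^ (d + 1)) (b (d + 1) : M) ∈ krylov x g (n + (d + 1)) := by
          rw [Finset.sum_range_succ, map_add, hβ, add_eq_zero_iff_neg_eq] at hb
          rw [hxpow, ← hb, map_sum]
          refine neg_mem (sum_mem fun i hi => ?_)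
          rw [hβ, ← hxpow]
          have hi' := Finset.mem_range.1 hi
          exact krylov_mono x g (by omega) (pow_mem_krylov x g (b i).2 i)
        let a : A := ⟨b (d + 1), hn (d + 1) _ (b (d + 1)).2 hmem⟩
        let b' : ℕ → B := Function.update b d (b d + ξ a)
        have hsum : ∑ i ∈ Finset.range (d + 1 + 1), (X ^ i : R[X]) ⊗ₜ[R] b i =
            ∑ i ∈ Finset.range (d + 1), (X ^ i : R[X]) ⊗ₜ[R] b' i + α ((X ^ d : R[X]) ⊗ₜ[R] a) := by
          have hιa : ι a = b (d + 1) := rfl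
          have hlow : ∑ i ∈ Finset.range d, (X ^ i : R[X]) ⊗ₜ[R] b' i =
              ∑ i ∈ Finset.range d, (X ^ i : R[X]) ⊗ₜ[R] b i :=
            Finset.sum_congr rfl fun i hi => by
              rw [show b' i = b i from Function.update_of_ne (Finset.mem_range.1 hi).ne _ _]
          have hd : b' d = b d + ξ a := Function.update_self _ _ _
          rw [Finset.sum_range_succ, Finset.sum_range_succ, Finset.sum_range_succ, hlow, hd, hα,
            hιa, TensorProduct.tmul_add, ← pow_succ']
          abel
        rw [hsum] at hb ⊢
        rw [map_add, hβα, add_zero] at hb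
        exact add_mem (ih b' hb) ⟨_, rfl⟩
    intro t
    refine ⟨fun ht => ?_, by rintro ⟨s, rfl⟩; exact hβα s⟩
    obtain ⟨d, b, rfl⟩ := exists_tmul_sum t
    cases d with
    | zero => exact ⟨0, by simp⟩
    | succ d => exact key d b ht
  · rw [← LinearMap.range_eq_top, ← top_le_iff, ← hs, Submodule.span_le]
    rintro _ ⟨i, rfl⟩
    have hmem : s i ∈ B := krylov_mono x g (Nat.le_add_left 1 n)
      (Submodule.mem_sup_right ⟨Pi.single i 1, by simp [g]⟩)
    exact ⟨1 ⊗ₜ ⟨s i, hmem⟩, by rw [hβ, one_smul]⟩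

end CharSeq

/-! ### Hilbert's syzygy theorem -/

section Syzygy

/-- Every finite `R`-module has a finite free resolution. -/
def AllFFR (R : Type u) [CommRing R] : Prop :=
  ∀ (M : Type u) [AddCommGroup M] [Module R M] [Module.Finite R M], ∃ n, FFR R n M

theorem AllFFR.of_field (k : Type u) [Field k] : AllFFR k :=
  fun _ _ _ _ => ⟨0, inferInstance, inferInstance⟩

/-- The inductive step of Hilbert's syzygy theorem. -/
theorem AllFFR.polynomial {R : Type u} [CommRing R] [IsNoetherianRing R] (h : AllFFR R) :
    AllFFR R[X] := by
  intro M _ _ _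
  let : Module R M := Module.compHom M (algebraMap R R[X])
  have : IsScalarTower R R[X] M := IsScalarTower.of_algebraMap_smul fun _ _ => rfl
  obtain ⟨A, B, α, β, hA, hB, hα, hαβ, hβ⟩ := exists_char_resolution (R := R) (M := M)
  have : Module.Finite R A := Module.Finite.iff_fg.2 hA
  have : Module.Finite R B := Module.Finite.iff_fg.2 hB
  obtain ⟨a, ha⟩ := h A
  obtain ⟨b, hb⟩ := h B
  exact ⟨_, FFR.coker α β hα hαβ hβ ((ha.mono (le_max_left a b)).baseChange R[X])
    ((hb.mono (le_max_right a b)).baseChange R[X])⟩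

theorem AllFFR.of_ringEquiv {R S : Type u} [CommRing R] [CommRing S] (e : R ≃+* S)
    (h : AllFFR R) : AllFFR S := by
  intro M _ _ _
  let : Algebra R S := e.toRingHom.toAlgebra
  let : Module R M := Module.compHom M e.toRingHom
  have : IsScalarTower R S M := IsScalarTower.of_algebraMap_smul fun _ _ => rfl
  let l : R ≃ₗ[R] S := LinearEquiv.ofBijective (Algebra.linearMap R S) e.bijective
  have : Module.Flat R S := Module.Flat.of_linearEquiv l.symm
  have : Module.Finite R S := Module.Finite.equiv l
  have : Module.Finite R M := Module.Finite.trans S M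
  obtain ⟨n, hn⟩ := h M
  have hone : ∀ t : S ⊗[R] M, ∃ m : M, t = 1 ⊗ₜ m := by
    intro t
    induction t with
    | zero => exact ⟨0, by simp⟩
    | add s t hs ht =>
      obtain ⟨a, rfl⟩ := hs
      obtain ⟨b, rfl⟩ := ht
      exact ⟨a + b, by rw [TensorProduct.tmul_add]⟩
    | tmul s m =>
      obtain ⟨r, rfl⟩ := e.surjective s
      refine ⟨r • m, ?_⟩
      rw [TensorProduct.tmul_smul, TensorProduct.smul_tmul', Algebra.smul_def, mul_one]
      rfl
  refine ⟨n, (hn.baseChange S).equiv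
    (LinearEquiv.ofBijective (LinearMap.liftBaseChange S (LinearMap.id : M →ₗ[R] M)) ⟨?_, ?_⟩)⟩
  · rw [injective_iff_map_eq_zero]
    intro t ht
    obtain ⟨m, rfl⟩ := hone t
    have : m = 0 := by simpa using ht
    simp [this]
  · intro m
    exact ⟨1 ⊗ₜ m, by simp⟩

theorem AllFFR.mvPolynomial (k : Type u) [Field k] (d : ℕ) : AllFFR (MvPolynomial (Fin d) k) := by
  induction d with
  | zero => exact (AllFFR.of_field k).of_ringEquiv (MvPolynomial.isEmptyRingEquiv k (Fin 0)).symm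
  | succ d ih => exact ih.polynomial.of_ringEquiv (MvPolynomial.finSuccEquiv k d).symm.toRingEquiv

end Syzygy

/-! ### Projective modules of large rank -/

/-- Partial result toward Serre's Conjecture: a finitely generated projective module
over `k[x₁, …, x_d]` whose rank (the dimension of `P ⊗ Frac(R)` over the fraction
field) is at least `d + 2` is free. -/
theorem free_of_rank_ge_dim_add_two
    (k : Type*) [Field k] (d : ℕ)
    (P : Type*) [AddCommGroup P] [Module (MvPolynomial (Fin d) k) P]
    [Module.Finite (MvPolynomial (Fin d) k) P]
    [Module.Projective (MvPolynomial (Fin d) k) P]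
    (hrank : (d + 2 : Cardinal) ≤
      Module.rank (FractionRing (MvPolynomial (Fin d) k))
        (FractionRing (MvPolynomial (Fin d) k) ⊗[MvPolynomial (Fin d) k] P)) :
    Module.Free (MvPolynomial (Fin d) k) P := by
  set R := MvPolynomial (Fin d) k
  set K := FractionRing R
  have hdim : ringKrullDim R = d := by
    simp [R, MvPolynomial.ringKrullDim_of_isNoetherianRing]
  -- A quotient of `Rᵐ` replaces `P`, since `FFR` is stated in the universe of `R`.
  obtain ⟨m, q, hq⟩ := Module.Finite.exists_fin' R P
  let eP : ((Fin m → R) ⧸ LinearMap.ker q) ≃ₗ[R] P := q.quotKerEquivOfSurjective hq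
  have : Module.Finite R ((Fin m → R) ⧸ LinearMap.ker q) := Module.Finite.equiv eP.symm
  have : Module.Projective R ((Fin m → R) ⧸ LinearMap.ker q) := Module.Projective.of_equiv eP.symm
  obtain ⟨n, hn⟩ := AllFFR.mvPolynomial k d ((Fin m → R) ⧸ LinearMap.ker q)
  have : Module.IsStablyFree R P := hn.isStablyFree.equiv eP
  obtain ⟨N, _, _, _, _, _⟩ := Module.IsStablyFree.exist_free_prod R P
  set a := Module.finrank R N
  set b := Module.finrank R (P × N)
  let eN : N ≃ₗ[R] (Fin a → R) := (Module.finBasis R N).equivFun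
  let φ : (P × (Fin a → R)) ≃ₗ[R] (Fin b → R) :=
    ((LinearEquiv.refl R P).prodCongr eN.symm).trans (Module.finBasis R (P × N)).equivFun
  have hrk : Module.finrank K (K ⊗[R] P) + a = b := by
    have h1 := ((TensorProduct.prodRight R K K P N).symm).finrank_eq
    have h2 : Module.finrank K (K ⊗[R] N) = a := Module.finrank_baseChange
    have h3 : Module.finrank K (K ⊗[R] (P × N)) = b := Module.finrank_baseChange
    rwa [Module.finrank_prod, h2, h3] at h1
  have hle : d + 2 ≤ Module.finrank K (K ⊗[R] P) := by
    rw [← Module.finrank_eq_rank] at hrank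
    exact_mod_cast hrank
  obtain ⟨e⟩ := cancel_many (r := Module.finrank K (K ⊗[R] P))
    (by rw [hdim]; exact_mod_cast (by omega : d < Module.finrank K (K ⊗[R] P))) a (hrk ▸ φ)
  exact Module.Free.of_equiv e.symm
end

section
/- (Congruence Subgroup Theorem for SL_n(ℤ), n ≥ 3; Bass–Milnor–Serre.) Let n ≥ 3 be a natural number and let H be a subgroup of finite index in SL_n(ℤ). Then there exists a positive integer m such that H contains the principal congruence subgroup of level m, i.e., the kernel of the reduction homomorphism SL_n(ℤ) → SL_n(ℤ/mℤ). -/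
/-!
The proof uses Mennicke symbols. Replacing `H` by its normal core `N`, a normal subgroup of finite
index `r`, every elementary matrix `1 + t E_{ij}` with `m ∣ t` lies in `N`, where `m = 4 r`. It has
to be shown that `N` contains all matrices congruent to `1` modulo some `M`.

*Reduction to `2 × 2` blocks* (`congruenceOn_insert`, `exists_congruence_level`). Let `g` be
congruent to `1` modulo a high power of `m`. Since a unimodular row of integers can be shortened
(`exists_unimodular_shift`), elementary row and column operations of level `m` clear one row and
column of `g` after the other, until only a `2 × 2` block is left. This block lies in a copy of
`SL₃(ℤ)`.

*Mennicke symbols* (`mennicke`). In `SL₃(ℤ)`, the class modulo `N` of a block `(a b; c d)` congruent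
to `1` modulo `m` depends only on `(a, b)`. Such a block commutes modulo `N` with all elementary
matrices (`elem_mem_centralizer`), so it may be conjugated by elementary matrices and moved to
another corner of `SL₃`. Hence the symbol of `(a, b)` depends only on `a` modulo `b`, and it is
multiplicative in `b` (`mennicke_mul`).

*Triviality of the symbol* (`symbol_trivial`). By Dirichlet's theorem on primes in arithmetic
progressions one may assume that `b = q` is prime up to the factor `m`, and replace `a` by `-p` for
a prime `p`. By Euler's criterion `q ^ ((p - 1) / 2) ≡ ± 1` modulo `p`, so the symbol is killed by
`(p - 1) / 2`. Since `p ≡ -1` modulo `4` these exponents are odd, and two choices of `p` can be made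
with coprime exponents; so the symbol is trivial.
-/

/-! ### Symbols with values in a monoid -/

section Arithmetic

variable {Q : Type*} [Monoid Q] {m : ℤ} {f : ℤ → ℤ → Q}

lemma symbol_pow
    (hmul : ∀ a b c, m ∣ a - 1 → IsCoprime a b → IsCoprime a c → f a (b * c) = f a b * f a c)
    (h1 : ∀ a, m ∣ a - 1 → f a 1 = 1)
    (a b : ℤ) (ha : m ∣ a - 1) (hab : IsCoprime a b) (k : ℕ) : f a (b ^ k) = f a b ^ k := by
  induction k with
  | zero => simpa using h1 a ha
  | succ k ih => rw [pow_succ, hmul a _ _ ha hab.pow_right hab, ih, pow_succ]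

/-- For a prime `p = 2 N + 1`, Euler's criterion gives `b ^ N ≡ ± 1` modulo `p`, and `f (-p) (± 1)`
is trivial. -/
lemma symbol_neg_prime_pow
    (hmul : ∀ a b c, m ∣ a - 1 → IsCoprime a b → IsCoprime a c → f a (b * c) = f a b * f a c)
    (hper : ∀ a b t, m ∣ a - 1 → IsCoprime a b → f a (b + t * a) = f a b)
    (h1 : ∀ a, m ∣ a - 1 → f a 1 = 1) (hneg : ∀ a, m ∣ a - 1 → f a (-1) = 1)
    (p : ℕ) (hp : p.Prime) (N : ℕ) (hN : p = 2 * N + 1) (b : ℤ)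
    (ha : m ∣ -(p : ℤ) - 1) (hb : IsCoprime (-(p : ℤ)) b) : f (-p) b ^ N = 1 := by
  have := Fact.mk hp
  have hb0 : (b : ZMod p) ≠ 0 := by
    intro h
    rw [ZMod.intCast_zmod_eq_zero_iff_dvd] at h
    exact (Nat.prime_iff_prime_int.mp hp).not_isUnit (hb.neg_left.isUnit_of_dvd' (by simp) h)
  rw [← symbol_pow hmul h1 _ _ ha hb]
  have hdiv : p / 2 = N := by omega
  have key : ∀ e : ℤ, IsCoprime (-(p : ℤ)) e → ((b : ZMod p) ^ N = (e : ZMod p)) →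
      f (-p) (b ^ N) = f (-p) e := by
    intro e he h
    have h' : ((b ^ N : ℤ) : ZMod p) = (e : ZMod p) := by push_cast; exact h
    rw [ZMod.intCast_eq_intCast_iff_dvd_sub] at h'
    obtain ⟨t, ht⟩ := h'
    have : b ^ N = e + t * (-(p : ℤ)) := by linarith
    rw [this, hper _ _ _ ha he]
  rcases ZMod.pow_div_two_eq_neg_one_or_one p hb0 with h | h
  · rw [hdiv] at h
    rw [key 1 isCoprime_one_right (by simpa using h), h1 _ ha]
  · rw [hdiv] at h
    rw [key (-1) isCoprime_one_right.neg_right (by simpa using h), hneg _ ha]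

/-- A function on pairs of coprime integers `(a, b)` with `a ≡ 1` modulo `m` which is multiplicative
in `b`, depends on `b` modulo `a` and on `a` modulo `b * m` only, and is trivial at `b = ± 1`, is
trivial. By Dirichlet's theorem `b` may be taken to be a prime `q`, and then `a` may be replaced by
`-p` for any prime `p ≡ -a` modulo `q * m`, which shows that `f a q` is killed by `(p - 1) / 2`. Two
suitable choices of `p` give coprime exponents. -/
theorem symbol_trivial (hm : 0 < m) (hm4 : 4 ∣ m)
    (hmul : ∀ a b c, m ∣ a - 1 → IsCoprime a b → IsCoprime a c → f a (b * c) = f a b * f a c)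
    (hper : ∀ a b t, m ∣ a - 1 → IsCoprime a b → f a (b + t * a) = f a b)
    (hrec : ∀ a b t, m ∣ a - 1 → IsCoprime a b → f (a + t * (b * m)) b = f a b)
    (h1 : ∀ a, m ∣ a - 1 → f a 1 = 1) (hneg : ∀ a, m ∣ a - 1 → f a (-1) = 1)
    (a b : ℤ) (ha : m ∣ a - 1) (hab : IsCoprime a b) : f a b = 1 := by
  have hm4' : 4 ≤ m := Int.le_of_dvd hm hm4
  have ha0 : a ≠ 0 := by
    rintro rfl
    have := Int.le_of_dvd (by norm_num) ((dvd_neg (a := m)).mpr ha)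
    omega
  have ham : IsCoprime a m := by
    obtain ⟨k, hk⟩ := ha
    exact ⟨1, -k, by linarith⟩
  -- Dirichlet: replace `b` by a prime `q` larger than `|a| + 1`.
  obtain ⟨q, hqgt, hq, hqb⟩ := Nat.forall_exists_prime_gt_and_zmodEq (a.natAbs + 1) (q := a.natAbs)
    (a := b) (by simpa using ha0) (by
      rw [Int.natCast_natAbs]
      exact hab.symm.abs_right)
  have hqa : IsCoprime a (q : ℤ) := by
    rw [isCoprime_comm, (Nat.prime_iff_prime_int.mp hq).coprime_iff_not_dvd]
    intro h
    have := Nat.le_of_dvd (by omega) (Int.natCast_dvd.mp h)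
    omega
  have hfq : f a b = f a q := by
    have h := hqb.symm.dvd
    rw [Int.natAbs_dvd] at h
    obtain ⟨t, ht⟩ := h
    have : (q : ℤ) = b + t * a := by linarith
    rw [this, hper a b t ha hab]
  rw [hfq]
  obtain ⟨M, rfl⟩ := Int.eq_ofNat_of_zero_le hm.le
  have hcop : IsCoprime (-a) ((q * M : ℕ) : ℤ) := by
    push_cast
    exact (hqa.mul_right ham).neg_left
  have hq0 := hq.pos
  have hM0 : 0 < M := by omega
  -- The order of the symbol divides `N = (p - 1) / 2` for each prime `p ≡ -a` modulo `q * m`. The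
  -- coprimality of `N` with `q * m` makes room for the congruence modulo `N` imposed on the second
  -- prime; that with `q` uses `2 N ≡ -(a + 1)` modulo `q` and `0 < |a + 1| < q`, that with `m` uses
  -- that `m / 2` is even and divides `N + 1`.
  have step : ∀ p : ℕ, p.Prime → (p : ℤ) ≡ -a [ZMOD (q * M : ℕ)] →
      ∃ N, p = 2 * N + 1 ∧ f a q ^ N = 1 ∧ Nat.Coprime N (q * M) := by
    intro p hp hpa
    obtain ⟨t, ht⟩ := hpa.dvd
    obtain ⟨s, hs⟩ := ha
    obtain ⟨r, hr⟩ := hm4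
    have e1 : (p : ℤ) + 1 = 4 * (r * (-(q * t) - s)) := by
      push_cast at ht
      linear_combination -ht - hs + hr * (-(q * t) - s)
    obtain ⟨N, hN⟩ : ∃ N : ℕ, p = 2 * N + 1 := ⟨p / 2, by omega⟩
    have hma : (M : ℤ) ∣ -(p : ℤ) - 1 := ⟨q * t + s, by
      push_cast at ht; linear_combination ht + hs⟩
    have e2 : -(p : ℤ) = a + t * (q * M) := by push_cast at ht; linarith
    have hpq : IsCoprime (-(p : ℤ)) q := by
      rw [e2, show a + t * (q * M) = a + q * (t * M) by ring]
      exact hqa.add_mul_left_left _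
    refine ⟨N, hN, ?_, ?_⟩
    · rw [← hrec a q t ⟨s, hs⟩ hqa, ← e2]
      exact symbol_neg_prime_pow hmul hper h1 hneg p hp N hN q hma hpq
    · have e3 : (N : ℤ) + 1 = 2 * (r * (-(q * t) - s)) := by
        subst hN; push_cast at e1; linarith
      refine Nat.Coprime.mul_right ?_ ?_
      · rw [Nat.coprime_comm, hq.coprime_iff_not_dvd]
        rintro ⟨u, hu⟩
        have h3 : (q : ℤ) ∣ a + 1 := ⟨-(M * t) - 2 * u, by
          have hu' : (N : ℤ) = q * u := by exact_mod_cast hu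
          have hN' : (p : ℤ) = 2 * N + 1 := by exact_mod_cast hN
          linear_combination -e2 - hN' - 2 * hu'⟩
        have h4 : a + 1 = 0 := by
          apply Int.eq_zero_of_abs_lt_dvd h3
          rw [abs_lt]; omega
        have h5 : (M : ℤ) ∣ -2 := ⟨s, by linarith⟩
        have := Int.le_of_dvd (by norm_num) ((dvd_neg (a := (M : ℤ))).mpr h5)
        omega
      · rw [← Nat.isCoprime_iff_coprime, hr]
        have h2 : IsCoprime (N : ℤ) (2 * r) := ⟨-1, -(q * t) - s, by linear_combination -e3⟩
        have h2' : IsCoprime (N : ℤ) 2 := IsCoprime.of_mul_right_left h2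
        have h4 := h2'.mul_right h2
        rwa [← mul_assoc] at h4
  obtain ⟨p₁, -, hp₁, hpa₁⟩ := Nat.forall_exists_prime_gt_and_zmodEq 0
    (Nat.mul_pos hq0 hM0).ne' hcop
  obtain ⟨N₁, hN₁, hx₁, hc₁⟩ := step p₁ hp₁ hpa₁
  have hN₁0 : N₁ ≠ 0 := by
    rintro rfl
    exact hp₁.one_lt.ne' (by omega)
  -- A second prime `p₂ ≡ -a` modulo `q * m` with moreover `p₂ ≡ -1` modulo `N₁`, so that
  -- `2 N₂ = p₂ - 1 ≡ -2` modulo the odd number `N₁`.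
  obtain ⟨u, v, huv⟩ := Nat.isCoprime_iff_coprime.mpr hc₁
  obtain ⟨p₂, -, hp₂, hpa₂⟩ := Nat.forall_exists_prime_gt_and_zmodEq 0
    (q := N₁ * (q * M)) (a := -a * (u * N₁) - v * (q * M : ℕ))
    (Nat.mul_pos (Nat.pos_of_ne_zero hN₁0) (Nat.mul_pos hq0 hM0)).ne' (by
      push_cast
      push_cast at hcop huv
      refine IsCoprime.mul_right ?_ ?_
      · exact ⟨-1, 1 * u - a * u, by linear_combination huv⟩
      · obtain ⟨x, y, hxy⟩ := hcop
        refine ⟨x, y + x * v * (1 - a), ?_⟩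
        linear_combination hxy - x * a * huv)
  obtain ⟨w, hw⟩ := hpa₂.dvd
  obtain ⟨N₂, hN₂, hx₂, -⟩ := step p₂ hp₂ (by
    refine Int.modEq_iff_dvd.mpr ⟨N₁ * w + v * (1 - a), ?_⟩
    push_cast at hw huv ⊢
    linear_combination hw + a * huv)
  have hc : Nat.Coprime N₁ N₂ := by
    have hodd : IsCoprime (N₁ : ℤ) 2 := by
      obtain ⟨r, hr⟩ := hm4
      have h := Nat.isCoprime_iff_coprime.mpr hc₁
      push_cast at h
      rw [hr] at h
      exact IsCoprime.of_isCoprime_of_dvd_right h ⟨2 * q * r, by ring⟩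
    rw [← Nat.isCoprime_iff_coprime]
    have : IsCoprime (N₁ : ℤ) (2 * N₂) := by
      have hN₂' : (p₂ : ℤ) = 2 * N₂ + 1 := by exact_mod_cast hN₂
      obtain ⟨x, y, hxy⟩ := hodd
      push_cast at hw huv
      refine ⟨x + y * (u * (1 - a) - q * M * w) , -y, ?_⟩
      linear_combination hxy + y * huv + y * hw + y * hN₂'
    exact IsCoprime.of_mul_right_right this
  have := pow_gcd_eq_one.mpr ⟨hx₁, hx₂⟩
  rwa [hc.gcd_eq_one, pow_one] at this

end Arithmetic

open Matrix

/-! ### Matrix identities in `SL₃(ℤ)` -/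

section SLThree

/-- The image of a `2 × 2` matrix of determinant one in the upper left corner of `SL₃(ℤ)`. -/
def upperBlock (a b c d : ℤ) (h : a * d - b * c = 1) : SpecialLinearGroup (Fin 3) ℤ :=
  ⟨!![a, b, 0; c, d, 0; 0, 0, 1], by simp [det_fin_three]; linarith⟩

/-- The image of a `2 × 2` matrix of determinant one in the lower right corner of `SL₃(ℤ)`. -/
def lowerBlock (a b c d : ℤ) (h : a * d - b * c = 1) : SpecialLinearGroup (Fin 3) ℤ :=
  ⟨!![1, 0, 0; 0, a, b; 0, c, d], by simp [det_fin_three]; linarith⟩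

/-- The image of a `2 × 2` matrix of determinant one in rows and columns `0`, `2` of `SL₃(ℤ)`. -/
def outerBlock (a b c d : ℤ) (h : a * d - b * c = 1) : SpecialLinearGroup (Fin 3) ℤ :=
  ⟨!![a, 0, b; 0, 1, 0; c, 0, d], by simp [det_fin_three]; linarith⟩

lemma coe_upperBlock (a b c d : ℤ) (h : a * d - b * c = 1) :
    (upperBlock a b c d h : Matrix (Fin 3) (Fin 3) ℤ) = !![a, b, 0; c, d, 0; 0, 0, 1] := rfl

lemma coe_lowerBlock (a b c d : ℤ) (h : a * d - b * c = 1) :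
    (lowerBlock a b c d h : Matrix (Fin 3) (Fin 3) ℤ) = !![1, 0, 0; 0, a, b; 0, c, d] := rfl

lemma coe_outerBlock (a b c d : ℤ) (h : a * d - b * c = 1) :
    (outerBlock a b c d h : Matrix (Fin 3) (Fin 3) ℤ) = !![a, 0, b; 0, 1, 0; c, 0, d] := rfl

/-- The elementary matrix `1 + t E_{ij}` in `SL₃(ℤ)`. -/
def elem (i j : Fin 3) (t : ℤ) (h : i ≠ j := by decide) : SpecialLinearGroup (Fin 3) ℤ :=
  SpecialLinearGroup.transvection h t

lemma coe_elem (i j : Fin 3) (t : ℤ) (h : i ≠ j) :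
    (elem i j t h : Matrix (Fin 3) (Fin 3) ℤ) =
      !![1, if i = 0 ∧ j = 1 then t else 0, if i = 0 ∧ j = 2 then t else 0;
        if i = 1 ∧ j = 0 then t else 0, 1, if i = 1 ∧ j = 2 then t else 0;
        if i = 2 ∧ j = 0 then t else 0, if i = 2 ∧ j = 1 then t else 0, 1] := by
  ext k l
  fin_cases i <;> fin_cases j <;> fin_cases k <;> fin_cases l <;>
    simp [elem, SpecialLinearGroup.transvection, Matrix.transvection] at h ⊢

section
variable {a b c d : ℤ} (h : a * d - b * c = 1) (t : ℤ)

lemma elem02_mul_upperBlock :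
    elem 0 2 t * upperBlock a b c d h =
    upperBlock a b c d h * elem 0 2 t * (elem 0 2 ((d - 1) * t) * elem 1 2 (-c * t)) := by
  ext i j
  fin_cases i <;> fin_cases j <;>
    simp [coe_elem, coe_upperBlock, Matrix.mul_apply, Fin.sum_univ_three] <;> grind

lemma elem12_mul_upperBlock :
    elem 1 2 t * upperBlock a b c d h =
    upperBlock a b c d h * elem 1 2 t * (elem 0 2 (-b * t) * elem 1 2 ((a - 1) * t)) := by
  ext i j
  fin_cases i <;> fin_cases j <;>
    simp [coe_elem, coe_upperBlock, Matrix.mul_apply, Fin.sum_univ_three] <;> grind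

lemma elem20_mul_upperBlock :
    elem 2 0 t * upperBlock a b c d h =
    upperBlock a b c d h * elem 2 0 t * (elem 2 0 ((a - 1) * t) * elem 2 1 (b * t)) := by
  ext i j
  fin_cases i <;> fin_cases j <;>
    simp [coe_elem, coe_upperBlock, Matrix.mul_apply, Fin.sum_univ_three] <;> grind

lemma elem21_mul_upperBlock :
    elem 2 1 t * upperBlock a b c d h =
    upperBlock a b c d h * elem 2 1 t * (elem 2 0 (c * t) * elem 2 1 ((d - 1) * t)) := by
  ext i j
  fin_cases i <;> fin_cases j <;>
    simp [coe_elem, coe_upperBlock, Matrix.mul_apply, Fin.sum_univ_three] <;> grind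

lemma elem10_eq :
    elem 1 0 t = elem 1 2 t * elem 2 0 1 * elem 1 2 (-t) * elem 2 0 (-1) := by
  ext i j
  fin_cases i <;> fin_cases j <;>
    simp [coe_elem, Matrix.mul_apply, Fin.sum_univ_three]

lemma elem01_eq :
    elem 0 1 t = elem 0 2 t * elem 2 1 1 * elem 0 2 (-t) * elem 2 1 (-1) := by
  ext i j
  fin_cases i <;> fin_cases j <;>
    simp [coe_elem, Matrix.mul_apply, Fin.sum_univ_three]

/-- A signed permutation matrix conjugating the upper left corner to the lower right one, written
as a product of elementary matrices. -/
def weylCycle : SpecialLinearGroup (Fin 3) ℤ :=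
  elem 0 1 1 * elem 1 0 (-1) * elem 0 1 1 * (elem 1 2 1 * elem 2 1 (-1) * elem 1 2 1)

/-- A signed permutation matrix exchanging the last two coordinates, written as a product of
elementary matrices. -/
def weylSwap : SpecialLinearGroup (Fin 3) ℤ :=
  elem 1 2 1 * elem 2 1 (-1) * elem 1 2 1

lemma coe_weylCycle :
    (weylCycle : Matrix (Fin 3) (Fin 3) ℤ) = !![0, 0, 1; -1, 0, 0; 0, -1, 0] := by
  ext i j
  fin_cases i <;> fin_cases j <;>
    simp [coe_elem, weylCycle, Matrix.mul_apply, Fin.sum_univ_three]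

lemma coe_weylSwap :
    (weylSwap : Matrix (Fin 3) (Fin 3) ℤ) = !![1, 0, 0; 0, 0, 1; 0, -1, 0] := by
  ext i j
  fin_cases i <;> fin_cases j <;>
    simp [coe_elem, weylSwap, Matrix.mul_apply, Fin.sum_univ_three]

lemma upperBlock_mul_weylSwap :
    upperBlock a b c d h * weylSwap = weylSwap * outerBlock a b c d h := by
  ext i j
  fin_cases i <;> fin_cases j <;>
    simp [coe_weylSwap, coe_upperBlock, coe_outerBlock, Matrix.mul_apply, Fin.sum_univ_three]

lemma weylCycle_mul_upperBlock :
    weylCycle * upperBlock a b c d h = lowerBlock a b c d h * weylCycle := by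
  ext i j
  fin_cases i <;> fin_cases j <;>
    simp [coe_weylCycle, coe_upperBlock, coe_lowerBlock, Matrix.mul_apply, Fin.sum_univ_three]

lemma elem10_mul_upperBlock :
    elem 1 0 t * upperBlock a b c d h =
      upperBlock a b (c + t * a) (d + t * b) (by linear_combination h) := by
  ext i j
  fin_cases i <;> fin_cases j <;>
    simp [coe_elem, coe_upperBlock, Matrix.mul_apply, Fin.sum_univ_three] <;> ring

lemma upperBlock_mul_elem01 :
    upperBlock a b c d h * elem 0 1 t =
      upperBlock a (b + t * a) c (d + t * c) (by linear_combination h) := by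
  ext i j
  fin_cases i <;> fin_cases j <;>
    simp [coe_elem, coe_upperBlock, Matrix.mul_apply, Fin.sum_univ_three] <;> ring

lemma upperBlock_mul_elem10 :
    upperBlock a b c d h * elem 1 0 t = elem 1 0 t * upperBlock (a + t * b) b
      (c + t * d - t * (a + t * b)) (d - t * b) (by linear_combination h) := by
  ext i j
  fin_cases i <;> fin_cases j <;>
    simp [coe_elem, coe_upperBlock, Matrix.mul_apply, Fin.sum_univ_three] <;> ring

lemma upperBlock_one_eq :
    upperBlock 1 b 0 1 (by ring) = elem 0 1 b := by
  ext i j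
  fin_cases i <;> fin_cases j <;>
    simp [coe_elem, coe_upperBlock]

/-- The identity behind multiplicativity of Mennicke symbols: up to elementary matrices of level `m`,
the product of two blocks with first rows `(a, b₁)` and `(a, b₂)` is a block with first row
`(a, b₁ * b₂)`. -/
lemma upperBlock_mul_lowerBlock {a b₁ c₁ d₁ b₂ c₂ d₂ : ℤ} (h₁ : a * d₁ - b₁ * c₁ = 1)
    (h₂ : a * d₂ - b₂ * c₂ = 1) :
    elem 2 1 (-c₂) * (upperBlock a b₁ c₁ d₁ h₁ * lowerBlock a b₂ c₂ d₂ h₂) *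
        (elem 0 1 (-b₁) * elem 1 0 (-c₁) * elem 1 2 (-d₁ * b₂)) =
      outerBlock a (b₁ * b₂) (-c₁ * c₂) (d₂ - c₂ * b₂ * d₁)
        (by linear_combination h₂ - c₂ * b₂ * h₁) := by
  ext i j
  fin_cases i <;> fin_cases j <;>
    simp [coe_elem, coe_upperBlock, coe_lowerBlock, coe_outerBlock, Matrix.mul_apply,
      Fin.sum_univ_three] <;> grind

end

/-! ### Mennicke symbols -/

section Symbol

variable {N : Subgroup (SpecialLinearGroup (Fin 3) ℤ)} [N.Normal] {m : ℤ}

/-- The conclusion says that `g` commutes with `x` modulo `N`. -/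
lemma mem_centralizer_of_mul_eq {G : Type*} [Group G] {N : Subgroup G} [N.Normal] {x g n : G}
    (hn : n ∈ N) (h : g * x = x * g * n) :
    g ∈ (Subgroup.centralizer {QuotientGroup.mk' N x}).comap (QuotientGroup.mk' N) := by
  rw [Subgroup.mem_comap, Subgroup.mem_centralizer_singleton_iff, ← map_mul, ← map_mul, h, map_mul,
    (QuotientGroup.eq_one_iff n).mpr hn |> (show QuotientGroup.mk' N n = 1 from ·), mul_one]

/-- A block congruent to `1` modulo `m` commutes modulo `N` with every elementary matrix: the
commutators with those involving the third coordinate are explicit products of elementary matrices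
of level `m`, and the remaining two kinds are generated by these. -/
lemma elem_mem_centralizer
    (hN : ∀ (i j : Fin 3) (h : i ≠ j) (t : ℤ), m ∣ t → elem i j t h ∈ N) {a b c d : ℤ}
    (h : a * d - b * c = 1) (ha : m ∣ a - 1) (hb : m ∣ b) (hc : m ∣ c) (hd : m ∣ d - 1)
    (i j : Fin 3) (hij : i ≠ j) (t : ℤ) :
    elem i j t hij ∈ (Subgroup.centralizer {QuotientGroup.mk' N (upperBlock a b c d h)}).comap
      (QuotientGroup.mk' N) := by
  have h02 := fun t => mem_centralizer_of_mul_eq (N.mul_mem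
    (hN 0 2 (by decide) _ (hd.mul_right t)) (hN 1 2 (by decide) _ (hc.neg_right.mul_right t)))
    (elem02_mul_upperBlock h t)
  have h12 := fun t => mem_centralizer_of_mul_eq (N.mul_mem
    (hN 0 2 (by decide) _ (hb.neg_right.mul_right t)) (hN 1 2 (by decide) _ (ha.mul_right t)))
    (elem12_mul_upperBlock h t)
  have h20 := fun t => mem_centralizer_of_mul_eq (N.mul_mem
    (hN 2 0 (by decide) _ (ha.mul_right t)) (hN 2 1 (by decide) _ (hb.mul_right t)))
    (elem20_mul_upperBlock h t)
  have h21 := fun t => mem_centralizer_of_mul_eq (N.mul_mem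
    (hN 2 0 (by decide) _ (hc.mul_right t)) (hN 2 1 (by decide) _ (hd.mul_right t)))
    (elem21_mul_upperBlock h t)
  fin_cases i <;> fin_cases j <;> first | exact absurd rfl hij | skip
  · change elem 0 1 t ∈ _
    rw [elem01_eq]
    exact mul_mem (mul_mem (mul_mem (h02 _) (h21 _)) (h02 _)) (h21 _)
  · exact h02 t
  · change elem 1 0 t ∈ _
    rw [elem10_eq]
    exact mul_mem (mul_mem (mul_mem (h12 _) (h20 _)) (h12 _)) (h20 _)
  · exact h12 t
  · exact h20 t
  · exact h21 t

/-- Conjugating `x` by an element that commutes with it modulo `N` does not change its class. -/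
lemma mk_eq_of_mul_eq {G : Type*} [Group G] {N : Subgroup G} [N.Normal] {x y g : G}
    (hg : g ∈ (Subgroup.centralizer {QuotientGroup.mk' N x}).comap (QuotientGroup.mk' N))
    (h : x * g = g * y) : QuotientGroup.mk' N x = QuotientGroup.mk' N y := by
  rw [Subgroup.mem_comap, Subgroup.mem_centralizer_singleton_iff] at hg
  have h' := congrArg (QuotientGroup.mk' N) h
  rw [map_mul, map_mul, ← hg] at h'
  exact mul_left_cancel h'

open Classical in
/-- The Mennicke symbol of `(a, b)`: the class modulo `N` of a matrix of `SL₃(ℤ)` of the form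
`upperBlock a b c d` with `m ∣ c`. The value is `1` when there is no such matrix. -/
noncomputable def mennicke (N : Subgroup (SpecialLinearGroup (Fin 3) ℤ)) [N.Normal] (m a b : ℤ) :
    SpecialLinearGroup (Fin 3) ℤ ⧸ N :=
  if h : ∃ c d : ℤ, a * d - b * c = 1 ∧ m ∣ c then
    QuotientGroup.mk' N (upperBlock a b h.choose h.choose_spec.choose h.choose_spec.choose_spec.1)
  else 1

lemma exists_completion {a b : ℤ} (ha : m ∣ a - 1) (hab : IsCoprime a b) :
    ∃ c d : ℤ, a * d - b * c = 1 ∧ m ∣ c := by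
  obtain ⟨u, v, huv⟩ := hab
  exact ⟨v * (a - 1), u + v * b, by linear_combination huv, ha.mul_left v⟩

lemma dvd_completion_sub_one {a b c d : ℤ} (h : a * d - b * c = 1) (ha : m ∣ a - 1) (hb : m ∣ b) :
    m ∣ d - 1 := by
  rw [show d - 1 = b * c - (a - 1) * d by linear_combination h]
  exact (hb.mul_right c).sub (ha.mul_right d)

/-- Two matrices `upperBlock a b c d` with the same first row and `m ∣ c` differ by an elementary
matrix of level `m`. -/
lemma mk_upperBlock_eq
    (hN : ∀ (i j : Fin 3) (h : i ≠ j) (t : ℤ), m ∣ t → elem i j t h ∈ N)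
    {a b c d c' d' : ℤ} (h : a * d - b * c = 1) (hc : m ∣ c) (h' : a * d' - b * c' = 1)
    (hc' : m ∣ c') :
    QuotientGroup.mk' N (upperBlock a b c' d' h') = QuotientGroup.mk' N (upperBlock a b c d h) := by
  have hmem : elem 1 0 (d * c' - c * d') ∈ N :=
    hN 1 0 (by decide) _ ((hc'.mul_left d).sub (hc.mul_right d'))
  have e : elem 1 0 (d * c' - c * d') * upperBlock a b c d h = upperBlock a b c' d' h' := by
    rw [elem10_mul_upperBlock]
    congr 1
    · linear_combination c' * h - c * h'
    · linear_combination d' * h - d * h'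
  rw [← e, map_mul, QuotientGroup.mk'_apply, (QuotientGroup.eq_one_iff _).mpr hmem, one_mul]

/-- The Mennicke symbol does not depend on the choice of the second row. -/
lemma mennicke_eq
    (hN : ∀ (i j : Fin 3) (h : i ≠ j) (t : ℤ), m ∣ t → elem i j t h ∈ N)
    {a b c d : ℤ} (h : a * d - b * c = 1) (hc : m ∣ c) :
    mennicke N m a b = QuotientGroup.mk' N (upperBlock a b c d h) := by
  have hex : ∃ c d : ℤ, a * d - b * c = 1 ∧ m ∣ c := ⟨c, d, h, hc⟩
  rw [mennicke, dif_pos hex]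
  exact mk_upperBlock_eq hN h hc _ hex.choose_spec.choose_spec.2

lemma mennicke_add_left
    (hN : ∀ (i j : Fin 3) (h : i ≠ j) (t : ℤ), m ∣ t → elem i j t h ∈ N)
    {a b : ℤ} (t : ℤ) (ha : m ∣ a - 1) (hb : m ∣ b) (hab : IsCoprime a b) :
    mennicke N m (a + t * b) b = mennicke N m a b := by
  obtain ⟨c, d, h, hc⟩ := exists_completion ha hab
  have hd := dvd_completion_sub_one h ha hb
  rw [mennicke_eq hN h hc, mennicke_eq hN (c := c + t * d - t * (a + t * b)) (d := d - t * b)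
    (by linear_combination h)]
  · exact (mk_eq_of_mul_eq (elem_mem_centralizer hN h ha hb hc hd 1 0 (by decide) t)
      (upperBlock_mul_elem10 h t)).symm
  · rw [show c + t * d - t * (a + t * b) = c + (t * (d - 1) - t * (a - 1)) - t * (t * b) by ring]
    exact (hc.add ((hd.mul_left t).sub (ha.mul_left t))).sub ((hb.mul_left t).mul_left t)

lemma mennicke_add_right
    (hN : ∀ (i j : Fin 3) (h : i ≠ j) (t : ℤ), m ∣ t → elem i j t h ∈ N)
    {a b : ℤ} (t : ℤ) (ht : m ∣ t) (ha : m ∣ a - 1) (hab : IsCoprime a b) :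
    mennicke N m a (b + t * a) = mennicke N m a b := by
  obtain ⟨c, d, h, hc⟩ := exists_completion ha hab
  rw [mennicke_eq hN h hc, mennicke_eq hN (c := c) (d := d + t * c) (by linear_combination h) hc,
    ← upperBlock_mul_elem01 h t, map_mul, QuotientGroup.mk'_apply _ (elem 0 1 t),
    (QuotientGroup.eq_one_iff _).mpr (hN 0 1 (by decide) t ht), mul_one]

lemma mennicke_one_left
    (hN : ∀ (i j : Fin 3) (h : i ≠ j) (t : ℤ), m ∣ t → elem i j t h ∈ N)
    {b : ℤ} (hb : m ∣ b) : mennicke N m 1 b = 1 := by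
  rw [mennicke_eq hN (c := 0) (d := 1) (by ring) (dvd_zero m), upperBlock_one_eq]
  exact (QuotientGroup.eq_one_iff _).mpr (hN 0 1 (by decide) b hb)

/-- Moving a block to another corner of `SL₃(ℤ)` is conjugation by a product of elementary matrices,
which does not change its class. The second block is moved to the lower right corner and multiplied
with the first; the product is, up to elementary matrices of level `m`, an outer block. -/
lemma mennicke_mul
    (hN : ∀ (i j : Fin 3) (h : i ≠ j) (t : ℤ), m ∣ t → elem i j t h ∈ N)
    {a b₁ b₂ : ℤ} (ha : m ∣ a - 1) (hb₁ : m ∣ b₁) (hb₂ : m ∣ b₂)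
    (hab₁ : IsCoprime a b₁) (hab₂ : IsCoprime a b₂) :
    mennicke N m a (b₁ * b₂) = mennicke N m a b₁ * mennicke N m a b₂ := by
  obtain ⟨c₁, d₁, h₁, hc₁⟩ := exists_completion ha hab₁
  obtain ⟨c₂, d₂, h₂, hc₂⟩ := exists_completion ha hab₂
  have hd₂ := dvd_completion_sub_one h₂ ha hb₂
  have h₃ : a * (d₂ - c₂ * b₂ * d₁) - b₁ * b₂ * (-c₁ * c₂) = 1 := by
    linear_combination h₂ - c₂ * b₂ * h₁
  have hc₃ : m ∣ -c₁ * c₂ := hc₂.mul_left _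
  have hd₃ := dvd_completion_sub_one h₃ ha (hb₂.mul_left b₁)
  rw [mennicke_eq hN h₁ hc₁, mennicke_eq hN h₂ hc₂, mennicke_eq hN h₃ hc₃]
  have hswap := mk_eq_of_mul_eq (g := weylSwap)
    (by
      have := elem_mem_centralizer hN h₃ ha (hb₂.mul_left b₁) hc₃ hd₃
      exact mul_mem (mul_mem (this _ _ _ _) (this _ _ _ _)) (this _ _ _ _))
    (upperBlock_mul_weylSwap h₃)
  have hcycle := mk_eq_of_mul_eq (N := N) (x := upperBlock a b₂ c₂ d₂ h₂)
    (y := lowerBlock a b₂ c₂ d₂ h₂) (g := weylCycle⁻¹)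
    (by
      have := elem_mem_centralizer hN h₂ ha hb₂ hc₂ hd₂
      exact inv_mem (mul_mem (mul_mem (mul_mem (this _ _ _ _) (this _ _ _ _)) (this _ _ _ _))
        (mul_mem (mul_mem (this _ _ _ _) (this _ _ _ _)) (this _ _ _ _))))
    (by rw [mul_inv_eq_iff_eq_mul, mul_assoc, ← weylCycle_mul_upperBlock, inv_mul_cancel_left])
  have one : ∀ (i j : Fin 3) (h : i ≠ j) (t : ℤ), m ∣ t →
      QuotientGroup.mk' N (elem i j t h) = 1 := fun i j h t ht =>
    (QuotientGroup.eq_one_iff _).mpr (hN i j h t ht)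
  rw [hswap, hcycle, ← upperBlock_mul_lowerBlock h₁ h₂]
  simp only [map_mul]
  rw [one 2 1 _ _ hc₂.neg_right, one 0 1 _ _ hb₁.neg_right, one 1 0 _ _ hc₁.neg_right,
    one 1 2 _ _ (hb₂.mul_left _)]
  simp

/-- The `SL₃` case of the main argument: a normal subgroup containing the elementary matrices of
level `m` contains the `2 × 2` blocks congruent to `1` modulo `m`. -/
theorem upperBlock_mem
    (hN : ∀ (i j : Fin 3) (h : i ≠ j) (t : ℤ), m ∣ t → elem i j t h ∈ N)
    (hm : 0 < m) (hm4 : 4 ∣ m) {a b c d : ℤ} (h : a * d - b * c = 1)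
    (ha : m ∣ a - 1) (hb : m ∣ b) (hc : m ∣ c) : upperBlock a b c d h ∈ N := by
  have cop : ∀ {a : ℤ}, m ∣ a - 1 → IsCoprime a m := by
    rintro a ⟨k, hk⟩
    exact ⟨1, -k, by linear_combination hk⟩
  have hmm : ∀ {a : ℤ}, m ∣ a - 1 → mennicke N m a m = 1 := by
    intro a ha
    obtain ⟨k, hk⟩ := id ha
    rw [← mennicke_add_left hN (-k) ha dvd_rfl (cop ha), show a + -k * m = 1 by
      linear_combination hk, mennicke_one_left hN dvd_rfl]
  have key : ∀ b, IsCoprime a b → mennicke N m a (b * m) = 1 := by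
    intro b hab
    -- The factor `m` turns the condition `m ∣ b` of Mennicke symbols into coprimality to `a` alone.
    refine symbol_trivial (f := fun a b => mennicke N m a (b * m)) hm hm4 ?_ ?_ ?_ ?_ ?_ a b ha hab
    · intro a b c ha hb hc
      have hbm := hb.mul_right (cop ha)
      have hcm := hc.mul_right (cop ha)
      have e := mennicke_mul hN ha (dvd_mul_left m b) (dvd_mul_left m c) hbm hcm
      have e' := mennicke_mul hN ha (dvd_mul_left m (b * c)) dvd_rfl
        ((hb.mul_right hc).mul_right (cop ha)) (cop ha)
      rw [hmm ha, mul_one] at e'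
      change mennicke N m a (b * c * m) = mennicke N m a (b * m) * mennicke N m a (c * m)
      rw [← e, ← e']
      congr 1
      ring
    · intro a b t ha hab
      rw [show (b + t * a) * m = b * m + (t * m) * a by ring]
      exact mennicke_add_right hN _ (dvd_mul_left m t) ha (hab.mul_right (cop ha))
    · intro a b t ha hab
      exact mennicke_add_left hN t ha (dvd_mul_left m b) (hab.mul_right (cop ha))
    · intro a ha
      simpa using hmm ha
    · intro a ha
      obtain ⟨k, hk⟩ := id ha
      change mennicke N m a (-1 * m) = 1
      rw [← mennicke_add_left hN k ha (dvd_mul_left m _)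
        (isCoprime_one_right.neg_right.mul_right (cop ha)),
        show a + k * (-1 * m) = 1 by linear_combination hk, mennicke_one_left hN (dvd_mul_left m _)]
  obtain ⟨b', rfl⟩ := hb
  have hab : IsCoprime a (m * b') := ⟨d, -c, by linear_combination h⟩
  have e := key b' hab.of_mul_right_right
  rw [mul_comm, mennicke_eq hN h hc] at e
  exact (QuotientGroup.eq_one_iff _).mp e

end Symbol

end SLThree

/-! ### Unimodular vectors -/

/-- If no prime divides all of `x`, `a`, `c`, then `x + t * a` is coprime to `c` when `t` is the
product of the primes that divide `c` but not `x`. -/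
lemma exists_isCoprime_add_mul {x a c : ℤ} (hc : c ≠ 0)
    (h : ∀ r : ℕ, r.Prime → (r : ℤ) ∣ x → (r : ℤ) ∣ a → ¬ (r : ℤ) ∣ c) :
    ∃ t : ℤ, IsCoprime (x + t * a) c := by
  classical
  refine ⟨∏ r ∈ c.natAbs.primeFactors.filter (fun r : ℕ => ¬ (r : ℤ) ∣ x), (r : ℤ), ?_⟩
  rw [Int.isCoprime_iff_gcd_eq_one]
  refine Nat.Coprime.gcd_eq_one (Nat.coprime_of_dvd fun r hr h₁ h₂ => ?_)
  have hrp : Prime (r : ℤ) := Nat.prime_iff_prime_int.mp hr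
  have hrc : (r : ℤ) ∣ c := Int.natCast_dvd.mpr h₂
  have hr₁ := Int.natCast_dvd.mpr h₁
  by_cases hrx : (r : ℤ) ∣ x
  · rcases hrp.dvd_or_dvd ((dvd_add_right hrx).mp hr₁) with ht | ha
    · obtain ⟨r', hr', hd⟩ := (hrp.dvd_finsetProd_iff _).mp ht
      rw [Finset.mem_filter, Nat.mem_primeFactors] at hr'
      rw [Int.natCast_dvd_natCast, Nat.prime_dvd_prime_iff_eq hr hr'.1.1] at hd
      exact hr'.2 (hd ▸ hrx)
    · exact h r hr hrx ha hrc
  · refine hrx ((dvd_add_left (Dvd.dvd.mul_right (Finset.dvd_prod_of_mem _ ?_) a)).mp hr₁)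
    rw [Finset.mem_filter, Nat.mem_primeFactors]
    exact ⟨⟨hr, h₂, by simpa using hc⟩, hrx⟩

/-- A unimodular vector `(a, b)` with `a ≠ 0` and `b` of length at least two can be shortened: some
`b + w * a` is unimodular. Only the coordinates `p` and `q` are changed, `q` in order to make the
gcd `c` of the coordinates other than `p` nonzero, and `p` in order to be coprime to `c`. -/
lemma exists_unimodular_shift {ι : Type*} [DecidableEq ι] {S : Finset ι} {p q : ι} (hp : p ∈ S) (hq : q ∈ S) (hpq : p ≠ q)
    {a : ℤ} (ha : a ≠ 0) (b y : ι → ℤ) (y₀ : ℤ) (h : a * y₀ + ∑ j ∈ S, b j * y j = 1) :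
    ∃ w s : ι → ℤ, ∑ j ∈ S, s j * (b j + w j * a) = 1 := by
  obtain ⟨τ, hτ⟩ : ∃ τ : ℤ, b q + τ * a ≠ 0 := by
    by_cases hb : b q = 0
    · exact ⟨1, by simpa [hb]⟩
    · exact ⟨0, by simpa⟩
  set b' : ι → ℤ := fun j => b j + (if j = q then τ else 0) * a with hb'
  obtain ⟨c, hc⟩ := IsPrincipalIdealRing.principal (Ideal.span (b' '' ↑(S.erase p)))
  have hcdvd : ∀ j ∈ S.erase p, c ∣ b' j := fun j hj => by
    have : b' j ∈ Ideal.span (b' '' ↑(S.erase p)) := Ideal.subset_span ⟨j, hj, rfl⟩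
    rw [hc] at this
    exact Ideal.mem_span_singleton.mp this
  have hc0 : c ≠ 0 := by
    rintro rfl
    exact hτ (by simpa [hb'] using hcdvd q (Finset.mem_erase.mpr ⟨hpq.symm, hq⟩))
  have hcmem : c ∈ Ideal.span (b' '' ↑(S.erase p)) := by
    rw [hc]; exact Ideal.mem_span_singleton_self c
  obtain ⟨s, hs⟩ : ∃ s : ι → ℤ, ∑ j ∈ S.erase p, s j * b' j = c := by
    obtain ⟨s, hs⟩ := (Submodule.mem_span_image_finset_iff_exists_fun ℤ).mp hcmem
    refine ⟨fun j => if hj : j ∈ S.erase p then s ⟨j, hj⟩ else 0, ?_⟩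
    rw [← hs, ← Finset.sum_coe_sort]
    exact Finset.sum_congr rfl fun j _ => by simp only [dif_pos j.2, smul_eq_mul]
  obtain ⟨t, u, v, huv⟩ := exists_isCoprime_add_mul (x := b p) (a := a) hc0 (by
    intro r hr hrb hra hrc
    refine (Nat.prime_iff_prime_int.mp hr).not_dvd_one ?_
    rw [← h]
    refine dvd_add (hra.mul_right _) (Finset.dvd_sum fun j hj => Dvd.dvd.mul_right ?_ _)
    by_cases hjp : j = p
    · exact hjp ▸ hrb
    · have := hrc.trans (hcdvd j (Finset.mem_erase.mpr ⟨hjp, hj⟩))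
      exact (dvd_add_left (hra.mul_left _)).mp this)
  refine ⟨fun j => if j = p then t else if j = q then τ else 0,
    fun j => if j = p then u else v * s j, ?_⟩
  rw [← Finset.add_sum_erase _ _ hp, ← huv, ← hs, Finset.mul_sum]
  congr 1
  · simp
  · refine Finset.sum_congr rfl fun j hj => ?_
    simp [Finset.ne_of_mem_erase hj, hb', mul_assoc]

/-! ### Reduction to `2 × 2` blocks -/

section Reduction

variable {ι : Type*} [Fintype ι] [DecidableEq ι] {N : Subgroup (SpecialLinearGroup ι ℤ)} {m : ℤ}

lemma mul_transvection_apply (g : SpecialLinearGroup ι ℤ) {a b : ι} (h : a ≠ b) (t : ℤ) (i j : ι) :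
    (g * SpecialLinearGroup.transvection h t) i j = g i j + if j = b then t * g i a else 0 := by
  change ((g : Matrix ι ι ℤ) * Matrix.transvection a b t) i j = _
  rw [Matrix.transvection, Matrix.mul_add, Matrix.mul_one, Matrix.add_apply]
  split_ifs with hj
  · subst hj; simp [mul_comm]
  · simp [Matrix.mul_single_apply_of_ne, hj]

lemma transvection_mul_apply (g : SpecialLinearGroup ι ℤ) {a b : ι} (h : a ≠ b) (t : ℤ) (i j : ι) :
    (SpecialLinearGroup.transvection h t * g) i j = g i j + if i = a then t * g b j else 0 := by
  change (Matrix.transvection a b t * (g : Matrix ι ι ℤ)) i j = _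
  rw [Matrix.transvection, Matrix.add_mul, Matrix.one_mul, Matrix.add_apply]
  split_ifs with hj
  · subst hj; simp
  · simp [Matrix.single_mul_apply_of_ne, hj]

/-- Adding multiples of the columns in `S` to column `k` by right multiplication. -/
lemma exists_add_to_col (hN : ∀ (i j : ι) (h : i ≠ j) (t : ℤ), m ∣ t →
      SpecialLinearGroup.transvection h t ∈ N)
    (g : SpecialLinearGroup ι ℤ) (k : ι) (w : ι → ℤ) (S : Finset ι) (hk : k ∉ S)
    (hw : ∀ j ∈ S, m ∣ w j) :
    ∃ u ∈ N, ∀ i j, (g * u) i j = g i j + if j = k then ∑ l ∈ S, w l * g i l else 0 := by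
  induction S using Finset.induction_on with
  | empty => exact ⟨1, one_mem N, by simp⟩
  | insert s S hs ih =>
    obtain ⟨u, hu, h⟩ := ih (fun h => hk (Finset.mem_insert_of_mem h))
      (fun j hj => hw j (Finset.mem_insert_of_mem hj))
    have hsk : s ≠ k := fun h => hk (h ▸ Finset.mem_insert_self s S)
    refine ⟨u * SpecialLinearGroup.transvection hsk (w s),
      mul_mem hu (hN _ _ _ _ (hw s (Finset.mem_insert_self s S))), fun i j => ?_⟩
    rw [← mul_assoc, mul_transvection_apply, h, h, Finset.sum_insert hs, if_neg hsk]
    split_ifs <;> ring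

/-- Adding multiples of column `k` to the columns in `S` by right multiplication. -/
lemma exists_add_col (hN : ∀ (i j : ι) (h : i ≠ j) (t : ℤ), m ∣ t →
      SpecialLinearGroup.transvection h t ∈ N)
    (g : SpecialLinearGroup ι ℤ) (k : ι) (w : ι → ℤ) (S : Finset ι) (hk : k ∉ S)
    (hw : ∀ j ∈ S, m ∣ w j) :
    ∃ u ∈ N, ∀ i j, (g * u) i j = g i j + if j ∈ S then w j * g i k else 0 := by
  induction S using Finset.induction_on with
  | empty => exact ⟨1, one_mem N, by simp⟩
  | insert s S hs ih =>
    have hkS : k ∉ S := fun h => hk (Finset.mem_insert_of_mem h)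
    obtain ⟨u, hu, h⟩ := ih hkS (fun j hj => hw j (Finset.mem_insert_of_mem hj))
    have hks : k ≠ s := fun h => hk (h ▸ Finset.mem_insert_self s S)
    refine ⟨u * SpecialLinearGroup.transvection hks (w s),
      mul_mem hu (hN _ _ _ _ (hw s (Finset.mem_insert_self s S))), fun i j => ?_⟩
    rw [← mul_assoc, mul_transvection_apply, h, h, if_neg hkS]
    by_cases hj : j = s
    · subst hj; simp [hs]
    · simp [hj]

/-- Adding multiples of row `k` to the rows in `S` by left multiplication. -/
lemma exists_add_row (hN : ∀ (i j : ι) (h : i ≠ j) (t : ℤ), m ∣ t →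
      SpecialLinearGroup.transvection h t ∈ N)
    (g : SpecialLinearGroup ι ℤ) (k : ι) (w : ι → ℤ) (S : Finset ι) (hk : k ∉ S)
    (hw : ∀ j ∈ S, m ∣ w j) :
    ∃ u ∈ N, ∀ i j, (u * g) i j = g i j + if i ∈ S then w i * g k j else 0 := by
  induction S using Finset.induction_on with
  | empty => exact ⟨1, one_mem N, by simp⟩
  | insert s S hs ih =>
    have hkS : k ∉ S := fun h => hk (Finset.mem_insert_of_mem h)
    obtain ⟨u, hu, h⟩ := ih hkS (fun j hj => hw j (Finset.mem_insert_of_mem hj))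
    have hsk : s ≠ k := fun h => hk (h ▸ Finset.mem_insert_self s S)
    refine ⟨SpecialLinearGroup.transvection hsk (w s) * u,
      mul_mem (hN _ _ _ _ (hw s (Finset.mem_insert_self s S))) hu, fun i j => ?_⟩
    rw [mul_assoc, transvection_mul_apply, h, h, if_neg hkS]
    by_cases hj : i = s
    · subst hj; simp [hs]
    · simp [hj]

/-- `g` agrees with the identity outside the rows and columns indexed by `S`, and is congruent to
the identity modulo `M`. -/
def IsCongruenceOn (S : Finset ι) (M : ℤ) (g : SpecialLinearGroup ι ℤ) : Prop :=
  (∀ i j, i ∉ S ∨ j ∉ S → g i j = (1 : Matrix ι ι ℤ) i j) ∧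
    ∀ i j, M ∣ g i j - (1 : Matrix ι ι ℤ) i j

/-- Row and column operations of level `m` clear row `k` and column `k` of a matrix that is congruent
to `1` modulo `M ^ 2`. The square is needed because the `S`-part of row `k` is unimodular only after
division by `M`: with `Σ s_j b_j = 1`, the entry `1 + M ^ 2 * z` is turned into `1` by subtracting
`Σ (M * z * s_j) * (M * b_j)`. -/
lemma congruenceOn_insert (hN : ∀ (i j : ι) (h : i ≠ j) (t : ℤ), m ∣ t →
      SpecialLinearGroup.transvection h t ∈ N)
    {S : Finset ι} {p q k : ι} (hp : p ∈ S) (hq : q ∈ S) (hpq : p ≠ q) (hk : k ∉ S)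
    {M : ℤ} (hM : 2 ≤ M) (hmM : m ∣ M) (hS : ∀ g, IsCongruenceOn S M g → g ∈ N)
    (g : SpecialLinearGroup ι ℤ) (hg : IsCongruenceOn (insert k S) (M ^ 2) g) : g ∈ N := by
  have hne : ∀ j ∈ S, j ≠ k := fun j hj h => hk (h ▸ hj)
  obtain ⟨hg₁, hg₂⟩ := hg
  obtain ⟨z, hz⟩ := hg₂ k k
  rw [Matrix.one_apply_eq] at hz
  have hx : ∀ j, ∃ x, j ∈ S → g k j = M ^ 2 * x := fun j => by
    obtain ⟨x, hx⟩ := hg₂ k j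
    exact ⟨x, fun hj => by rw [← hx, Matrix.one_apply_ne (hne j hj).symm, sub_zero]⟩
  choose x hx using hx
  have ha : g k k ≠ 0 := by
    intro h
    rw [h] at hz
    have : M ∣ 1 := ⟨-(M * z), by linear_combination -hz⟩
    have := Int.le_of_dvd one_pos this
    omega
  -- The entries of row `k` are coprime, because row `k` times column `k` of the inverse is `1`.
  have huni : g k k * g⁻¹ k k + ∑ j ∈ S, (M * x j) * (M * g⁻¹ j k) = 1 := by
    have h1 : ((g : Matrix ι ι ℤ) * (g⁻¹ : SpecialLinearGroup ι ℤ)) k k = 1 :=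
      (congrArg (fun A : SpecialLinearGroup ι ℤ => A k k) (mul_inv_cancel g)).trans
        (Matrix.one_apply_eq k)
    rw [Matrix.mul_apply,
      ← Finset.sum_subset (Finset.subset_univ (insert k S)), Finset.sum_insert hk] at h1
    · refine Eq.trans ?_ h1
      congr 1
      exact Finset.sum_congr rfl fun j hj => by rw [hx j hj]; ring
    · intro j _ hj
      rw [hg₁ k j (Or.inr hj), Matrix.one_apply_ne, zero_mul]
      exact fun h => hj (h ▸ Finset.mem_insert_self k S)
  obtain ⟨w, s, hws⟩ := exists_unimodular_shift hp hq hpq ha _ _ _ huni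
  obtain ⟨u₁, hu₁, h₁⟩ := exists_add_col hN g k (fun j => M * w j) S hk
    fun j _ => hmM.mul_right _
  obtain ⟨u₂, hu₂, h₂⟩ := exists_add_to_col hN (g * u₁) k (fun j => M * (-z * s j)) S hk
    fun j _ => hmM.mul_right _
  set g₁ := g * u₁
  set g₂ := g₁ * u₂
  have hgk : ∀ j ∈ S, g₁ k j = M * (M * x j + w j * g k k) := fun j hj => by
    rw [h₁, if_pos hj, hx j hj]; ring
  have hkk : g₂ k k = 1 := by
    have h11 : g₁ k k = g k k := by rw [h₁, if_neg hk, add_zero]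
    have : ∑ l ∈ S, M * (-z * s l) * g₁ k l = -(M ^ 2 * z) := by
      have e : ∑ l ∈ S, M * (-z * s l) * g₁ k l =
          ∑ l ∈ S, -(M ^ 2 * z) * (s l * (M * x l + w l * g k k)) :=
        Finset.sum_congr rfl fun j hj => by rw [hgk j hj]; ring
      rw [e, ← Finset.mul_sum, hws, mul_one]
    rw [h₂, if_pos rfl, this, h11]
    linear_combination hz
  have hd₁ : ∀ i j, M ∣ g₁ i j - (1 : Matrix ι ι ℤ) i j := fun i j => by
    rw [h₁, add_sub_right_comm]
    refine dvd_add ((dvd_pow_self M two_ne_zero).trans (hg₂ i j)) ?_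
    split_ifs
    · exact (dvd_mul_right _ _).mul_right _
    · exact dvd_zero _
  have hd₂ : ∀ i j, M ∣ g₂ i j - (1 : Matrix ι ι ℤ) i j := fun i j => by
    rw [h₂, add_sub_right_comm]
    refine dvd_add (hd₁ i j) ?_
    split_ifs
    · exact Finset.dvd_sum fun l _ => (dvd_mul_right _ _).mul_right _
    · exact dvd_zero _
  have hMk : ∀ j ∈ S, M ∣ g₂ k j := fun j hj => by
    simpa [Matrix.one_apply_ne (hne j hj).symm] using hd₂ k j
  obtain ⟨u₃, hu₃, h₃⟩ := exists_add_col hN g₂ k (fun j => -g₂ k j) S hk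
    fun j hj => (hmM.trans (hMk j hj)).neg_right
  set g₃ := g₂ * u₃
  have hd₃ : ∀ i j, M ∣ g₃ i j - (1 : Matrix ι ι ℤ) i j := fun i j => by
    rw [h₃, add_sub_right_comm]
    refine dvd_add (hd₂ i j) ?_
    split_ifs with hj
    · exact (hMk j hj).neg_right.mul_right _
    · exact dvd_zero _
  have hMk' : ∀ i ∈ S, M ∣ g₃ i k := fun i hi => by
    simpa [Matrix.one_apply_ne (hne i hi)] using hd₃ i k
  obtain ⟨u₄, hu₄, h₄⟩ := exists_add_row hN g₃ k (fun i => -g₃ i k) S hk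
    fun i hi => (hmM.trans (hMk' i hi)).neg_right
  -- The operations do not touch what lies outside the rows and columns in `insert k S`.
  have hout₁ : ∀ i j, i ∉ insert k S ∨ j ∉ insert k S → g₁ i j = (1 : Matrix ι ι ℤ) i j := by
    intro i j hij
    rw [h₁, hg₁ i j hij]
    split_ifs with hj
    · have hi := hij.resolve_right (fun h => h (Finset.mem_insert_of_mem hj))
      rw [hg₁ i k (Or.inl hi), Matrix.one_apply_ne (i := i) (j := k)
        (fun h => hi (h ▸ Finset.mem_insert_self k S)), mul_zero, add_zero]
    · exact add_zero _
  have hout₂ : ∀ i j, i ∉ insert k S ∨ j ∉ insert k S → g₂ i j = (1 : Matrix ι ι ℤ) i j := by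
    intro i j hij
    rw [h₂, hout₁ i j hij]
    split_ifs with hj
    · have hi := hij.resolve_right (fun h => h (hj ▸ Finset.mem_insert_self k S))
      rw [Finset.sum_eq_zero, add_zero]
      intro l hl
      rw [hout₁ i l (Or.inl hi), Matrix.one_apply_ne (i := i) (j := l)
        (fun h => hi (h ▸ Finset.mem_insert_of_mem hl)), mul_zero]
    · exact add_zero _
  have hout₃ : ∀ i j, i ∉ insert k S ∨ j ∉ insert k S → g₃ i j = (1 : Matrix ι ι ℤ) i j := by
    intro i j hij
    rw [h₃, hout₂ i j hij]
    split_ifs with hj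
    · have hi := hij.resolve_right (fun h => h (Finset.mem_insert_of_mem hj))
      rw [hout₂ i k (Or.inl hi), Matrix.one_apply_ne (i := i) (j := k)
        (fun h => hi (h ▸ Finset.mem_insert_self k S)), mul_zero, add_zero]
    · exact add_zero _
  have hrow : ∀ j, g₃ k j = (1 : Matrix ι ι ℤ) k j := by
    intro j
    by_cases hj : j ∈ S
    · rw [h₃, if_pos hj, hkk, Matrix.one_apply_ne (hne j hj).symm]; ring
    · by_cases hjk : j = k
      · rw [h₃, if_neg hj, hjk, hkk, Matrix.one_apply_eq, add_zero]
      · exact hout₃ k j (Or.inr (by simp [hj, hjk]))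
  have hmem : u₄ * g₃ ∈ N := by
    refine hS _ ⟨fun i j hij => ?_, fun i j => ?_⟩
    · rw [h₄, hrow]
      by_cases hi : i ∈ S
      · have hj := hij.resolve_left (not_not_intro hi)
        rw [if_pos hi]
        by_cases hjk : j = k
        · rw [hjk, Matrix.one_apply_eq, Matrix.one_apply_ne (hne i hi)]; ring
        · rw [hout₃ i j (Or.inr (by simp [hj, hjk])), Matrix.one_apply_ne (Ne.symm hjk)]; ring
      · rw [if_neg hi, add_zero]
        by_cases hik : i = k
        · rw [hik, hrow]
        · exact hout₃ i j (Or.inl (by simp [hi, hik]))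
    · rw [h₄, add_sub_right_comm]
      refine dvd_add (hd₃ i j) ?_
      split_ifs with hi
      · exact (hMk' i hi).neg_right.mul_right _
      · exact dvd_zero _
  have h3 : g₃ ∈ N := (Subgroup.mul_mem_cancel_left N hu₄).mp hmem
  have h2 : g₂ ∈ N := (Subgroup.mul_mem_cancel_right N hu₃).mp h3
  have h1 : g₁ ∈ N := (Subgroup.mul_mem_cancel_right N hu₂).mp h2
  exact (Subgroup.mul_mem_cancel_right N hu₁).mp h1

variable {κ : Type*} [Fintype κ] [DecidableEq κ]

/-- The embedding of `SL₃(ℤ)` into `SL_ι(ℤ)` as the upper left block, for a decomposition of `ι`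
into three elements and the rest. -/
def blockHom (e : Fin 3 ⊕ κ ≃ ι) : SpecialLinearGroup (Fin 3) ℤ →* SpecialLinearGroup ι ℤ where
  toFun A := ⟨(fromBlocks A.1 0 0 1).submatrix e.symm e.symm, by
    rw [det_submatrix_equiv_self, det_fromBlocks_zero₂₁, A.2, det_one, one_mul]⟩
  map_one' := by
    apply Subtype.ext
    change (fromBlocks 1 0 0 1).submatrix _ _ = 1
    rw [fromBlocks_one, submatrix_one_equiv]
  map_mul' A B := by
    apply Subtype.ext
    change submatrix _ _ _ = submatrix _ _ _ * submatrix _ _ _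
    rw [submatrix_mul_equiv, fromBlocks_multiply]
    simp

lemma blockHom_elem (e : Fin 3 ⊕ κ ≃ ι) (i j : Fin 3) (h : i ≠ j) (t : ℤ) :
    blockHom e (elem i j t h) = SpecialLinearGroup.transvection
      (e.injective.ne (Sum.inl_injective.ne h)) t := by
  ext k l
  obtain ⟨k, rfl⟩ := e.surjective k
  obtain ⟨l, rfl⟩ := e.surjective l
  change fromBlocks (Matrix.transvection i j t) 0 0 1 (e.symm (e k)) (e.symm (e l)) =
    Matrix.transvection (e (Sum.inl i)) (e (Sum.inl j)) t (e k) (e l)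
  rcases k with k | k <;> rcases l with l | l <;>
    simp [Matrix.transvection, Matrix.single_apply, Matrix.one_apply]

/-- The `2 × 2` case, obtained from `SL₃(ℤ)` through `blockHom`. -/
lemma congruenceOn_pair [N.Normal] (hN : ∀ (i j : ι) (h : i ≠ j) (t : ℤ), m ∣ t →
      SpecialLinearGroup.transvection h t ∈ N) (hm : 0 < m) (hm4 : 4 ∣ m)
    (e : Fin 3 ⊕ κ ≃ ι) (g : SpecialLinearGroup ι ℤ)
    (hg : IsCongruenceOn {e (Sum.inl 0), e (Sum.inl 1)} m g) : g ∈ N := by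
  obtain ⟨hg₁, hg₂⟩ := hg
  set a := g (e (Sum.inl 0)) (e (Sum.inl 0))
  set b := g (e (Sum.inl 0)) (e (Sum.inl 1))
  set c := g (e (Sum.inl 1)) (e (Sum.inl 0))
  set d := g (e (Sum.inl 1)) (e (Sum.inl 1))
  have hgB : (g : Matrix ι ι ℤ) =
      (fromBlocks !![a, b, 0; c, d, 0; 0, 0, 1] 0 0 1).submatrix e.symm e.symm := by
    ext k l
    obtain ⟨k, rfl⟩ := e.surjective k
    obtain ⟨l, rfl⟩ := e.surjective l
    have := hg₁ (e k) (e l)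
    rw [submatrix_apply, e.symm_apply_apply, e.symm_apply_apply]
    rcases k with k | k <;> rcases l with l | l
    · fin_cases k <;> fin_cases l <;> first | rfl | (simp at this; exact this)
    · simpa [Matrix.one_apply] using this
    · simpa [Matrix.one_apply] using this
    · simpa [Matrix.one_apply] using this
  have hdet := g.2
  rw [hgB, det_submatrix_equiv_self, det_fromBlocks_zero₂₁, det_one, mul_one] at hdet
  have h : a * d - b * c = 1 := by simpa [det_fin_three] using hdet
  have hg : g = blockHom e (upperBlock a b c d h) := Subtype.ext hgB
  rw [hg, ← Subgroup.mem_comap]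
  refine upperBlock_mem (fun i j hij t ht => ?_) hm hm4 h ?_ ?_ ?_
  · rw [Subgroup.mem_comap, blockHom_elem]
    exact hN _ _ _ _ ht
  · simpa using hg₂ (e (Sum.inl 0)) (e (Sum.inl 0))
  · simpa [Matrix.one_apply] using hg₂ (e (Sum.inl 0)) (e (Sum.inl 1))
  · simpa [Matrix.one_apply] using hg₂ (e (Sum.inl 1)) (e (Sum.inl 0))

/-- The index set is exhausted one element at a time, starting from a pair. -/
theorem exists_congruence_level [N.Normal] (hN : ∀ (i j : ι) (h : i ≠ j) (t : ℤ), m ∣ t →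
      SpecialLinearGroup.transvection h t ∈ N) (hm : 0 < m) (hm4 : 4 ∣ m) (e : Fin 3 ⊕ κ ≃ ι) :
    ∃ M : ℤ, 0 < M ∧ ∀ g, IsCongruenceOn Finset.univ M g → g ∈ N := by
  set p := e (Sum.inl 0)
  set q := e (Sum.inl 1)
  have hpq : p ≠ q := e.injective.ne (by simp)
  have key : ∀ T : Finset ι, ∃ M : ℤ, 2 ≤ M ∧ m ∣ M ∧
      ∀ g, IsCongruenceOn ({p, q} ∪ T) M g → g ∈ N := by
    intro T
    induction T using Finset.induction_on with
    | empty =>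
      refine ⟨m, ?_, dvd_rfl, fun g hg => congruenceOn_pair hN hm hm4 e g (by simpa using hg)⟩
      have := Int.le_of_dvd hm hm4
      omega
    | insert k T hk ih =>
      obtain ⟨M, hM, hmM, h⟩ := ih
      rw [Finset.union_insert]
      by_cases hkT : k ∈ {p, q} ∪ T
      · exact ⟨M, hM, hmM, by rwa [Finset.insert_eq_of_mem hkT]⟩
      · exact ⟨M ^ 2, by nlinarith, hmM.trans (dvd_pow_self M two_ne_zero),
          congruenceOn_insert hN (by simp) (by simp) hpq hkT hM hmM h⟩
  obtain ⟨M, hM, -, h⟩ := key Finset.univ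
  rw [Finset.union_eq_right.mpr (Finset.subset_univ _)] at h
  exact ⟨M, by omega, h⟩

end Reduction

/-! ### The congruence subgroup theorem -/

/-- Congruence Subgroup Theorem (Bass–Milnor–Serre): for `n ≥ 3`, every finite-index
subgroup of `SL_n(ℤ)` contains a principal congruence subgroup, i.e. the kernel of
reduction modulo `m` for some positive integer `m`. -/
theorem congruence_subgroup_theorem
    (n : ℕ) (hn : 3 ≤ n)
    (H : Subgroup (Matrix.SpecialLinearGroup (Fin n) ℤ))
    (hH : H.FiniteIndex) :
    ∃ m : ℕ, 0 < m ∧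
      (Matrix.SpecialLinearGroup.map (Int.castRingHom (ZMod m))).ker ≤ H := by
  obtain ⟨k, rfl⟩ := Nat.exists_eq_add_of_le hn
  set N := H.normalCore
  have hidx : N.index ≠ 0 := Subgroup.FiniteIndex.index_ne_zero
  have hN : ∀ (i j : Fin (3 + k)) (h : i ≠ j) (t : ℤ), ((4 * N.index : ℕ) : ℤ) ∣ t →
      SpecialLinearGroup.transvection h t ∈ N := by
    rintro i j h _ ⟨s, rfl⟩
    have hpow : ∀ r : ℕ, SpecialLinearGroup.transvection h (4 * s) ^ r =
        SpecialLinearGroup.transvection h ((r : ℤ) * (4 * s)) := by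
      intro r
      induction r with
      | zero =>
        apply Subtype.ext
        change 1 = Matrix.transvection i j (_ : ℤ)
        rw [Nat.cast_zero, zero_mul, Matrix.transvection_zero]
      | succ r ih =>
        rw [pow_succ, ih]
        apply Subtype.ext
        change Matrix.transvection i j _ * Matrix.transvection i j _ = Matrix.transvection i j _
        rw [Matrix.transvection_mul_transvection_same _ _ h]
        congr 1
        push_cast
        ring
    have := Subgroup.pow_index_mem N (SpecialLinearGroup.transvection h (4 * s))
    rw [hpow] at this
    convert this using 2
    push_cast
    ring
  obtain ⟨M, hM, h⟩ := exists_congruence_level hN (by positivity)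
    (by push_cast; exact dvd_mul_right _ _) (finSumFinEquiv : Fin 3 ⊕ Fin k ≃ Fin (3 + k))
  lift M to ℕ using hM.le
  refine ⟨M, by exact_mod_cast hM, fun g hg => H.normalCore_le (h g ⟨by simp, fun i j => ?_⟩)⟩
  have hij : ((g i j : ℤ) : ZMod M) = (1 : Matrix (Fin (3 + k)) (Fin (3 + k)) (ZMod M)) i j :=
    congrArg (fun A : SpecialLinearGroup (Fin (3 + k)) (ZMod M) => A i j) (MonoidHom.mem_ker.mp hg)
  rw [← ZMod.intCast_eq_intCast_iff_dvd_sub, hij, Matrix.one_apply, Matrix.one_apply]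
  split_ifs <;> simp
end

section
/- The Congruence Subgroup Property fails for SL₂(ℤ): there exists a finite-index subgroup H of SL₂(ℤ) such that for every positive integer m, H does not contain the principal congruence subgroup of level m, i.e., H does not contain the kernel of the reduction homomorphism SL₂(ℤ) → SL₂(ℤ/mℤ). -/
/-!
The proof goes through the free group of rank two inside `SL₂(ℤ)`.

Let `a = (1 2; 0 1)` and `b = (1 0; 2 1)`. The ping-pong lemma shows that `a` and `b` generate a free
group `K` (`sanov_injective`), and a Euclidean descent on the first column shows that `K` contains
the principal congruence subgroup of level `4` (`gamma_four_le_range`), so `K` has finite index.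
Since `K` is free, there is a homomorphism `ψ : K → ℤ/5` with `ψ(a) = 1` and `ψ(b) = 0`; let `H` be its
kernel.

Suppose `H` contains the principal congruence subgroup of level `m = 5ᵉ r`, where `5 ∤ r`.
With `4k ≡ 1` modulo `5ᵉ`, the element `h = b⁻²ᵏ aᵏ b` has first column `(2, 0)` modulo `5ᵉ`, so that
`h a^{r} h⁻¹` and `a^{4r}` agree modulo `5ᵉ`; modulo `r` both are trivial. Hence
`h a^{r} h⁻¹ a^{-4r}` is congruent to the identity modulo `m`, whereas `ψ` maps it to
`-3r ≠ 0` in `ℤ/5`.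
-/

open Matrix CongruenceSubgroup
open scoped MatrixGroups Pointwise

/-- The upper unitriangular matrix `(1 x; 0 1)`. -/
def upperUni (x : ℤ) : SL(2, ℤ) := ⟨!![1, x; 0, 1], by simp⟩

/-- The lower unitriangular matrix `(1 0; x 1)`. -/
def lowerUni (x : ℤ) : SL(2, ℤ) := ⟨!![1, 0; x, 1], by simp⟩

lemma coe_upperUni (x : ℤ) : (upperUni x : Matrix (Fin 2) (Fin 2) ℤ) = !![1, x; 0, 1] := rfl

lemma coe_lowerUni (x : ℤ) : (lowerUni x : Matrix (Fin 2) (Fin 2) ℤ) = !![1, 0; x, 1] := rfl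

lemma upperUni_add (x y : ℤ) : upperUni (x + y) = upperUni x * upperUni y := by
  ext i j
  fin_cases i <;> fin_cases j <;> simp [coe_upperUni, Matrix.mul_apply, Fin.sum_univ_two, add_comm]

lemma lowerUni_add (x y : ℤ) : lowerUni (x + y) = lowerUni x * lowerUni y := by
  ext i j
  fin_cases i <;> fin_cases j <;> simp [coe_lowerUni, Matrix.mul_apply, Fin.sum_univ_two]

lemma upperUni_zero : upperUni 0 = 1 := by
  ext i j
  fin_cases i <;> fin_cases j <;> simp [coe_upperUni]

lemma lowerUni_zero : lowerUni 0 = 1 := by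
  ext i j
  fin_cases i <;> fin_cases j <;> simp [coe_lowerUni]

lemma upperUni_neg (x : ℤ) : upperUni (-x) = (upperUni x)⁻¹ := by
  rw [eq_inv_iff_mul_eq_one, ← upperUni_add, neg_add_cancel, upperUni_zero]

lemma lowerUni_neg (x : ℤ) : lowerUni (-x) = (lowerUni x)⁻¹ := by
  rw [eq_inv_iff_mul_eq_one, ← lowerUni_add, neg_add_cancel, lowerUni_zero]

lemma upperUni_zpow (x n : ℤ) : upperUni x ^ n = upperUni (n * x) := by
  induction n with
  | zero => simp [upperUni_zero]
  | succ n ih => rw [_root_.zpow_add_one, ih, ← upperUni_add]; congr 1; ring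
  | pred n ih => rw [_root_.zpow_sub_one, ih, ← upperUni_neg, ← upperUni_add]; congr 1; ring

lemma lowerUni_zpow (x n : ℤ) : lowerUni x ^ n = lowerUni (n * x) := by
  induction n with
  | zero => simp [lowerUni_zero]
  | succ n ih => rw [_root_.zpow_add_one, ih, ← lowerUni_add]; congr 1; ring
  | pred n ih => rw [_root_.zpow_sub_one, ih, ← lowerUni_neg, ← lowerUni_add]; congr 1; ring

lemma upperUni_mul_entries (x : ℤ) (g : SL(2, ℤ)) :
    (upperUni x * g) 0 0 = g 0 0 + x * g 1 0 ∧ (upperUni x * g) 0 1 = g 0 1 + x * g 1 1 ∧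
    (upperUni x * g) 1 0 = g 1 0 ∧ (upperUni x * g) 1 1 = g 1 1 := by
  simp [coe_upperUni, Matrix.mul_apply, Fin.sum_univ_two]

lemma lowerUni_mul_entries (x : ℤ) (g : SL(2, ℤ)) :
    (lowerUni x * g) 0 0 = g 0 0 ∧ (lowerUni x * g) 0 1 = g 0 1 ∧
    (lowerUni x * g) 1 0 = x * g 0 0 + g 1 0 ∧ (lowerUni x * g) 1 1 = x * g 0 1 + g 1 1 := by
  simp [coe_lowerUni, Matrix.mul_apply, Fin.sum_univ_two]

/-- The two generators `(1 2; 0 1)` (at `true`) and `(1 0; 2 1)` (at `false`). -/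
def sanovGen (i : Bool) : SL(2, ℤ) := if i then upperUni 2 else lowerUni 2

/-- The homomorphism from the free group on two letters given by `sanovGen`. -/
def sanov : FreeGroup Bool →* SL(2, ℤ) := FreeGroup.lift sanovGen

lemma sanov_true_zpow (n : ℤ) : sanov (FreeGroup.of true ^ n) = upperUni (n * 2) := by
  simp [sanov, sanovGen, upperUni_zpow]

lemma sanov_false_zpow (n : ℤ) : sanov (FreeGroup.of false ^ n) = lowerUni (n * 2) := by
  simp [sanov, sanovGen, lowerUni_zpow]

/-- Attracting sets for the generators. If `z = x / y` denotes the ratio of the entries of the first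
column `(x, y)`, these are `z ≥ 1` or `z = ∞` (at `true`) and `0 ≤ z < 1` (at `false`). -/
def attract (i : Bool) : Set SL(2, ℤ) :=
  if i then {g | g 1 0 ^ 2 ≤ g 0 0 * g 1 0}
  else {g | 0 ≤ g 0 0 * g 1 0 ∧ g 0 0 * g 1 0 < g 1 0 ^ 2}

/-- Attracting sets for the inverses of the generators: in terms of the ratio `z` of the entries of
the first column, `z < -1` (at `true`) and `-1 ≤ z < 0` (at `false`). -/
def repel (i : Bool) : Set SL(2, ℤ) :=
  if i then {g | g 0 0 * g 1 0 < - g 1 0 ^ 2}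
  else {g | - g 1 0 ^ 2 ≤ g 0 0 * g 1 0 ∧ g 0 0 * g 1 0 < 0}

lemma first_column_ne_zero (g : SL(2, ℤ)) : g 0 0 ≠ 0 ∨ g 1 0 ≠ 0 := by
  have h := g.det_coe
  rw [Matrix.det_fin_two] at h
  by_contra! hc
  rw [hc.1, hc.2] at h
  simp at h

/-- Ping-pong on the half-open arcs `attract`, `repel`, which partition the projective line; the
action is left multiplication of `SL₂(ℤ)` on itself, seen through the first column. -/
lemma sanov_injective : Function.Injective sanov := by
  refine FreeGroup.injective_lift_of_ping_pong sanovGen attract repel ?_ ?_ ?_ ?_ ?_ ?_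
  · rintro (_ | _)
    · exact ⟨lowerUni 2, by simp [attract, coe_lowerUni]⟩
    · exact ⟨1, by simp [attract]⟩
  · rintro (_ | _) (_ | _) h
    all_goals first | exact absurd rfl h | skip
    all_goals
      rw [Function.onFun, Set.disjoint_left]
      intro g h1 h2
      simp [attract] at h1 h2
      lia
  · rintro (_ | _) (_ | _) h
    all_goals first | exact absurd rfl h | skip
    all_goals
      rw [Function.onFun, Set.disjoint_left]
      intro g h1 h2
      simp [repel] at h1 h2
      lia
  · rintro (_ | _) (_ | _)
    all_goals
      rw [Set.disjoint_left]
      intro g h1 h2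
      have := sq_nonneg (g 1 0)
      simp [attract, repel] at h1 h2
      lia
  · rintro (_ | _) _ ⟨g, hg, rfl⟩
    · obtain ⟨h1, -, h2, -⟩ := lowerUni_mul_entries 2 g
      have h0 := first_column_ne_zero g
      simp only [repel, attract, sanovGen, Bool.false_eq_true, if_false, Set.mem_compl_iff,
        Set.mem_ofPred_eq, smul_eq_mul] at hg ⊢
      rw [h1, h2]
      generalize g 0 0 = x at *
      generalize g 1 0 = y at *
      have hpos : 0 < x ^ 2 + y ^ 2 := by
        rcases h0 with h | h <;> positivity
      rcases lt_or_ge (x * y) 0 with hxy | hxy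
      · have : x * y < -y ^ 2 := by lia
        constructor <;> nlinarith [sq_nonneg (x + y), sq_nonneg x]
      · constructor <;> nlinarith [sq_nonneg x]
    · obtain ⟨h1, -, h2, -⟩ := upperUni_mul_entries 2 g
      simp only [repel, attract, sanovGen, if_true, Set.mem_compl_iff,
        Set.mem_ofPred_eq, smul_eq_mul] at hg ⊢
      rw [h1, h2]
      linarith
  · rintro (_ | _) _ ⟨g, hg, rfl⟩
    · obtain ⟨h1, -, h2, -⟩ := lowerUni_mul_entries (-2) g
      have h0 := first_column_ne_zero g
      simp only [repel, attract, sanovGen, Bool.false_eq_true, if_false, Set.mem_compl_iff,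
        Set.mem_ofPred_eq, smul_eq_mul, Pi.inv_apply, ← lowerUni_neg] at hg ⊢
      rw [h1, h2]
      generalize g 0 0 = x at *
      generalize g 1 0 = y at *
      rcases lt_or_ge (x * y) 0 with hxy | hxy
      · constructor <;> nlinarith [sq_nonneg x, sq_nonneg y]
      · have hle : y ^ 2 ≤ x * y := by lia
        have hx : x ≠ 0 := by
          rintro rfl
          have : y ≠ 0 := by simpa using h0
          have : 0 < y ^ 2 := by positivity
          lia
        have hx2 : 0 < x ^ 2 := by positivity
        constructor <;> nlinarith [sq_nonneg (x - y)]
    · obtain ⟨h1, -, h2, -⟩ := upperUni_mul_entries (-2) g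
      simp only [repel, attract, sanovGen, if_true, Set.mem_compl_iff,
        Set.mem_ofPred_eq, smul_eq_mul, Pi.inv_apply, ← upperUni_neg] at hg ⊢
      rw [h1, h2]
      linarith

lemma upperUni_mem_range {x : ℤ} (hx : Even x) : upperUni x ∈ sanov.range := by
  obtain ⟨n, rfl⟩ := hx
  exact ⟨FreeGroup.of true ^ n, by rw [sanov_true_zpow, mul_two]⟩

lemma lowerUni_mem_range {x : ℤ} (hx : Even x) : lowerUni x ∈ sanov.range := by
  obtain ⟨n, rfl⟩ := hx
  exact ⟨FreeGroup.of false ^ n, by rw [sanov_false_zpow, mul_two]⟩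

/-- Euclidean descent: the larger entry of the first column, in absolute value, is decreased by
adding or subtracting twice the other one. The entries have different parity, so they are never
equal in absolute value, and the congruence conditions are preserved. -/
lemma mem_range_of_congr (n : ℕ) : ∀ g : SL(2, ℤ), (g 0 0).natAbs + (g 1 0).natAbs ≤ n →
    g 0 0 % 4 = 1 → Even (g 0 1) → Even (g 1 0) → g ∈ sanov.range := by
  induction n with
  | zero => intro g h h1; lia
  | succ n ih =>
    intro g hn ha hb hc
    have up (s : ℤ) (hs : Even s)
        (h : (g 0 0 + s * g 1 0).natAbs + (g 1 0).natAbs ≤ n) : g ∈ sanov.range := by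
      obtain ⟨e00, e01, e10, -⟩ := upperUni_mul_entries s g
      rw [← Subgroup.mul_mem_cancel_left _ (upperUni_mem_range hs)]
      apply ih
      · rwa [e00, e10]
      · obtain ⟨u, hu⟩ := hs
        obtain ⟨v, hv⟩ := hc
        have : s * g 1 0 = 4 * (u * v) := by rw [hu, hv]; ring
        lia
      · rw [e01]; exact hb.add (hs.mul_right _)
      · rwa [e10]
    have low (s : ℤ) (hs : Even s)
        (h : (g 0 0).natAbs + (s * g 0 0 + g 1 0).natAbs ≤ n) : g ∈ sanov.range := by
      obtain ⟨e00, e01, e10, -⟩ := lowerUni_mul_entries s g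
      rw [← Subgroup.mul_mem_cancel_left _ (lowerUni_mem_range hs)]
      apply ih
      · rwa [e00, e10]
      · rwa [e00]
      · rwa [e01]
      · rw [e10]; exact (hs.mul_right _).add hc
    by_cases h0 : g 1 0 = 0
    · have hdet := g.det_coe
      rw [Matrix.det_fin_two, h0, mul_zero, sub_zero] at hdet
      have h00 : g 0 0 = 1 := by
        rcases Int.eq_one_or_neg_one_of_mul_eq_one hdet with h | h <;> lia
      have h11 : g 1 1 = 1 := by rw [h00] at hdet; lia
      have : g = upperUni (g 0 1) := by
        ext i j
        fin_cases i <;> fin_cases j <;> simp [coe_upperUni, h0, h00, h11]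
      rw [this]
      exact upperUni_mem_range hb
    · have hpar : (g 0 0).natAbs ≠ (g 1 0).natAbs := by
        obtain ⟨v, hv⟩ := hc
        lia
      have h2 : Even (2 : ℤ) := even_two
      have h2' : Even (-2 : ℤ) := even_two.neg
      have := up 2 h2
      have := up (-2) h2'
      have := low 2 h2
      have := low (-2) h2'
      lia

lemma gamma_four_le_range : Gamma 4 ≤ sanov.range := by
  intro g hg
  obtain ⟨h00, h01, h10, -⟩ := Gamma_mem.mp hg
  rw [ZMod.intCast_zmod_eq_zero_iff_dvd] at h01 h10
  have h00' : ((g 0 0 : ℤ) : ZMod 4) = ((1 : ℤ) : ZMod 4) := by simpa using h00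
  rw [ZMod.intCast_eq_intCast_iff_dvd_sub] at h00'
  refine mem_range_of_congr _ g le_rfl ?_ ?_ ?_
  · lia
  · rw [even_iff_two_dvd]; lia
  · rw [even_iff_two_dvd]; lia

/-- The homomorphism from the free group to `ℤ/5` (written multiplicatively) which counts the
exponents of the generator `true`. -/
def expSum : FreeGroup Bool →* Multiplicative (ZMod 5) :=
  FreeGroup.lift fun i => if i then Multiplicative.ofAdd 1 else 1

/-- The word `h a^r h⁻¹ a^{-4r}` with `h = b⁻²ᵏ aᵏ b`, for `a` and `b` the generators `true` and
`false`. -/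
def word (k r : ℤ) : FreeGroup Bool :=
  FreeGroup.of false ^ (-2 * k) * FreeGroup.of true ^ k * FreeGroup.of false ^ (1 : ℤ) *
    FreeGroup.of true ^ r *
    (FreeGroup.of false ^ (-1 : ℤ) * FreeGroup.of true ^ (-k) * FreeGroup.of false ^ (2 * k)) *
    FreeGroup.of true ^ (-4 * r)

lemma expSum_word (k r : ℤ) : (expSum (word k r)).toAdd = -3 * (r : ZMod 5) := by
  simp [expSum, word]
  ring

/-- The first factor is the conjugate `h a^r h⁻¹`, which depends only on `r` and the first column
`(t, (2-t)(1+t))` of `h`, where `t = 1 + 4k`. -/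
lemma coe_sanov_word (k r t : ℤ) (ht : t = 1 + 4 * k) :
    ((sanov (word k r) : SL(2, ℤ)) : Matrix (Fin 2) (Fin 2) ℤ) =
      !![1 - 2 * r * t * ((2 - t) * (1 + t)), 2 * r * t ^ 2;
        -2 * r * ((2 - t) * (1 + t)) ^ 2, 1 + 2 * r * t * ((2 - t) * (1 + t))] *
      !![1, -8 * r; 0, 1] := by
  subst ht
  simp only [word, map_mul, sanov_true_zpow, sanov_false_zpow,
    Matrix.SpecialLinearGroup.coe_mul]
  simp only [coe_upperUni, coe_lowerUni, Matrix.mul_fin_two]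
  ext i j
  fin_cases i <;> fin_cases j <;> simp <;> ring

lemma sanov_word_mem_gamma (q r : ℕ) (k n : ℤ) (hk : 4 * k = 1 + q * n) :
    sanov (word k r) ∈ Gamma (q * r) := by
  have hM := coe_sanov_word k r (2 + q * n) (by lia)
  rw [Matrix.mul_fin_two] at hM
  -- Each coefficient below is the cofactor of `q r`; the factor `q` comes from `t - 2 = q n`.
  have hz : ((q : ZMod (q * r)) * r) = 0 := by
    rw [← Nat.cast_mul]; exact ZMod.natCast_self _
  rw [Gamma_mem, hM]
  refine ⟨?_, ?_, ?_, ?_⟩ <;>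
    simp only [Matrix.of_apply, Matrix.cons_val', Matrix.cons_val_zero, Matrix.cons_val_one,
      Matrix.cons_val_fin_one] <;>
    push_cast
  · linear_combination (2 * (2 + q * n) * n * (3 + q * n) : ZMod (q * r)) * hz
  · linear_combination
      (2 * n * (4 + q * n) - 16 * r * (2 + q * n) * n * (3 + q * n) : ZMod (q * r)) * hz
  · linear_combination (-2 * q * n ^ 2 * (3 + q * n) ^ 2 : ZMod (q * r)) * hz
  · linear_combination (16 * r * q * n ^ 2 * (3 + q * n) ^ 2 -
      2 * (2 + q * n) * n * (3 + q * n) : ZMod (q * r)) * hz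

/-- Failure of the Congruence Subgroup Property for `SL₂(ℤ)`: there is a finite-index
subgroup of `SL₂(ℤ)` containing no principal congruence subgroup. -/
theorem sl2_csp_fails :
    ∃ H : Subgroup (Matrix.SpecialLinearGroup (Fin 2) ℤ),
      H.FiniteIndex ∧
      ∀ m : ℕ, 0 < m →
        ¬ (Matrix.SpecialLinearGroup.map (Int.castRingHom (ZMod m))).ker ≤ H := by
  refine ⟨expSum.ker.map sanov, ?_, ?_⟩
  · have : NeZero 4 := ⟨by norm_num⟩
    have h1 : sanov.range.FiniteIndex := Subgroup.finiteIndex_of_le gamma_four_le_range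
    have h2 : expSum.ker.FiniteIndex := Subgroup.finiteIndex_ker expSum
    refine ⟨?_⟩
    rw [Subgroup.index_map_of_injective _ sanov_injective]
    exact mul_ne_zero h2.index_ne_zero h1.index_ne_zero
  · intro m hm hle
    obtain ⟨e, r, hr, rfl⟩ := Nat.exists_eq_pow_mul_and_not_dvd hm.ne' 5 (by norm_num)
    have hcop : IsCoprime (4 : ℤ) ((5 ^ e : ℕ) : ℤ) := by
      push_cast
      exact IsCoprime.pow_right ⟨-1, 1, by norm_num⟩
    obtain ⟨k, n, hkn⟩ := hcop
    have hmem : sanov (word k r) ∈ expSum.ker.map sanov :=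
      hle (sanov_word_mem_gamma (5 ^ e) r k (-n) (by lia))
    obtain ⟨w, hw, hww⟩ := hmem
    have hker : word k r ∈ expSum.ker := sanov_injective hww ▸ hw
    have h0 := expSum_word k r
    rw [MonoidHom.mem_ker.mp hker, toAdd_one, Int.cast_natCast] at h0
    have h3 : ((3 * r : ℕ) : ZMod 5) = 0 := by push_cast; linear_combination h0
    rw [ZMod.natCast_eq_zero_iff] at h3
    lia
end
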